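/- arXiv:1511.02558 — 2 statements merged into one kernel-verified Lean document; each statement's English description precedes it below -/
import Mathlib

section
/- For every integer n ≥ 40, |p(n)/T̃(n) - 1| < e^{-μ(n)/3}. -/
open Real

/-- The partition function, as a real number. -/
noncomputable def p (n : ℕ) : ℝ := (Fintype.card (Nat.Partition n) : ℝ)

/-- `μ(x) = (π/6)·√(24x - 1)`. -/
noncomputable def mu (x : ℝ) : ℝ := π / 6 * Real.sqrt (24 * x - 1)

/-- `d = π²/(6√3)`. -/
noncomputable def d : ℝ := π ^ 2 / (6 * Real.sqrt 3)

/-- The main term `T̃(x) = (d/μ(x)²)·(1 - 1/μ(x))·e^{μ(x)}`. -/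
noncomputable def T (x : ℝ) : ℝ := d / mu x ^ 2 * (1 - 1 / mu x) * Real.exp (mu x)


section PartitionSeries

/-- The geometric series `1 + X ^ k + X ^ (2 * k) + ⋯`. -/
noncomputable def geomPow (k : ℕ) : PowerSeries ℕ := PowerSeries.mk fun n => if k ∣ n then 1 else 0

/-- The generating function of the partitions into parts of size at most `N`. -/
noncomputable def boundedSeries (N : ℕ) : PowerSeries ℕ := ∏ i ∈ Finset.range N, geomPow (i + 1)

open PowerSeries.WithPiTopology in
theorem tsum_X_pow_eq_geomPow (k : ℕ) (hk : 0 < k) :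
    ∑' j : ℕ, (PowerSeries.X : PowerSeries ℕ) ^ (k * j) = geomPow k := by
  refine HasSum.tsum_eq ?_
  rw [PowerSeries.WithPiTopology.hasSum_iff_hasSum_coeff]
  intro n
  simp only [geomPow, PowerSeries.coeff_mk, PowerSeries.coeff_X_pow]
  split_ifs with h
  · obtain ⟨j, rfl⟩ := h
    convert! hasSum_ite_eq j (1 : ℕ) using 2 with i
    simp [hk.ne', eq_comm]
  · convert! hasSum_zero using 2 with i
    rw [if_neg]
    rintro rfl
    exact h (Dvd.intro i rfl)

open PowerSeries.WithPiTopology in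
theorem eventually_coeff_boundedSeries (n : ℕ) :
    ∀ᶠ N in Filter.atTop,
      PowerSeries.coeff n (boundedSeries N) = Fintype.card (Nat.Partition n) := by
  have h := Nat.Partition.hasProd_powerSeriesMk_card_restricted ℕ (fun _ => True)
  have h' := (PowerSeries.WithPiTopology.tendsto_iff_coeff_tendsto _ _ _ _).1 h.tendsto_prod_nat n
  rw [nhds_discrete, Filter.tendsto_pure] at h'
  filter_upwards [h'] with N hN
  simp only [if_true, PowerSeries.coeff_mk] at hN
  rw [boundedSeries, Finset.prod_congr rfl
    (fun i _ => (tsum_X_pow_eq_geomPow (i + 1) (Nat.succ_pos i)).symm), hN]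
  simp [Nat.Partition.restricted]

theorem monotone_coeff_boundedSeries (n : ℕ) :
    Monotone fun N => PowerSeries.coeff n (boundedSeries N) := by
  refine monotone_nat_of_le_succ fun N => ?_
  rw [boundedSeries, boundedSeries, Finset.prod_range_succ, PowerSeries.coeff_mul]
  refine le_trans ?_ (Finset.single_le_sum (fun _ _ => Nat.zero_le _)
    (show (n, 0) ∈ Finset.HasAntidiagonal.antidiagonal n by simp))
  simp [geomPow]

theorem coeff_boundedSeries_le (N n : ℕ) :
    PowerSeries.coeff n (boundedSeries N) ≤ Fintype.card (Nat.Partition n) := by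
  obtain ⟨M, hM, hNM⟩ :=
    ((eventually_coeff_boundedSeries n).and (Filter.eventually_ge_atTop N)).exists
  exact hM ▸ monotone_coeff_boundedSeries n hNM

theorem hasSum_geomPow {q : ℂ} (hq : ‖q‖ < 1) (k : ℕ) (hk : 0 < k) :
    HasSum (fun n => ((PowerSeries.coeff n (geomPow k) : ℕ) : ℂ) * q ^ n) (1 - q ^ k)⁻¹ := by
  have hk' : ‖q ^ k‖ < 1 := by
    rw [norm_pow]; exact pow_lt_one₀ (norm_nonneg _) hq hk.ne'
  have h := hasSum_geometric_of_norm_lt_one hk'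
  have hinj : Function.Injective fun j : ℕ => k * j := fun a b h => Nat.eq_of_mul_eq_mul_left hk h
  rw [← hinj.hasSum_iff]
  · convert! h using 2 with j
    simp [geomPow, pow_mul]
  · intro n hn
    simp only [geomPow, PowerSeries.coeff_mk]
    rw [if_neg]
    · simp
    · rintro ⟨j, rfl⟩
      exact hn ⟨j, rfl⟩

theorem hasSum_boundedSeries {q : ℂ} (hq : ‖q‖ < 1) (N : ℕ) :
    HasSum (fun n => ((PowerSeries.coeff n (boundedSeries N) : ℕ) : ℂ) * q ^ n)
      (∏ i ∈ Finset.range N, (1 - q ^ (i + 1)))⁻¹ := by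
  induction N with
  | zero =>
    convert! hasSum_ite_eq 0 (1 : ℂ) using 2 with n
    · by_cases h : n = 0 <;> simp [boundedSeries, PowerSeries.coeff_one, h]
    · simp
  | succ N ih =>
    have h1 := ih.summable.norm
    have hg := hasSum_geomPow hq (N + 1) N.succ_pos
    have h2 := hg.summable.norm
    have hs := (summable_norm_sum_mul_antidiagonal_of_summable_norm h1 h2).of_norm
    have ht := tsum_mul_tsum_eq_tsum_sum_antidiagonal_of_summable_norm h1 h2
    rw [ih.tsum_eq, hg.tsum_eq, ← mul_inv, ← Finset.prod_range_succ] at ht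
    rw [ht]
    convert! hs.hasSum using 2 with n
    rw [boundedSeries, Finset.prod_range_succ, PowerSeries.coeff_mul, ← boundedSeries]
    push_cast
    rw [Finset.sum_mul]
    refine Finset.sum_congr rfl fun ij hij => ?_
    rw [← Finset.HasAntidiagonal.mem_antidiagonal.1 hij, pow_add]
    ring

theorem inv_one_sub_le_exp {ρ x : ℝ} (hρ : ρ < 1) (hxρ : x ≤ ρ) (hx : 0 ≤ x) :
    (1 - x)⁻¹ ≤ Real.exp (x / (1 - ρ)) := by
  have h1 : 0 < 1 - ρ := by linarith
  have h2 : 0 < 1 - x := by linarith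
  calc (1 - x)⁻¹ = x / (1 - x) + 1 := by field_simp; ring
    _ ≤ x / (1 - ρ) + 1 := by gcongr
    _ ≤ _ := Real.add_one_le_exp _

theorem prod_inv_one_sub_pow_le {ρ : ℝ} (h0 : 0 ≤ ρ) (h1 : ρ < 1) (N : ℕ) :
    (∏ i ∈ Finset.range N, (1 - ρ ^ (i + 1)))⁻¹ ≤ Real.exp (ρ / (1 - ρ) ^ 2) := by
  have h2 : 0 < 1 - ρ := by linarith
  rw [← Finset.prod_inv_distrib]
  calc ∏ i ∈ Finset.range N, (1 - ρ ^ (i + 1))⁻¹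
      ≤ ∏ i ∈ Finset.range N, Real.exp (ρ ^ (i + 1) / (1 - ρ)) := by
        refine Finset.prod_le_prod (fun i _ => ?_) fun i _ => ?_
        · have : ρ ^ (i + 1) ≤ 1 := pow_le_one₀ h0 h1.le
          exact inv_nonneg.2 (by linarith)
        · exact inv_one_sub_le_exp h1 (pow_le_of_le_one h0 h1.le (Nat.succ_ne_zero i))
            (pow_nonneg h0 _)
    _ = Real.exp ((∑ i ∈ Finset.range N, ρ ^ i) * ρ / (1 - ρ)) := by
        rw [← Real.exp_sum, Finset.sum_mul, Finset.sum_div]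
        simp only [pow_succ]
    _ ≤ Real.exp ((1 - ρ)⁻¹ * ρ / (1 - ρ)) := by
        gcongr
        rw [← tsum_geometric_of_lt_one h0 h1]
        exact (summable_geometric_of_lt_one h0 h1).sum_le_tsum _ fun i _ => pow_nonneg h0 i
    _ = _ := by congr 1; field_simp

theorem sum_card_partition_le {ρ : ℝ} (h0 : 0 ≤ ρ) (h1 : ρ < 1) (M : ℕ) :
    ∑ n ∈ Finset.range M, p n * ρ ^ n ≤ Real.exp (ρ / (1 - ρ) ^ 2) := by
  have hev : ∀ᶠ N in Filter.atTop, ∀ n ∈ Finset.range M,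
      PowerSeries.coeff n (boundedSeries N) = Fintype.card (Nat.Partition n) :=
    (Filter.eventually_all_finset _).2 fun n _ => eventually_coeff_boundedSeries n
  obtain ⟨N, hN⟩ := hev.exists
  have hs : HasSum (fun n => ((PowerSeries.coeff n (boundedSeries N) : ℕ) : ℝ) * ρ ^ n)
      (∏ i ∈ Finset.range N, (1 - ρ ^ (i + 1)))⁻¹ := by
    have := hasSum_boundedSeries (q := (ρ : ℂ)) (by simpa [abs_of_nonneg h0] using h1) N
    exact_mod_cast this
  calc ∑ n ∈ Finset.range M, p n * ρ ^ n
      = ∑ n ∈ Finset.range M, ((PowerSeries.coeff n (boundedSeries N) : ℕ) : ℝ) * ρ ^ n :=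
        Finset.sum_congr rfl fun n hn => by rw [hN n hn, p]
    _ ≤ (∏ i ∈ Finset.range N, (1 - ρ ^ (i + 1)))⁻¹ :=
        sum_le_hasSum _ (fun n _ => by positivity) hs
    _ ≤ _ := prod_inv_one_sub_pow_le h0 h1 N

theorem p_nonneg (n : ℕ) : 0 ≤ p n := Nat.cast_nonneg _

theorem p_zero : p 0 = 1 := by simp [p]

theorem summable_p_mul_pow {ρ : ℝ} (h0 : 0 ≤ ρ) (h1 : ρ < 1) : Summable fun n => p n * ρ ^ n :=
  summable_of_sum_range_le (fun n => mul_nonneg (p_nonneg n) (pow_nonneg h0 n))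
    (sum_card_partition_le h0 h1)

theorem tsum_p_mul_pow_le {ρ : ℝ} (h0 : 0 ≤ ρ) (h1 : ρ < 1) :
    ∑' n, p n * ρ ^ n ≤ Real.exp (ρ / (1 - ρ) ^ 2) :=
  Real.tsum_le_of_sum_range_le (fun n => mul_nonneg (p_nonneg n) (pow_nonneg h0 n))
    (sum_card_partition_le h0 h1)

theorem hasSum_p_mul_pow {q : ℂ} (hq : ‖q‖ < 1) :
    HasSum (fun n => (p n : ℂ) * q ^ n) (∏' i : ℕ, (1 - q ^ (i + 1)))⁻¹ := by
  have hsum : Summable fun n => p n * ‖q‖ ^ n := summable_p_mul_pow (norm_nonneg _) hq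
  have hs : Summable fun n => (p n : ℂ) * q ^ n :=
    Summable.of_norm (by simpa [abs_of_nonneg (p_nonneg _)] using hsum)
  have hne : ∏' i : ℕ, (1 - q ^ (i + 1)) ≠ 0 := by
    have := tprod_one_add_ne_zero_of_summable (f := fun n : ℕ => -q ^ (n + 1)) ?_ ?_
    · simpa [sub_eq_add_neg] using this
    · intro i h
      have : ‖q ^ (i + 1)‖ < 1 := by
        rw [norm_pow]; exact pow_lt_one₀ (norm_nonneg _) hq i.succ_ne_zero
      rw [show q ^ (i + 1) = 1 by linear_combination -h] at this
      simp at this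
    · simpa using (summable_nat_add_iff 1).mpr (summable_geometric_of_lt_one (norm_nonneg _) hq)
  have ht1 := (((ModularForm.multipliable_one_sub_pow hq).hasProd.tendsto_prod_nat).inv₀ hne)
  have ht2 : Filter.Tendsto
      (fun N => ∑' n, ((PowerSeries.coeff n (boundedSeries N) : ℕ) : ℂ) * q ^ n) Filter.atTop
      (nhds (∑' n, (p n : ℂ) * q ^ n)) := by
    refine tendsto_tsum_of_dominated_convergence hsum (fun n => ?_) (.of_forall fun N n => ?_)
    · refine tendsto_nhds_of_eventually_eq ?_
      filter_upwards [eventually_coeff_boundedSeries n] with N hN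
      rw [hN, p]; simp
    · rw [norm_mul, norm_pow, Complex.norm_natCast]
      exact mul_le_mul_of_nonneg_right (Nat.cast_le.2 (coeff_boundedSeries_le N n))
        (by positivity)
  simp only [(hasSum_boundedSeries hq _).tsum_eq] at ht2
  rw [← tendsto_nhds_unique ht2 ht1]
  exact hs.hasSum

theorem norm_inv_tprod_one_sub_pow_le {q : ℂ} (hq : ‖q‖ < 1) :
    ‖(∏' i : ℕ, (1 - q ^ (i + 1)))⁻¹‖ ≤ Real.exp (‖q‖ / (1 - ‖q‖) ^ 2) := by
  have hsum : Summable fun n => p n * ‖q‖ ^ n := summable_p_mul_pow (norm_nonneg _) hq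
  rw [← (hasSum_p_mul_pow hq).tsum_eq]
  refine (tsum_of_norm_bounded hsum.hasSum fun n => ?_).trans
    (tsum_p_mul_pow_le (norm_nonneg _) hq)
  simp [abs_of_nonneg (p_nonneg _)]

theorem norm_inv_tprod_one_sub_pow_sub_one_le {q : ℂ} (hq : ‖q‖ < 1) :
    ‖(∏' i : ℕ, (1 - q ^ (i + 1)))⁻¹ - 1‖ ≤ Real.exp (‖q‖ / (1 - ‖q‖) ^ 2) - 1 := by
  have hsum : Summable fun n => p n * ‖q‖ ^ n := summable_p_mul_pow (norm_nonneg _) hq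
  have h1 := tsum_p_mul_pow_le (norm_nonneg q) hq
  rw [hsum.tsum_eq_zero_add] at h1
  rw [← (hasSum_p_mul_pow hq).tsum_eq, (hasSum_p_mul_pow hq).summable.tsum_eq_zero_add]
  simp only [p_zero, pow_zero, Complex.ofReal_one, mul_one, add_sub_cancel_left] at h1 ⊢
  refine (tsum_of_norm_bounded ((summable_nat_add_iff 1).2 hsum).hasSum fun n => ?_).trans
    (by linarith)
  simp [abs_of_nonneg (p_nonneg _)]

end PartitionSeries

section Primitive

/-- The integrand `q ^ (-n) * ∏ (1 - q ^ i)⁻¹`, `q = exp (2 π i τ)`, of Cauchy's formula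
for `p n`. -/
noncomputable def cauchyIntegrand (n : ℕ) (τ : ℂ) : ℂ :=
  Complex.exp (-(2 * π * Complex.I * n * τ)) *
    (∏' i : ℕ, (1 - Complex.exp (2 * π * Complex.I * τ) ^ (i + 1)))⁻¹

/-- A termwise primitive of the Fourier series of `cauchyIntegrand n`. -/
noncomputable def primitiveTerm (n m : ℕ) (τ : ℂ) : ℂ :=
  if m = n then p n * τ
  else p m / (2 * π * Complex.I * ((m : ℂ) - n)) *
    Complex.exp (2 * π * Complex.I * ((m : ℂ) - n) * τ)

/-- A primitive of `cauchyIntegrand n`. -/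
noncomputable def cauchyPrimitive (n : ℕ) (τ : ℂ) : ℂ := ∑' m, primitiveTerm n m τ

theorem norm_exp_two_pi_I_mul (τ : ℂ) :
    ‖Complex.exp (2 * π * Complex.I * τ)‖ = Real.exp (-(2 * π * τ.im)) := by
  rw [Complex.norm_exp]
  simp

theorem norm_exp_two_pi_I_mul_lt_one {τ : ℂ} (h : 0 < τ.im) :
    ‖Complex.exp (2 * π * Complex.I * τ)‖ < 1 := by
  rw [norm_exp_two_pi_I_mul, Real.exp_lt_one_iff]
  have : 0 < 2 * π * τ.im := by positivity
  linarith

theorem norm_exp_two_pi_I_sub_mul_le (n m : ℕ) {τ : ℂ} {a b : ℝ} (ha : a < τ.im) (hb : τ.im < b) :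
    ‖Complex.exp (2 * π * Complex.I * ((m : ℂ) - n) * τ)‖ ≤
      Real.exp (2 * π * n * b) * Real.exp (-(2 * π * a)) ^ m := by
  rw [mul_assoc, norm_exp_two_pi_I_mul, ← Real.exp_nat_mul, ← Real.exp_add, Real.exp_le_exp]
  have h1 : (((m : ℂ) - n) * τ).im = (m - n) * τ.im := by simp
  rw [h1]
  have h2 : 0 ≤ 2 * π * m * (τ.im - a) := by
    have : 0 ≤ τ.im - a := by linarith
    positivity
  have h3 : 0 ≤ 2 * π * n * (b - τ.im) := by
    have : 0 ≤ b - τ.im := by linarith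
    positivity
  nlinarith

theorem hasDerivAt_primitiveTerm (n m : ℕ) (τ : ℂ) :
    HasDerivAt (primitiveTerm n m)
      (p m * Complex.exp (2 * π * Complex.I * ((m : ℂ) - n) * τ)) τ := by
  by_cases h : m = n
  · subst h
    have : primitiveTerm m m = fun τ => (p m : ℂ) * τ := by ext; simp [primitiveTerm]
    rw [this]
    simpa using (hasDerivAt_id τ).const_mul (p m : ℂ)
  · have : primitiveTerm n m = fun τ => p m / (2 * π * Complex.I * ((m : ℂ) - n)) *
        Complex.exp (2 * π * Complex.I * ((m : ℂ) - n) * τ) := by ext; simp [primitiveTerm, h]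
    rw [this]
    have hne : (m : ℂ) - n ≠ 0 := sub_ne_zero.2 (by exact_mod_cast h)
    have hpi : (π : ℂ) ≠ 0 := by exact_mod_cast Real.pi_ne_zero
    have h1 := (((hasDerivAt_id τ).const_mul (2 * π * Complex.I * ((m : ℂ) - n))).cexp).const_mul
      ((p m : ℂ) / (2 * π * Complex.I * ((m : ℂ) - n)))
    simp only [id, mul_one] at h1
    convert! h1 using 1
    field_simp

theorem summable_primitiveTerm (n : ℕ) {τ : ℂ} (hτ : 0 < τ.im) :
    Summable fun m => primitiveTerm n m τ := by
  have hρ : Real.exp (-(2 * π * (τ.im / 2))) < 1 := by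
    rw [Real.exp_lt_one_iff]
    have : 0 < 2 * π * (τ.im / 2) := by positivity
    linarith
  have hs := (summable_p_mul_pow (Real.exp_nonneg _) hρ).mul_left
    (Real.exp (2 * π * n * (τ.im + 1)))
  refine Summable.of_norm_bounded_eventually_nat hs ?_
  filter_upwards [Filter.eventually_gt_atTop n] with m hm
  have hb := norm_exp_two_pi_I_sub_mul_le n m (half_lt_self hτ) (lt_add_one τ.im)
  have hmn : (1 : ℝ) ≤ m - n := by
    have : (n : ℝ) + 1 ≤ m := by exact_mod_cast hm
    linarith
  have hden : 1 ≤ ‖(2 * π * Complex.I * ((m : ℂ) - n))‖ := by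
    have : ((m : ℂ) - n) = (((m : ℝ) - n : ℝ) : ℂ) := by push_cast; rfl
    rw [this]
    simp only [norm_mul, Complex.norm_real, Complex.norm_I, Complex.norm_ofNat, Real.norm_eq_abs,
      abs_of_pos Real.pi_pos, abs_of_pos (by linarith : (0 : ℝ) < m - n)]
    nlinarith [Real.pi_gt_three]
  rw [primitiveTerm, if_neg hm.ne', norm_mul, norm_div, Complex.norm_real,
    Real.norm_of_nonneg (p_nonneg m)]
  calc _ ≤ p m * (Real.exp (2 * π * n * (τ.im + 1)) * Real.exp (-(2 * π * (τ.im / 2))) ^ m) :=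
        mul_le_mul (div_le_self (p_nonneg m) hden) hb (norm_nonneg _) (p_nonneg m)
    _ = _ := by ring

theorem tsum_eq_cauchyIntegrand (n : ℕ) {τ : ℂ} (hτ : 0 < τ.im) :
    ∑' m : ℕ, (p m * Complex.exp (2 * π * Complex.I * ((m : ℂ) - n) * τ)) =
      cauchyIntegrand n τ := by
  have h := hasSum_p_mul_pow (norm_exp_two_pi_I_mul_lt_one hτ)
  rw [cauchyIntegrand, ← h.tsum_eq, ← tsum_mul_left]
  refine tsum_congr fun m => ?_
  rw [← Complex.exp_nat_mul, mul_left_comm, ← Complex.exp_add]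
  congr 2
  ring

theorem hasDerivAt_cauchyPrimitive (n : ℕ) {τ : ℂ} (hτ : 0 < τ.im) :
    HasDerivAt (cauchyPrimitive n) (cauchyIntegrand n τ) τ := by
  have hρ : Real.exp (-(2 * π * (τ.im / 2))) < 1 := by
    rw [Real.exp_lt_one_iff]
    have : 0 < 2 * π * (τ.im / 2) := by positivity
    linarith
  have hs := (summable_p_mul_pow (Real.exp_nonneg _) hρ).mul_left
    (Real.exp (2 * π * n * (τ.im + 1)))
  have hopen : IsOpen {z : ℂ | τ.im / 2 < z.im ∧ z.im < τ.im + 1} :=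
    (isOpen_lt continuous_const Complex.continuous_im).inter
      (isOpen_lt Complex.continuous_im continuous_const)
  have hconv : Convex ℝ {z : ℂ | τ.im / 2 < z.im ∧ z.im < τ.im + 1} :=
    (convex_halfSpace_im_gt _).inter (convex_halfSpace_im_lt _)
  have hmem : τ ∈ {z : ℂ | τ.im / 2 < z.im ∧ z.im < τ.im + 1} :=
    ⟨half_lt_self hτ, lt_add_one τ.im⟩
  have key := hasDerivAt_tsum_of_isPreconnected hs hopen hconv.isPreconnected
    (fun m z _ => hasDerivAt_primitiveTerm n m z) (fun m z hz => ?_) hmem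
    (summable_primitiveTerm n hτ) hmem
  · rw [← tsum_eq_cauchyIntegrand n hτ]
    exact key
  · rw [norm_mul, Complex.norm_real, Real.norm_of_nonneg (p_nonneg m)]
    calc _ ≤ p m * (Real.exp (2 * π * n * (τ.im + 1)) * Real.exp (-(2 * π * (τ.im / 2))) ^ m) :=
          mul_le_mul_of_nonneg_left (norm_exp_two_pi_I_sub_mul_le n m hz.1 hz.2) (p_nonneg m)
      _ = _ := by ring

theorem cauchyPrimitive_add_one_sub (n : ℕ) {τ : ℂ} (hτ : 0 < τ.im) :
    cauchyPrimitive n (τ + 1) - cauchyPrimitive n τ = p n := by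
  rw [cauchyPrimitive, cauchyPrimitive, ← (summable_primitiveTerm n (by simpa using hτ)).tsum_sub
    (summable_primitiveTerm n hτ), tsum_eq_single n]
  · simp [primitiveTerm]; ring
  · intro m hm
    simp only [primitiveTerm, if_neg hm]
    have : Complex.exp (2 * π * Complex.I * ((m : ℂ) - n) * (τ + 1)) =
        Complex.exp (2 * π * Complex.I * ((m : ℂ) - n) * τ) := by
      rw [mul_add, Complex.exp_add, mul_one, show 2 * π * Complex.I * ((m : ℂ) - n) =
        (((m : ℤ) - n : ℤ) : ℂ) * (2 * π * Complex.I) by push_cast; ring,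
        Complex.exp_int_mul_two_pi_mul_I, mul_one]
    rw [this, sub_self]

end Primitive

section ModularBound

open UpperHalfPlane MatrixGroups

theorem norm_discriminant (τ : ℍ) :
    ‖ModularForm.discriminant τ‖ = (Real.exp (-(π * τ.im / 12)) *
      ‖∏' i : ℕ, (1 - Complex.exp (2 * π * Complex.I * τ) ^ (i + 1))‖) ^ 24 := by
  have h : ‖Function.Periodic.qParam 24 (τ : ℂ)‖ = Real.exp (-(π * τ.im / 12)) := by
    rw [Function.Periodic.norm_qParam]
    congr 1
    rw [UpperHalfPlane.coe_im]
    ring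
  rw [ModularForm.discriminant, norm_pow, ModularForm.eta, norm_mul, h]
  simp only [ModularForm.eta_q_eq_pow]

theorem norm_discriminant_mul_im_pow_smul (g : SL(2, ℤ)) (τ : ℍ) :
    ‖ModularForm.discriminant (g • τ)‖ * (g • τ).im ^ 6 =
      ‖ModularForm.discriminant τ‖ * τ.im ^ 6 := by
  have h := petersson_slash_SL 12 ModularForm.discriminant ModularForm.discriminant g τ
  rw [SlashInvariantForm.slash_action_generators_SL2Z ModularForm.discriminant_S_invariant
    ModularForm.discriminant_T_invariant g] at h
  have h' := congrArg norm h
  simp only [petersson, norm_mul, RCLike.norm_conj, norm_zpow, Complex.norm_real, Real.norm_eq_abs,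
    abs_of_pos (UpperHalfPlane.im_pos _)] at h'
  have e1 : ∀ z : ℍ, 0 ≤ ‖ModularForm.discriminant z‖ * z.im ^ 6 := fun z =>
    mul_nonneg (norm_nonneg _) (pow_nonneg z.im_pos.le _)
  rw [← sq_eq_sq₀ (e1 _) (e1 _)]
  have e2 : ∀ z : ℍ, z.im ^ (12 : ℤ) = (z.im ^ 6) ^ 2 := fun z => by
    rw [← pow_mul]; norm_cast
  rw [e2, e2] at h'
  linarith

theorem exp_div_sq_le_of_le {x : ℝ} (h0 : 0 ≤ x) (h : x ≤ 1 / 100) :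
    Real.exp (x / (1 - x) ^ 2) ≤ 1 + 2 * x := by
  have h1 : (99 / 100) ^ 2 ≤ (1 - x) ^ 2 := by gcongr; linarith
  have h2 : x / (1 - x) ^ 2 ≤ 11 / 10 * x := by
    rw [div_le_iff₀ (by positivity)]
    nlinarith
  have h3 : 0 ≤ x / (1 - x) ^ 2 := by positivity
  have h4 := Real.abs_exp_sub_one_sub_id_le (x := x / (1 - x) ^ 2)
    (by rw [abs_of_nonneg h3]; linarith)
  have h5 := le_abs_self (Real.exp (x / (1 - x) ^ 2) - 1 - x / (1 - x) ^ 2)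
  nlinarith

theorem norm_inv_tprod_le_of_im_ge {τ : ℍ} (h : 3 ≤ 4 * τ.im ^ 2) :
    ‖(∏' i : ℕ, (1 - Complex.exp (2 * π * Complex.I * τ) ^ (i + 1)))⁻¹‖ ≤ 51 / 50 := by
  have him : (5 / 6 : ℝ) ≤ τ.im := by nlinarith [τ.im_pos]
  have hq : ‖Complex.exp (2 * π * Complex.I * τ)‖ ≤ 1 / 100 := by
    rw [norm_exp_two_pi_I_mul, UpperHalfPlane.coe_im, Real.exp_neg, one_div]
    gcongr
    have h5 : (5 : ℝ) ≤ 2 * π * τ.im := by nlinarith [Real.pi_gt_three]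
    calc (100 : ℝ) ≤ (2.7182818283 : ℝ) ^ 5 := by norm_num
      _ ≤ Real.exp 1 ^ 5 := by gcongr; exact Real.exp_one_gt_d9.le
      _ = Real.exp 5 := by rw [← Real.exp_nat_mul]; norm_num
      _ ≤ _ := Real.exp_le_exp.2 h5
  refine (norm_inv_tprod_one_sub_pow_le (by linarith)).trans ?_
  refine (exp_div_sq_le_of_le (norm_nonneg _) hq).trans ?_
  linarith

theorem norm_inv_tprod_le_of_normSq_ge {τ : ℍ} {r : ℝ} (hr0 : 0 < r) (hr1 : r ≤ 1)
    (him : τ.im = r / 2)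
    (h : ∀ c d : ℤ, (c ≠ 0 ∨ d ≠ 0) → r ^ 2 ≤ Complex.normSq (c * τ + d)) :
    ‖(∏' i : ℕ, (1 - Complex.exp (2 * π * Complex.I * τ) ^ (i + 1)))⁻¹‖ ≤
      51 / 50 * Real.exp (π / (24 * r) - π * r / 24) := by
  obtain ⟨g, hg⟩ := ModularGroup.exists_smul_mem_fd τ
  have h34 := ModularGroup.three_le_four_mul_im_sq_of_mem_fd hg
  have hQ := norm_inv_tprod_le_of_im_ge h34
  have hY : (g • τ).im ≤ 1 / (2 * r) := by
    rw [ModularGroup.im_smul_eq_div_normSq, ModularGroup.denom_apply, him]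
    have hcd : (g 1 0 ≠ 0 ∨ g 1 1 ≠ 0) := by
      by_contra! hcon
      have := g.det_coe
      rw [Matrix.det_fin_two, hcon.1, hcon.2] at this
      simp at this
    calc r / 2 / Complex.normSq (g 1 0 * τ + g 1 1) ≤ r / 2 / r ^ 2 := by
          have := h _ _ hcd
          gcongr
      _ = _ := by field_simp
  have hyY : τ.im ≤ (g • τ).im := by
    rw [him]
    nlinarith [(g • τ).im_pos]
  have hinv := norm_discriminant_mul_im_pow_smul g τ
  rw [norm_discriminant, norm_discriminant] at hinv
  set Q := ‖∏' i : ℕ, (1 - Complex.exp (2 * π * Complex.I * τ) ^ (i + 1))‖ with hQdef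
  set Q' := ‖∏' i : ℕ, (1 - Complex.exp (2 * π * Complex.I * ↑(g • τ)) ^ (i + 1))‖ with hQ'def
  have hle : Real.exp (-(π * (g • τ).im / 12)) * Q' ≤ Real.exp (-(π * τ.im / 12)) * Q := by
    refine le_of_pow_le_pow_left₀ (n := 24) (by norm_num) (by positivity) ?_
    have h6 : τ.im ^ 6 ≤ (g • τ).im ^ 6 := pow_le_pow_left₀ τ.im_pos.le hyY 6
    have hpos : 0 < τ.im ^ 6 := pow_pos τ.im_pos 6
    refine le_of_mul_le_mul_right ?_ hpos
    rw [← hinv]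
    gcongr
  rw [norm_inv] at hQ ⊢
  have hQpos : 0 < Q := by
    rw [hQdef, norm_pos_iff]
    have := ModularForm.eta_tprod_ne_zero τ.2
    simpa only [ModularForm.eta_q_eq_pow] using this
  have hQ'pos : 0 < Q' := by
    rw [hQ'def, norm_pos_iff]
    have := ModularForm.eta_tprod_ne_zero (g • τ).2
    simpa only [ModularForm.eta_q_eq_pow] using this
  calc Q⁻¹ ≤ Q'⁻¹ * Real.exp (π * (g • τ).im / 12 - π * τ.im / 12) := by
        rw [inv_mul_eq_div, le_div_iff₀ hQ'pos, inv_mul_le_iff₀ hQpos]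
        have e := mul_le_mul_of_nonneg_left hle (Real.exp_nonneg (π * (g • τ).im / 12))
        rw [← mul_assoc, ← mul_assoc, ← Real.exp_add, ← Real.exp_add, add_neg_cancel,
          Real.exp_zero, one_mul, ← sub_eq_add_neg, mul_comm] at e
        exact e
    _ ≤ 51 / 50 * Real.exp (π / (24 * r) - π * r / 24) := by
        gcongr ?_ * Real.exp ?_
        rw [him]
        have : π * (g • τ).im ≤ π * (1 / (2 * r)) := by gcongr
        have e : π * (1 / (2 * r)) / 12 = π / (24 * r) := by field_simp; norm_num
        linarith

theorem sq_le_normSq_of_re_sq_ge {x r : ℝ} (hr1 : r ^ 2 ≤ 1 / 3) (hx : |x| ≤ 1 / 2)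
    (hxr : 3 / 4 * r ^ 2 ≤ x ^ 2) {c d : ℤ} (hcd : c ≠ 0 ∨ d ≠ 0) :
    r ^ 2 ≤ (c * x + d) ^ 2 + (c * (r / 2)) ^ 2 := by
  have hone_le : ∀ k : ℤ, k ≠ 0 → (1 : ℝ) ≤ (k : ℝ) ^ 2 := fun k hk => by
    have : 1 ≤ k ^ 2 := by have := sq_pos_of_ne_zero hk; omega
    exact_mod_cast this
  obtain ⟨hx1, hx2⟩ := abs_le.1 hx
  by_cases hc0 : c = 0
  · subst hc0
    have := hone_le d (by simpa using hcd)
    simp only [Int.cast_zero, zero_mul, zero_add]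
    nlinarith
  by_cases hc2 : (4 : ℝ) ≤ (c : ℝ) ^ 2
  · nlinarith [sq_nonneg (c * x + d), sq_nonneg r]
  · have hc1 : c = 1 ∨ c = -1 := by
      have h4 : c ^ 2 < 4 := by
        by_contra! hcon
        exact hc2 (by exact_mod_cast hcon)
      have : c < 2 := by nlinarith
      have : -2 < c := by nlinarith
      omega
    have key : 3 / 4 * r ^ 2 ≤ (c * x + d) ^ 2 := by
      by_cases hd : d = 0
      · subst hd
        rcases hc1 with rfl | rfl <;> simpa using hxr
      · have hd1 : (1 : ℝ) ≤ d ∨ (d : ℝ) ≤ -1 := by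
          rcases lt_or_gt_of_ne hd with h | h
          · right; exact_mod_cast (by omega : d ≤ -1)
          · left; exact_mod_cast (by omega : 1 ≤ d)
        rcases hc1 with rfl | rfl <;> rcases hd1 with h | h <;> push_cast <;> nlinarith
    have := hone_le c hc0
    nlinarith [sq_nonneg r]

theorem norm_cauchyIntegrand_le {n : ℕ} (hn : 1 ≤ n) {r x : ℝ} (hr0 : 0 < r)
    (hr : r ^ 2 * (24 * n - 1) = 1) (hx : |x| ≤ 1 / 2) (hxr : 3 / 4 * r ^ 2 ≤ x ^ 2) :
    ‖cauchyIntegrand n (x + (r / 2 : ℝ) * Complex.I)‖ ≤ 51 / 50 * Real.exp (π / (12 * r)) := by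
  have hn' : (1 : ℝ) ≤ n := by exact_mod_cast hn
  have hr3 : r ^ 2 ≤ 1 / 3 := by nlinarith
  set z : ℂ := x + (r / 2 : ℝ) * Complex.I with hz
  have hzim : z.im = r / 2 := by simp [hz]
  have hzre : z.re = x := by simp [hz]
  have hzpos : 0 < z.im := by rw [hzim]; positivity
  have hQ := norm_inv_tprod_le_of_normSq_ge (τ := ⟨z, hzpos⟩) hr0 (by nlinarith) hzim
    (fun c d hcd => by
      have := sq_le_normSq_of_re_sq_ge hr3 hx hxr hcd
      rw [Complex.normSq_apply]
      simp [hzim, hzre]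
      nlinarith)
  rw [cauchyIntegrand, norm_mul]
  have he : ‖Complex.exp (-(2 * π * Complex.I * n * z))‖ = Real.exp (π * n * r) := by
    rw [show -(2 * π * Complex.I * n * z) = 2 * π * Complex.I * (-(n * z)) by ring,
      norm_exp_two_pi_I_mul]
    congr 1
    simp [hzim]
    ring
  rw [he]
  calc _ ≤ Real.exp (π * n * r) * (51 / 50 * Real.exp (π / (24 * r) - π * r / 24)) := by
        gcongr
    _ = 51 / 50 * Real.exp (π / (12 * r)) := by
        rw [mul_left_comm, ← Real.exp_add]
        congr 2
        field_simp
        nlinarith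

end ModularBound

section Arc

open UpperHalfPlane

/-- The point of argument `π / 2 - θ` on the circle of radius `r`. -/
noncomputable def arcPoint (r θ : ℝ) : ℂ := r * (Complex.I * Complex.exp (-(θ * Complex.I)))

theorem arcPoint_eq (r θ : ℝ) :
    arcPoint r θ = (r * Real.sin θ : ℝ) + (r * Real.cos θ : ℝ) * Complex.I := by
  rw [arcPoint, ← neg_mul, Complex.exp_mul_I, Complex.cos_neg, Complex.sin_neg]
  push_cast
  linear_combination -(r * Complex.sin θ) * Complex.I_sq

theorem arcPoint_im (r θ : ℝ) : (arcPoint r θ).im = r * Real.cos θ := by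
  rw [arcPoint_eq, Complex.add_im, Complex.ofReal_im, Complex.im_ofReal_mul, Complex.I_im]
  ring

theorem hasDerivAt_arcPoint (r θ : ℝ) :
    HasDerivAt (arcPoint r) (r * Complex.exp (-(θ * Complex.I))) θ := by
  have h := ((((hasDerivAt_id (θ : ℂ)).mul_const Complex.I).neg.cexp.const_mul
    Complex.I).const_mul (r : ℂ)).comp_ofReal
  convert! h using 1
  simp only [id]
  linear_combination (r * Complex.exp (-(θ * Complex.I))) * Complex.I_sq

theorem sqrt_arcPoint {r θ : ℝ} (hr : 0 < r) (hθ : |θ| < π / 2) :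
    Complex.sqrt (arcPoint r θ) =
      Complex.sqrt Complex.I * (Real.sqrt r * Complex.exp (-(θ / 2 * Complex.I))) := by
  have e : ∀ s t : ℝ, 0 < s → |t| < π / 2 →
      Complex.sqrt (arcPoint s t) = Real.sqrt s * Complex.exp ((π / 2 - t) / 2 * Complex.I) := by
    intro s t hs ht
    obtain ⟨h1, h2⟩ := abs_lt.1 ht
    have e1 : arcPoint s t = Complex.exp (Real.log s + (π / 2 - t : ℝ) * Complex.I) := by
      rw [Complex.exp_add, ← Complex.ofReal_exp, Real.exp_log hs, arcPoint]
      push_cast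
      rw [sub_mul, sub_eq_add_neg, Complex.exp_add, Complex.exp_pi_div_two_mul_I]
    rw [e1, sqrt_eq_exp (Complex.exp_ne_zero _), Complex.log_exp (by simp; linarith)
      (by simp; linarith), add_div, Complex.exp_add]
    congr 1
    · rw [Real.sqrt_eq_rpow, Real.rpow_def_of_pos hs]
      push_cast
      congr 1
      ring
    · congr 1
      push_cast
      ring
  have eI := e 1 0 one_pos (by simpa using by positivity)
  have hI : arcPoint 1 0 = Complex.I := by simp [arcPoint]
  rw [hI] at eI
  rw [e r θ hr hθ, eI]
  simp only [Real.sqrt_one, Complex.ofReal_one, one_mul, Complex.ofReal_zero, sub_zero]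
  rw [mul_left_comm, ← Complex.exp_add]
  congr 2
  ring

theorem cauchyIntegrand_arcPoint {n : ℕ} {r θ : ℝ} (hr0 : 0 < r)
    (hr : r ^ 2 * (24 * n - 1) = 1) (hθ : |θ| < π / 2) :
    cauchyIntegrand n (arcPoint r θ) * (r * Complex.exp (-(θ * Complex.I))) =
      (r * Real.sqrt r * Real.exp (π / (6 * r) * Real.cos θ) : ℝ) *
        (Complex.exp (-(3 / 2 * θ * Complex.I)) *
        (∏' i : ℕ, (1 - Complex.exp (2 * π * Complex.I * (-1 / arcPoint r θ)) ^ (i + 1)))⁻¹) := by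
  have hcos : 0 < Real.cos θ := Real.cos_pos_of_mem_Ioo (abs_lt.1 hθ)
  have him : 0 < (arcPoint r θ).im := by rw [arcPoint_im]; positivity
  set z := arcPoint r θ with hz
  have hz0 : z ≠ 0 := by intro h; rw [h] at him; simp at him
  have him' : 0 < (-1 / z).im := by
    have := UpperHalfPlane.im_inv_neg_coe_pos ⟨z, him⟩
    simpa [neg_div] using this
  have hS := ModularForm.eta_comp_eq_csqrt_I_inv him
  have h1 := ModularForm.eta_tprod_ne_zero him
  have h2 := ModularForm.eta_tprod_ne_zero him'
  simp only [Function.comp_apply, Pi.smul_apply, Pi.mul_apply, smul_eq_mul, ModularForm.eta,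
    ModularForm.eta_q_eq_pow, Function.Periodic.qParam] at hS h1 h2
  set Q := ∏' i : ℕ, (1 - Complex.exp (2 * π * Complex.I * z) ^ (i + 1))
  set Q' := ∏' i : ℕ, (1 - Complex.exp (2 * π * Complex.I * (-1 / z)) ^ (i + 1))
  have hI : Complex.sqrt Complex.I ≠ 0 := by simp [Complex.sqrt]
  rw [hz, sqrt_arcPoint hr0 hθ, ← hz, mul_assoc (Complex.sqrt Complex.I),
    inv_mul_cancel_left₀ hI] at hS
  have hr' : (r : ℂ) ≠ 0 := by exact_mod_cast hr0.ne'
  have hQ : Q⁻¹ = Real.sqrt r * Complex.exp (-(θ / 2 * Complex.I)) *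
      Complex.exp (2 * π * Complex.I * z / 24 - 2 * π * Complex.I * (-1 / z) / 24) * Q'⁻¹ := by
    rw [Complex.exp_sub]
    have h3 := Complex.exp_ne_zero (2 * π * Complex.I * (-1 / z) / 24)
    push_cast at hS
    generalize Complex.exp (2 * π * Complex.I * (-1 / z) / 24) = E at hS h3 ⊢
    generalize Complex.exp (2 * π * Complex.I * z / 24) = F at hS ⊢
    generalize Complex.exp (-(θ / 2 * Complex.I)) = G at hS ⊢
    field_simp
    linear_combination hS
  rw [cauchyIntegrand, hQ]
  have e1 : Complex.exp (-(2 * π * Complex.I * n * z)) *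
      Complex.exp (2 * π * Complex.I * z / 24 - 2 * π * Complex.I * (-1 / z) / 24) =
      (Real.exp (π / (6 * r) * Real.cos θ) : ℂ) := by
    rw [← Complex.exp_add]
    push_cast
    congr 1
    have hcos2 : Complex.cos θ =
      (Complex.exp (θ * Complex.I) + Complex.exp (-(θ * Complex.I))) / 2 := by
      rw [Complex.cos, neg_mul]
    have hinv : Complex.exp (θ * Complex.I) * Complex.exp (-(θ * Complex.I)) = 1 := by
      rw [← Complex.exp_add, add_neg_cancel, Complex.exp_zero]
    have hzi : -1 / z = Complex.I * Complex.exp (θ * Complex.I) / r := by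
      rw [hz, arcPoint]
      have h3 := Complex.exp_ne_zero (-(θ * Complex.I))
      generalize Complex.exp (-(θ * Complex.I)) = E at hinv h3 ⊢
      generalize Complex.exp (θ * Complex.I) = F at hinv ⊢
      rw [div_eq_div_iff (by simp [hr', h3]) hr']
      linear_combination -F * E * r * Complex.I_sq + r * hinv
    have hn : (24 * n - 1 : ℂ) = 1 / r ^ 2 := by
      rw [eq_div_iff (pow_ne_zero 2 hr'), mul_comm]
      exact_mod_cast hr
    rw [hzi, hcos2]
    have e2 : -(2 * π * Complex.I * n * z) + (2 * π * Complex.I * z / 24 -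
      2 * π * Complex.I * (Complex.I * Complex.exp (θ * Complex.I) / r) / 24) =
      -(π * Complex.I * z / 12) * (24 * n - 1) -
      π * Complex.I * (Complex.I * Complex.exp (θ * Complex.I) / r) / 12 := by ring
    rw [e2, hn, hz, arcPoint]
    generalize Complex.exp (-(θ * Complex.I)) = E
    generalize Complex.exp (θ * Complex.I) = F
    field_simp
    linear_combination -12 * (E + F) * Complex.I_sq
  have e3 : Complex.exp (-(θ / 2 * Complex.I)) * Complex.exp (-(θ * Complex.I)) =
      Complex.exp (-(3 / 2 * θ * Complex.I)) := by
    rw [← Complex.exp_add]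
    congr 1
    ring
  rw [← e3, Complex.ofReal_mul, ← e1]
  push_cast
  ring

end Arc

section Contour

/-- The integral along the arc of the main part of `cauchyIntegrand`, after the substitution
`v = sin (θ / 2)`. -/
noncomputable def mainIntegral (m : ℝ) : ℝ :=
  ∫ t in (-(1 / 2) : ℝ)..(1 / 2), 2 * (1 - 4 * t ^ 2) * Real.exp (m * (1 - 2 * t ^ 2))

theorem norm_exp_neg_inv_arcPoint {r : ℝ} (hr : 0 < r) (θ : ℝ) :
    ‖Complex.exp (2 * π * Complex.I * (-1 / arcPoint r θ))‖ =
      Real.exp (-(2 * π * Real.cos θ / r)) := by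
  have h : -1 / arcPoint r θ = (r⁻¹ : ℝ) * (-(Real.sin θ : ℝ) + (Real.cos θ : ℝ) * Complex.I) := by
    have h1 : (Real.sin θ : ℂ) ^ 2 + (Real.cos θ : ℂ) ^ 2 = 1 := by
      exact_mod_cast Real.sin_sq_add_cos_sq θ
    have hr' : (r : ℂ) ≠ 0 := by exact_mod_cast hr.ne'
    have h2 : arcPoint r θ *
        ((r⁻¹ : ℝ) * (-(Real.sin θ : ℝ) + (Real.cos θ : ℝ) * Complex.I)) = -1 := by
      rw [arcPoint_eq]
      push_cast at h1 ⊢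
      field_simp
      linear_combination -h1 + Complex.cos θ ^ 2 * Complex.I_sq
    have h0 : arcPoint r θ ≠ 0 := by intro h; rw [h] at h2; simp at h2
    rw [div_eq_iff h0, mul_comm, h2]
  rw [norm_exp_two_pi_I_mul, h, Complex.im_ofReal_mul, Complex.add_im, Complex.neg_im,
    Complex.ofReal_im, Complex.im_ofReal_mul, Complex.I_im]
  congr 1
  ring

theorem norm_cauchyIntegrand_arcPoint_sub_le {n : ℕ} {r θ : ℝ} (hr0 : 0 < r) (hr1 : r ≤ 1 / 5)
    (hr : r ^ 2 * (24 * n - 1) = 1) (hθ : |θ| ≤ π / 3) :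
    ‖cauchyIntegrand n (arcPoint r θ) * (r * Complex.exp (-(θ * Complex.I))) -
      (r * Real.sqrt r * Real.exp (π / (6 * r) * Real.cos θ) : ℝ) *
        Complex.exp (-(3 / 2 * θ * Complex.I))‖ ≤ 2 * (r * Real.sqrt r) := by
  have hcos : 1 / 2 ≤ Real.cos θ := by
    rw [← Real.cos_abs, ← Real.cos_pi_div_three]
    exact Real.cos_le_cos_of_nonneg_of_le_pi (abs_nonneg _) (by linarith [Real.pi_pos]) hθ
  rw [cauchyIntegrand_arcPoint hr0 hr (by linarith [Real.pi_pos]), ← mul_sub]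
  have hq := norm_exp_neg_inv_arcPoint hr0 θ
  set q := Complex.exp (2 * π * Complex.I * (-1 / arcPoint r θ))
  have hbig : 5 ≤ 2 * π * Real.cos θ / r := by
    rw [le_div_iff₀ hr0]
    nlinarith [Real.pi_gt_three]
  have hq1 : ‖q‖ ≤ 1 / 100 := by
    rw [hq, Real.exp_neg, one_div]
    gcongr
    calc (100 : ℝ) ≤ (2.7182818283 : ℝ) ^ 5 := by norm_num
      _ ≤ Real.exp 1 ^ 5 := by gcongr; exact Real.exp_one_gt_d9.le
      _ = Real.exp 5 := by rw [← Real.exp_nat_mul]; norm_num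
      _ ≤ _ := Real.exp_le_exp.2 hbig
  have hP : ‖(∏' i : ℕ, (1 - q ^ (i + 1)))⁻¹ - 1‖ ≤ 2 * ‖q‖ := by
    refine (norm_inv_tprod_one_sub_pow_sub_one_le (by linarith)).trans ?_
    linarith [exp_div_sq_le_of_le (norm_nonneg q) hq1]
  have hE : ‖Complex.exp (-(3 / 2 * θ * Complex.I))‖ = 1 := by
    rw [Complex.norm_exp]
    simp
  rw [norm_mul, Complex.norm_real, Real.norm_eq_abs, abs_of_nonneg (by positivity),
    ← mul_sub_one, norm_mul, hE, one_mul]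
  calc _ ≤ r * Real.sqrt r * Real.exp (π / (6 * r) * Real.cos θ) * (2 * ‖q‖) := by gcongr
    _ = 2 * (r * Real.sqrt r) * Real.exp (π / (6 * r) * Real.cos θ - 2 * π * Real.cos θ / r) := by
        rw [hq, sub_eq_add_neg, Real.exp_add]
        ring
    _ ≤ 2 * (r * Real.sqrt r) * 1 := by
        gcongr
        rw [Real.exp_le_one_iff]
        have : π / (6 * r) * Real.cos θ = 2 * π * Real.cos θ / r / 12 := by field_simp; norm_num
        linarith
    _ = _ := mul_one _

theorem abs_arc_sub_le {n : ℕ} {r : ℝ} (hr0 : 0 < r) (hr1 : r ≤ 1 / 5)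
    (hr : r ^ 2 * (24 * n - 1) = 1) :
    |(cauchyPrimitive n (arcPoint r (π / 3)) - cauchyPrimitive n (arcPoint r (-(π / 3)))).re -
      r * Real.sqrt r * mainIntegral (π / (6 * r))| ≤ 1 := by
  set m := π / (6 * r) with hm
  set φ : ℝ → ℝ := fun t => 2 * (1 - 4 * t ^ 2) * Real.exp (m * (1 - 2 * t ^ 2)) with hφ
  have hφc : Continuous φ := by fun_prop
  set f : ℝ → ℝ := fun θ => (cauchyPrimitive n (arcPoint r θ)).re -
    r * Real.sqrt r * ∫ t in (0 : ℝ)..Real.sin (θ / 2), φ t with hf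
  set f' : ℝ → ℝ := fun θ => (cauchyIntegrand n (arcPoint r θ) *
    (r * Complex.exp (-(θ * Complex.I))) - (r * Real.sqrt r * Real.exp (m * Real.cos θ) : ℝ) *
        Complex.exp (-(3 / 2 * θ * Complex.I))).re with hf'
  have hderiv : ∀ θ ∈ Set.Icc (-(π / 3)) (π / 3), HasDerivAt f (f' θ) θ := by
    intro θ hθ
    have hcos : 0 < Real.cos θ := Real.cos_pos_of_mem_Ioo
      ⟨by linarith [hθ.1, Real.pi_pos], by linarith [hθ.2, Real.pi_pos]⟩
    have h1 := (hasDerivAt_cauchyPrimitive n (τ := arcPoint r θ)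
      (by rw [arcPoint_im]; positivity)).comp θ (hasDerivAt_arcPoint r θ)
    have h2 := Complex.reCLM.hasFDerivAt.comp_hasDerivAt θ h1
    have h3 := (intervalIntegral.integral_hasDerivAt_right (hφc.intervalIntegrable 0 _)
      (hφc.stronglyMeasurableAtFilter _ _) (hφc.continuousAt (x := Real.sin (θ / 2)))).comp θ
      ((hasDerivAt_id θ).div_const 2).sin
    have h4 := h2.sub (h3.const_mul (r * Real.sqrt r))
    convert! h4 using 1
    have hc3 : (Complex.exp (-(3 / 2 * θ * Complex.I))).re =
        Real.cos (θ / 2) * (1 - 4 * Real.sin (θ / 2) ^ 2) := by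
      rw [show -(3 / 2 * (θ : ℂ) * Complex.I) = (-(3 * (θ / 2)) : ℝ) * Complex.I by
        push_cast; ring, Complex.exp_ofReal_mul_I_re, Real.cos_neg, Real.cos_three_mul]
      linear_combination 4 * Real.cos (θ / 2) * Real.sin_sq_add_cos_sq (θ / 2)
    have hc1 : Real.cos θ = 1 - 2 * Real.sin (θ / 2) ^ 2 := by
      rw [show θ = 2 * (θ / 2) by ring, Real.cos_two_mul]
      ring_nf
      linear_combination 2 * Real.sin_sq_add_cos_sq (θ * (1 / 2))
    simp only [hf', hφ, Complex.sub_re, Complex.re_ofReal_mul, hc3, Complex.reCLM_apply, hc1, id]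
    ring
  have hb : ∀ θ ∈ Set.Ico (-(π / 3)) (π / 3), ‖f' θ‖ ≤ 2 * (r * Real.sqrt r) := by
    intro θ hθ
    rw [Real.norm_eq_abs]
    exact (Complex.abs_re_le_norm _).trans
      (norm_cauchyIntegrand_arcPoint_sub_le hr0 hr1 hr (abs_le.2 ⟨hθ.1, hθ.2.le⟩))
  have hmain := norm_image_sub_le_of_norm_deriv_le_segment'
    (fun θ hθ => (hderiv θ hθ).hasDerivWithinAt) hb (π / 3)
    ⟨by linarith [Real.pi_pos], le_rfl⟩
  have hs1 : Real.sin (π / 3 / 2) = 1 / 2 := by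
    rw [← Real.sin_pi_div_six]; congr 1; ring
  have hs2 : Real.sin (-(π / 3) / 2) = -(1 / 2) := by
    rw [neg_div, Real.sin_neg, hs1]
  have hsplit : mainIntegral m = (∫ t in (0 : ℝ)..(1 / 2), φ t) - ∫ t in (0 : ℝ)..(-(1 / 2)), φ t := by
    rw [intervalIntegral.integral_interval_sub_left (hφc.intervalIntegrable _ _)
      (hφc.intervalIntegrable _ _), mainIntegral]
  have he : (cauchyPrimitive n (arcPoint r (π / 3)) -
      cauchyPrimitive n (arcPoint r (-(π / 3)))).re - r * Real.sqrt r * mainIntegral m =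
      f (π / 3) - f (-(π / 3)) := by
    rw [hsplit, hf]
    simp only [hs1, hs2, Complex.sub_re]
    ring
  rw [he, ← Real.norm_eq_abs]
  refine hmain.trans ?_
  have hsq : Real.sqrt r ≤ 1 / 2 := by
    rw [Real.sqrt_le_left (by norm_num)]
    linarith
  have : r * Real.sqrt r ≤ 1 / 5 * (1 / 2) := by gcongr
  nlinarith [Real.pi_lt_four, Real.pi_pos]

theorem norm_cauchyPrimitive_sub_le {n : ℕ} (hn : 1 ≤ n) {r a b : ℝ} (hr0 : 0 < r)
    (hr : r ^ 2 * (24 * n - 1) = 1) (hab : a ≤ b)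
    (h : ∀ x ∈ Set.Icc a b, |x| ≤ 1 / 2 ∧ 3 / 4 * r ^ 2 ≤ x ^ 2) :
    ‖cauchyPrimitive n (b + (r / 2 : ℝ) * Complex.I) -
      cauchyPrimitive n (a + (r / 2 : ℝ) * Complex.I)‖ ≤
      51 / 50 * Real.exp (π / (12 * r)) * (b - a) := by
  have hderiv : ∀ x ∈ Set.Icc a b, HasDerivWithinAt
      (fun x : ℝ => cauchyPrimitive n (x + (r / 2 : ℝ) * Complex.I))
      (cauchyIntegrand n (x + (r / 2 : ℝ) * Complex.I)) (Set.Icc a b) x := by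
    intro x hx
    have h1 := (hasDerivAt_cauchyPrimitive n (τ := x + (r / 2 : ℝ) * Complex.I)
      (by simpa using hr0)).comp (x : ℂ) ((hasDerivAt_id (x : ℂ)).add_const ((r / 2 : ℝ) * Complex.I))
    rw [mul_one] at h1
    exact h1.comp_ofReal.hasDerivWithinAt
  exact norm_image_sub_le_of_norm_deriv_le_segment' hderiv
    (fun x hx => norm_cauchyIntegrand_le hn hr0 hr (h x (Set.Ico_subset_Icc_self hx)).1
      (h x (Set.Ico_subset_Icc_self hx)).2) b ⟨hab, le_rfl⟩

theorem abs_p_sub_mainIntegral_le {n : ℕ} {r : ℝ} (hn : 1 ≤ n) (hr0 : 0 < r) (hr1 : r ≤ 1 / 5)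
    (hr : r ^ 2 * (24 * n - 1) = 1) :
    |p n - r * Real.sqrt r * mainIntegral (π / (6 * r))| ≤
      51 / 50 * Real.exp (π / (12 * r)) + 1 := by
  have harc := abs_arc_sub_le hr0 hr1 hr
  set c := Real.sqrt 3 / 2 * r with hc
  have hs3 : Real.sqrt 3 ^ 2 = 3 := Real.sq_sqrt (by norm_num)
  have hs3' : 0 ≤ Real.sqrt 3 := Real.sqrt_nonneg 3
  have hs3'' : Real.sqrt 3 ≤ 2 := by nlinarith
  have hc0 : 0 ≤ c := by positivity
  have hc1 : c ≤ 1 / 2 := by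
    have : c ≤ 2 / 2 * (1 / 5) := by rw [hc]; gcongr
    linarith
  have hc2 : c ^ 2 = 3 / 4 * r ^ 2 := by rw [hc, mul_pow, div_pow, hs3]; ring
  have e1 : arcPoint r (π / 3) = (c : ℝ) + (r / 2 : ℝ) * Complex.I := by
    rw [arcPoint_eq, Real.sin_pi_div_three, Real.cos_pi_div_three, hc]
    push_cast
    ring
  have e2 : arcPoint r (-(π / 3)) = ((-c : ℝ) : ℂ) + (r / 2 : ℝ) * Complex.I := by
    rw [arcPoint_eq, Real.sin_neg, Real.cos_neg, Real.sin_pi_div_three, Real.cos_pi_div_three, hc]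
    push_cast
    ring
  rw [e1, e2] at harc
  have hR := norm_cauchyPrimitive_sub_le hn hr0 hr hc1 (fun x hx =>
    ⟨abs_le.2 ⟨by linarith [hx.1], hx.2⟩, by rw [← hc2]; nlinarith [hx.1]⟩)
  have hL := norm_cauchyPrimitive_sub_le hn hr0 hr (neg_le_neg hc1) (fun x hx =>
    ⟨abs_le.2 ⟨hx.1, by linarith [hx.2]⟩, by rw [← hc2]; nlinarith [hx.2]⟩)
  have hper := cauchyPrimitive_add_one_sub n (τ := (-(1 / 2) : ℝ) + (r / 2 : ℝ) * Complex.I)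
    (by simpa using hr0)
  rw [show ((-(1 / 2) : ℝ) : ℂ) + (r / 2 : ℝ) * Complex.I + 1 =
    (1 / 2 : ℝ) + (r / 2 : ℝ) * Complex.I by push_cast; ring] at hper
  have hper' := congrArg Complex.re hper
  rw [Complex.sub_re, Complex.ofReal_re] at hper'
  have hR' := (Complex.abs_re_le_norm _).trans hR
  have hL' := (Complex.abs_re_le_norm _).trans hL
  rw [Complex.sub_re] at hR' hL' harc
  have hE := Real.exp_pos (π / (12 * r))
  rw [abs_le] at *
  constructor <;> nlinarith [mul_nonneg hE.le hc0]

end Contour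

section Asymptotic

theorem integral_gaussian_tail_le {m : ℝ} (hm : 0 < m) :
    ∫ t in Set.Ioi (1 / 2 : ℝ), Real.exp (-(2 * m) * t ^ 2) ≤ Real.exp (-(m / 2)) / m := by
  have h1 : ∫ t in Set.Ioi (1 / 2 : ℝ), Real.exp (-m * t) = Real.exp (-(m / 2)) / m := by
    rw [integral_exp_mul_Ioi (by linarith)]
    rw [show -m * (1 / 2) = -(m / 2) by ring, neg_div_neg_eq]
  rw [← h1]
  refine MeasureTheory.setIntegral_mono_on
    (integrable_exp_neg_mul_sq (by positivity)).integrableOn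
    (integrableOn_exp_mul_Ioi (by linarith) _) measurableSet_Ioi fun t ht => ?_
  rw [Real.exp_le_exp]
  have ht' : (1 / 2 : ℝ) < t := ht
  nlinarith [mul_nonneg hm.le (by nlinarith : 0 ≤ 2 * t ^ 2 - t)]

theorem abs_integral_gaussian_sub_le {m : ℝ} (hm : 0 < m) :
    |(∫ t in (-(1 / 2) : ℝ)..(1 / 2), Real.exp (-(2 * m) * t ^ 2)) - Real.sqrt (π / (2 * m))| ≤
      2 * (Real.exp (-(m / 2)) / m) := by
  set g : ℝ → ℝ := fun t => Real.exp (-(2 * m) * t ^ 2) with hg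
  have hgi : MeasureTheory.Integrable g := integrable_exp_neg_mul_sq (by positivity)
  have hgc : Continuous g := by fun_prop
  have h1 : ∫ t in (-(1 / 2) : ℝ)..(1 / 2), g t = 2 * ∫ t in (0 : ℝ)..(1 / 2), g t := by
    rw [← intervalIntegral.integral_add_adjacent_intervals (b := 0)
      (hgc.intervalIntegrable _ _) (hgc.intervalIntegrable _ _)]
    have : ∫ t in (-(1 / 2) : ℝ)..0, g t = ∫ t in (0 : ℝ)..(1 / 2), g t := by
      have h := intervalIntegral.integral_comp_neg (a := 0) (b := 1 / 2) g
      rw [neg_zero] at h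
      rw [← h]
      simp [hg]
    rw [this]
    ring
  have h2 := intervalIntegral.integral_interval_add_Ioi (a := 0) (b := 1 / 2)
    hgi.integrableOn hgi.integrableOn
  rw [hg, integral_gaussian_Ioi, ← hg] at h2
  have h3 := integral_gaussian_tail_le hm
  have h4 : 0 ≤ ∫ t in Set.Ioi (1 / 2 : ℝ), g t :=
    MeasureTheory.setIntegral_nonneg measurableSet_Ioi fun t _ => Real.exp_nonneg _
  rw [h1, abs_le]
  constructor <;> linarith

theorem integral_one_sub_four_mul_sq {m : ℝ} (hm : 0 < m) :
    ∫ t in (-(1 / 2) : ℝ)..(1 / 2), (1 - 4 * t ^ 2) * Real.exp (-(2 * m) * t ^ 2) =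
      (1 - 1 / m) * (∫ t in (-(1 / 2) : ℝ)..(1 / 2), Real.exp (-(2 * m) * t ^ 2)) +
        Real.exp (-(m / 2)) / m := by
  have hd : ∀ t : ℝ, HasDerivAt (fun t => t / m * Real.exp (-(2 * m) * t ^ 2))
      ((1 - 4 * t ^ 2) * Real.exp (-(2 * m) * t ^ 2) -
        (1 - 1 / m) * Real.exp (-(2 * m) * t ^ 2)) t := by
    intro t
    have h := ((hasDerivAt_id t).div_const m).mul (((hasDerivAt_pow 2 t).const_mul (-(2 * m))).exp)
    convert! h using 1
    simp only [id]
    field_simp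
    push_cast
    ring
  have h := intervalIntegral.integral_eq_sub_of_hasDerivAt (a := -(1 / 2)) (b := 1 / 2)
    (fun t _ => hd t) (Continuous.intervalIntegrable (by fun_prop) _ _)
  rw [intervalIntegral.integral_sub (Continuous.intervalIntegrable (by fun_prop) _ _)
    (Continuous.intervalIntegrable (by fun_prop) _ _), intervalIntegral.integral_const_mul,
    show -(2 * m) * (-(1 / 2)) ^ 2 = -(m / 2) by ring,
    show -(2 * m) * (1 / 2) ^ 2 = -(m / 2) by ring] at h
  linear_combination h

theorem abs_mainIntegral_sub_le {m : ℝ} (hm : 1 ≤ m) :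
    |mainIntegral m - 2 * Real.exp m * Real.sqrt (π / (2 * m)) * (1 - 1 / m)| ≤
      6 * (Real.exp (m / 2) / m) := by
  have hm0 : 0 < m := by linarith
  have h1 : mainIntegral m = 2 * Real.exp m *
      ∫ t in (-(1 / 2) : ℝ)..(1 / 2), (1 - 4 * t ^ 2) * Real.exp (-(2 * m) * t ^ 2) := by
    rw [mainIntegral, ← intervalIntegral.integral_const_mul]
    refine intervalIntegral.integral_congr fun t _ => ?_
    rw [show m * (1 - 2 * t ^ 2) = m + -(2 * m) * t ^ 2 by ring, Real.exp_add]
    ring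
  have h2 := abs_integral_gaussian_sub_le hm0
  rw [integral_one_sub_four_mul_sq hm0] at h1
  set J := ∫ t in (-(1 / 2) : ℝ)..(1 / 2), Real.exp (-(2 * m) * t ^ 2)
  set S := Real.sqrt (π / (2 * m))
  set E := Real.exp (-(m / 2)) / m with hE
  have hEm : Real.exp m * E = Real.exp (m / 2) / m := by
    rw [hE, ← mul_div_assoc, ← Real.exp_add]
    congr 2
    ring
  have hE0 : 0 ≤ E := by positivity
  have hm1 : |1 - 1 / m| ≤ 1 := by
    have h0 : 0 ≤ 1 / m := by positivity
    have h1 : 1 / m ≤ 1 := by rw [div_le_one hm0]; exact hm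
    rw [abs_of_nonneg (by linarith)]
    linarith
  rw [h1, show 2 * Real.exp m * ((1 - 1 / m) * J + E) - 2 * Real.exp m * S * (1 - 1 / m) =
    2 * Real.exp m * ((1 - 1 / m) * (J - S) + E) by ring, abs_mul, abs_of_pos (by positivity),
    ← hEm]
  have h3 : |(1 - 1 / m) * (J - S) + E| ≤ 3 * E := by
    refine (abs_add_le _ _).trans ?_
    rw [abs_mul, abs_of_nonneg hE0]
    have : |1 - 1 / m| * |J - S| ≤ 1 * (2 * E) := by gcongr
    linarith
  calc _ ≤ 2 * Real.exp m * (3 * E) := by gcongr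
    _ = _ := by ring

theorem T_eq {x r : ℝ} (hr0 : 0 < r) (hr : r ^ 2 * (24 * x - 1) = 1) :
    mu x = π / (6 * r) ∧ T x = r * Real.sqrt r * (2 * Real.exp (π / (6 * r)) *
      Real.sqrt (π / (2 * (π / (6 * r)))) * (1 - 1 / (π / (6 * r)))) ∧
      T x = 2 * Real.sqrt 3 * (π / 6) ^ 2 / mu x ^ 2 * (1 - 1 / mu x) * Real.exp (mu x) := by
  have hmu : mu x = π / (6 * r) := by
    have : 24 * x - 1 = (1 / r) ^ 2 := by field_simp; linarith
    rw [mu, this, Real.sqrt_sq (by positivity)]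
    field_simp
  have hd : d = 2 * Real.sqrt 3 * (π / 6) ^ 2 := by
    rw [d, div_eq_iff (by positivity)]
    linear_combination (-(π ^ 2 / 3)) * Real.sq_sqrt (show (0 : ℝ) ≤ 3 by norm_num)
  refine ⟨hmu, ?_, by rw [T, hd]⟩
  have e : π / (2 * (π / (6 * r))) = 3 * r := by field_simp; norm_num
  rw [T, hd, hmu, e, Real.sqrt_mul (by norm_num)]
  have hs := Real.sq_sqrt hr0.le
  have e2 : 2 * Real.sqrt 3 * (π / 6) ^ 2 / (π / (6 * r)) ^ 2 = 2 * Real.sqrt 3 * r ^ 2 := by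
    field_simp
  rw [e2]
  linear_combination (-(2 * Real.sqrt 3 * r * Real.exp (π / (6 * r)) *
    (1 - 1 / (π / (6 * r))))) * hs

theorem sq_lt_exp_div_six {m : ℝ} (hm : 50 ≤ m) :
    11 / 10 * m ^ 2 < 23 / 25 * Real.exp (m / 6) := by
  obtain ⟨t, ht0, rfl⟩ : ∃ t : ℝ, 0 ≤ t ∧ m = 50 + 6 * t :=
    ⟨(m - 50) / 6, by linarith, by ring⟩
  have h1 : (4000 : ℝ) ≤ Real.exp (25 / 3) := by
    refine le_of_pow_le_pow_left₀ (n := 3) (by norm_num) (by positivity) ?_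
    calc (4000 : ℝ) ^ 3 ≤ (2.7182818283 : ℝ) ^ 25 := by norm_num
      _ ≤ Real.exp 1 ^ 25 := by gcongr; exact Real.exp_one_gt_d9.le
      _ = Real.exp (25 / 3) ^ 3 := by rw [← Real.exp_nat_mul, ← Real.exp_nat_mul]; norm_num
  have h2 := Real.quadratic_le_exp_of_nonneg ht0
  rw [show (50 + 6 * t) / 6 = 25 / 3 + t by ring, Real.exp_add]
  have h3 : 4000 * (1 + t + t ^ 2 / 2) ≤ Real.exp (25 / 3) * Real.exp t := by gcongr
  nlinarith

theorem abs_p_div_T_sub_one_lt_of_large {n : ℕ} (hn : 400 ≤ n) :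
    |p n / T (n : ℝ) - 1| < Real.exp (-(mu (n : ℝ)) / 3) := by
  have hn' : (400 : ℝ) ≤ n := by exact_mod_cast hn
  have hN : (97 : ℝ) ^ 2 ≤ 24 * n - 1 := by linarith
  have hs : (97 : ℝ) ≤ Real.sqrt (24 * n - 1) := Real.le_sqrt_of_sq_le hN
  set r := 1 / Real.sqrt (24 * (n : ℝ) - 1) with hrdef
  have hr0 : 0 < r := by positivity
  have hr1 : r ≤ 1 / 97 := by rw [hrdef]; gcongr
  have hr : r ^ 2 * (24 * n - 1) = 1 := by
    rw [hrdef, div_pow, Real.sq_sqrt (by linarith), one_pow, one_div_mul_cancel (by linarith)]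
  obtain ⟨hmu, hT, hT'⟩ := T_eq hr0 hr
  have hm50 : 50 ≤ mu (n : ℝ) := by
    rw [mu]
    nlinarith [Real.pi_gt_d2]
  have h1 := abs_p_sub_mainIntegral_le (by omega) hr0 (by linarith) hr
  rw [show π / (12 * r) = mu (n : ℝ) / 2 by rw [hmu]; field_simp; norm_num] at h1
  rw [← hmu] at h1 hT
  set m := mu (n : ℝ)
  have h2 := abs_mainIntegral_sub_le (m := m) (by linarith)
  set s := r * Real.sqrt r with hs_def
  have hs0 : 0 ≤ s := by positivity
  have hs1 : s ≤ 1 / 97 * 1 := by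
    rw [hs_def]
    gcongr
    rw [Real.sqrt_le_one]
    linarith
  have hpT : |p n - T (n : ℝ)| ≤ 11 / 10 * Real.exp (m / 2) := by
    have h3 : |s * mainIntegral m - T (n : ℝ)| ≤ 1 / 97 * (6 * (Real.exp (m / 2) / 50)) := by
      rw [hT, ← mul_sub, abs_mul, abs_of_nonneg hs0]
      refine mul_le_mul (by linarith) (h2.trans ?_) (abs_nonneg _) (by norm_num)
      gcongr
    have h4 : 25 ≤ Real.exp (m / 2) := by linarith [Real.add_one_le_exp (m / 2)]
    have h5 := abs_sub_le (p n) (s * mainIntegral m) (T (n : ℝ))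
    linarith
  have hTpos : 11 / 10 * Real.exp (m / 2) < T (n : ℝ) * Real.exp (-m / 3) := by
    have h3 := sq_lt_exp_div_six hm50
    have hs3 : (173 / 100 : ℝ) ≤ Real.sqrt 3 := Real.le_sqrt_of_sq_le (by norm_num)
    have h4 : (94 / 100 : ℝ) ≤ 2 * Real.sqrt 3 * (π / 6) ^ 2 := by
      calc (94 / 100 : ℝ) ≤ 2 * (173 / 100) * (3.14 / 6) ^ 2 := by norm_num
        _ ≤ _ := by gcongr; exact Real.pi_gt_d2.le
    have h5 : (49 / 50 : ℝ) ≤ 1 - 1 / m := by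
      have : 1 / m ≤ 1 / 50 := by gcongr
      linarith
    have e : Real.exp m * Real.exp (-m / 3) = Real.exp (m / 6) * Real.exp (m / 2) := by
      rw [← Real.exp_add, ← Real.exp_add]
      congr 1
      ring
    have hm2 : 0 < m ^ 2 := by positivity
    calc 11 / 10 * Real.exp (m / 2) = 11 / 10 * m ^ 2 / m ^ 2 * Real.exp (m / 2) := by
          field_simp
      _ < 23 / 25 * Real.exp (m / 6) / m ^ 2 * Real.exp (m / 2) := by gcongr
      _ ≤ (94 / 100) * (49 / 50) * Real.exp (m / 6) / m ^ 2 * Real.exp (m / 2) := by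
          gcongr
          norm_num
      _ ≤ (2 * Real.sqrt 3 * (π / 6) ^ 2) * (1 - 1 / m) * Real.exp (m / 6) / m ^ 2 *
          Real.exp (m / 2) := by gcongr
      _ = _ := by
          rw [hT']
          linear_combination (-(2 * Real.sqrt 3 * (π / 6) ^ 2 / m ^ 2 * (1 - 1 / m))) * e
  have hT0 : 0 < T (n : ℝ) := by
    have := Real.exp_pos (m / 2)
    exact pos_of_mul_pos_left (by linarith) (Real.exp_nonneg (-m / 3))
  rw [div_sub_one hT0.ne', abs_div, abs_of_pos hT0, div_lt_iff₀ hT0, mul_comm]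
  linarith

end Asymptotic

section PartitionTable

open PowerSeries in
open scoped PowerSeries.WithPiTopology in
theorem mk_card_partition_mul_pentagonalSeries :
    (PowerSeries.mk fun n => (Fintype.card (Nat.Partition n) : ℤ)) * pentagonalSeries ℤ = 1 := by
  have h := (Nat.Partition.hasProd_powerSeriesMk_card_restricted ℤ (fun _ => True)).mul
    (PowerSeries.WithPiTopology.hasProd_one_sub_X_pow ℤ)
  have h1 : ∀ i : ℕ, (if True then ∑' j : ℕ, (X : PowerSeries ℤ) ^ ((i + 1) * j) else 1) *
      (1 - X ^ (i + 1)) = 1 := fun i => by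
    simp only [if_true, pow_mul]
    exact PowerSeries.WithPiTopology.tsum_pow_mul_one_sub_of_constantCoeff_eq_zero (by simp)
  simp only [h1] at h
  have h2 := h.unique hasProd_one
  simpa [Nat.Partition.restricted] using h2

/-- The alternating sum of the entries of `L` at the generalized pentagonal numbers, counted from
the index `k * (3 * k + 1) / 2` of the head of `L`, with at most `s` pairs of terms. -/
def pentagonalSum : ℕ → ℕ → List ℕ → ℤ
  | 0, _, _ => 0
  | s + 1, k, L => L.headD 0 - (L.drop (2 * k + 1)).headD 0 -
      pentagonalSum s (k + 1) (L.drop (3 * k + 2))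

theorem pentagonal_add_one_eq (k : ℕ) :
    pentagonal ((k : ℤ) + 1) = pentagonal (-(k : ℤ)) + (2 * k + 1) := by
  have h1 := two_mul_natCast_pentagonal ((k : ℤ) + 1)
  have h2 := two_mul_natCast_pentagonal (-(k : ℤ))
  zify
  linarith

theorem pentagonal_neg_add_one_eq (k : ℕ) :
    pentagonal (-((k : ℤ) + 1)) = pentagonal (-(k : ℤ)) + (3 * k + 2) := by
  have h1 := two_mul_natCast_pentagonal (-((k : ℤ) + 1))
  have h2 := two_mul_natCast_pentagonal (-(k : ℤ))
  zify
  linarith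

theorem pentagonalSum_drop (L : List ℕ) (s k : ℕ) :
    pentagonalSum s k (L.drop (pentagonal (-(k : ℤ)))) =
      ∑ i ∈ Finset.range s, (-1) ^ i * ((L.getD (pentagonal (-((k + i : ℕ) : ℤ))) 0 : ℤ) -
        L.getD (pentagonal (((k + i : ℕ) : ℤ) + 1)) 0) := by
  induction s generalizing k with
  | zero => simp [pentagonalSum]
  | succ s ih =>
    have hd : ∀ j, (L.drop j).headD 0 = L.getD j 0 := fun j => by
      rw [List.headD_eq_head?_getD, List.head?_drop, List.getD_eq_getElem?_getD]
    rw [pentagonalSum, List.drop_drop, List.drop_drop, hd, hd, ← pentagonal_add_one_eq,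
      ← pentagonal_neg_add_one_eq, ← Nat.cast_succ, ih, Finset.sum_range_succ', sub_eq_add_neg,
      ← Finset.sum_neg_distrib, add_comm]
    congr 1
    · refine Finset.sum_congr rfl fun i _ => ?_
      rw [show k + 1 + i = k + (i + 1) by ring, pow_succ]
      ring
    · simp

/-- The first `n` values of the partition function, in decreasing order of the index. -/
def partitionList : ℕ → List ℕ
  | 0 => []
  | n + 1 => Fintype.card (Nat.Partition n) :: partitionList n

theorem partitionList_getD (n j : ℕ) : (partitionList (n + 1)).getD j 0 =
    if j ≤ n then Fintype.card (Nat.Partition (n - j)) else 0 := by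
  induction n generalizing j with
  | zero =>
    cases j <;> simp [partitionList]
  | succ n ih =>
    cases j with
    | zero => simp [partitionList]
    | succ j =>
      rw [partitionList, List.getD_cons_succ, ih]
      simp

open PowerSeries in
open scoped PowerSeries.WithPiTopology in
theorem pentagonalSum_partitionList {n : ℕ} (hn : 0 < n) {s : ℕ} (hs : n < pentagonal (-(s : ℤ))) :
    pentagonalSum s 0 (partitionList (n + 1)) = 0 := by
  set P : PowerSeries ℤ := PowerSeries.mk fun n => (Fintype.card (Nat.Partition n) : ℤ) with hP
  have h := (PowerSeries.WithPiTopology.hasSum_pow_pentagonal_sub_pentagonalSeries ℤ).mul_left P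
  rw [hP, mk_card_partition_mul_pentagonalSeries, ← hP,
    PowerSeries.WithPiTopology.hasSum_iff_hasSum_coeff] at h
  have hn' := h n
  have hterm : ∀ k : ℕ, coeff n (P * ((-1) ^ k * (X ^ pentagonal (-(k : ℤ)) -
      X ^ pentagonal ((k : ℤ) + 1)))) =
      (-1) ^ k * (((partitionList (n + 1)).getD (pentagonal (-(k : ℤ))) 0 : ℤ) -
        (partitionList (n + 1)).getD (pentagonal ((k : ℤ) + 1)) 0) := fun k => by
    rw [show P * ((-1) ^ k * (X ^ pentagonal (-(k : ℤ)) - X ^ pentagonal ((k : ℤ) + 1))) =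
      C ((-1) ^ k) * (P * X ^ pentagonal (-(k : ℤ)) - P * X ^ pentagonal ((k : ℤ) + 1)) by
        simp only [map_pow, map_neg, map_one]; ring, coeff_C_mul, map_sub, coeff_mul_X_pow',
      coeff_mul_X_pow', partitionList_getD, partitionList_getD, hP, coeff_mk, coeff_mk]
    push_cast
    rfl
  simp only [hterm] at hn'
  have hfin := hasSum_sum_of_ne_finset_zero (L := .unconditional ℕ) (s := Finset.range s)
    (f := fun k : ℕ =>
    (-1) ^ k * (((partitionList (n + 1)).getD (pentagonal (-(k : ℤ))) 0 : ℤ) -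
        (partitionList (n + 1)).getD (pentagonal ((k : ℤ) + 1)) 0)) (fun k hk => by
      have hk' : s ≤ k := by simpa using hk
      have h1 : pentagonal (-(s : ℤ)) ≤ pentagonal (-(k : ℤ)) :=
        pentagonal_strictAntiOn.antitoneOn (by simp) (by simp) (by simpa using hk')
      have h2 := pentagonal_add_one_eq k
      rw [partitionList_getD, partitionList_getD, if_neg (by omega), if_neg (by omega)]
      simp)
  have hu := hfin.unique hn'
  rw [coeff_one, if_neg hn.ne'] at hu
  have hd := pentagonalSum_drop (partitionList (n + 1)) s 0
  simp only [zero_add] at hd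
  rw [← hu, ← hd]
  rfl

/-- Checks Euler's pentagonal recurrence for a list of values in decreasing order of the index. -/
def checkRecurrence : List ℕ → Bool
  | [] => true
  | [a] => a == 1
  | a :: b :: L => pentagonalSum 17 0 (a :: b :: L) == 0 && checkRecurrence (b :: L)

theorem eq_partitionList_of_checkRecurrence (L : List ℕ) (hL : L.length ≤ 400)
    (h : checkRecurrence L = true) : L = partitionList L.length := by
  induction L with
  | nil => rfl
  | cons a L ih =>
    cases L with
    | nil =>
      simp only [checkRecurrence, beq_iff_eq] at h
      simp [h, partitionList]
    | cons b L =>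
      simp only [checkRecurrence, Bool.and_eq_true, beq_iff_eq] at h
      have ih' := ih (by simp at hL ⊢; omega) h.2
      have h0 := pentagonalSum_partitionList (n := (b :: L).length) (s := 17) (by simp)
        (by
          have := two_mul_natCast_pentagonal (-((17 : ℕ) : ℤ))
          simp only [List.length_cons] at hL ⊢
          zify
          push_cast at this
          omega)
      have h1 := h.1
      rw [partitionList, ← ih'] at h0
      rw [List.length_cons, partitionList, ← ih']
      simp only [pentagonalSum, List.headD_cons] at h0 h1
      congr 1
      zify
      simp only [mul_zero, zero_add, List.drop_succ_cons] at h0 h1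
      linarith

/-- The values `p 399, …, p 1, p 0`. -/
def partitionTable : List ℕ :=
  [6324621482504294325, 5945790114707874597, 5589233202595404488, 5253665124416975163,
   4937873096788191655, 4640713124699623515, 4361106170762284114, 4098034535626594791,
   3850538434667429186, 3617712763867604423, 3398704041358160275, 3192707518433532826,
   2998964447736452194, 2816759503217942792, 2645418340688763701, 2484305294265418180,
   2332821198543892336, 2190401332423765131, 2056513475336633805, 1930656072350465812,
   1812356499739472950, 1701169427975813525, 1596675274490756791, 1498478743590581081,
   1406207446561484054, 1319510599727473500, 1238057794119125085, 1161537834849962850,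
   1089657644424399782, 1022141228367345362, 958728697912338045, 899175348396088349,
   843250788562528427, 790738119649411319, 741433159884081684, 695143713458946040,
   651688879997206959, 610898403751884101, 572612058898037559, 536679070310691121,
   502957566506000020, 471314064268398780, 441622981929358437, 413766180933342362,
   387632532919029223, 363117512048110005, 340122810048577428, 318555973788329084,
   298330063062758076, 279363328483702152, 261578907351144125, 244904537455382406,
   229272286871217150, 214618299743286299, 200882556287683159, 188008647052292980,
   175943559810422753, 164637479165761044, 154043597379576030, 144117936527873832,
   134819180623301520, 126108517833796355, 117949491546113972, 110307860425292772,
   103151466321735325, 96450110192202760, 90175434980549623, 84300815636225119, 78801255302666615,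
   73653287861850339, 68834885946073850, 64325374609114550, 60105349839666544, 56156602112874289,
   52462044228828641, 49005643635237875, 45772358543578028, 42748078035954696, 39919565526999991,
   37274405776748077, 34800954869440830, 32488293351466654, 30326181989842964, 28305020340996003,
   26415807633566326, 24650106150830490, 23000006655487337, 21458096037352891, 20017426762576945,
   18671488299600364, 17414180133147295, 16239786535829663, 15142952738857194, 14118662665280005,
   13162217895057704, 12269218019229465, 11435542077822104, 10657331232548839, 9930972392403501,
   9253082936723602, 8620496275465025, 8030248384943040, 7479565078510584, 6965850144195831,
   6486674127079088, 6039763882095515, 5622992691950605, 5234371069753672, 4872038056472084,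
   4534253126900886, 4219388528587095, 3925922161489422, 3652430836071053, 3397584011986773,
   3160137867148997, 2938929793929555, 2732873183547535, 2540952590045698, 2362219145337711,
   2195786311682516, 2040825852575075, 1896564103591584, 1762278433057269, 1637293969337171,
   1520980492851175, 1412749565173450, 1312051800816215, 1218374349844333, 1131238503938606,
   1050197489931117, 974834369944625, 904760108316360, 839611730366814, 779050629562167,
   722760953690372, 670448123060170, 621837416509615, 576672674947168, 534715062908609,
   495741934760846, 459545750448675, 425933084409356, 394723676655357, 365749566870782,
   338854264248680, 313891991306665, 290726957916112, 269232701252579, 249291451168559,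
   230793554364681, 213636919820625, 197726516681672, 182973889854026, 169296722391554,
   156618412527946, 144867692496445, 133978259344888, 123888443077259, 114540884553038,
   105882246722733, 97862933703585, 90436839668817, 83561103925871, 77195892663512,
   71304185514919, 65851585970275, 60806135438329, 56138148670947, 51820051838712, 47826239745920,
   44132934884255, 40718063627362, 37561133582570, 34643126322519, 31946390696157, 29454549941750,
   27152408925615, 25025873760111, 23061871173849, 21248279009367, 19573856161145, 18028182516671,
   16601598107914, 15285151248481, 14070545699287, 12950095925895, 11916681236278, 10963707205259,
   10085065885767, 9275102575355, 8528581302375, 7840656226137, 7206841706490, 6622987708040,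
   6085253859260, 5590088317495, 5134205287973, 4714566886083, 4328363658647, 3972999029388,
   3646072432125, 3345365983698, 3068829878530, 2814570987591, 2580840212973, 2366022741845,
   2168627105469, 1987276856363, 1820701100652, 1667727404093, 1527273599625, 1398341745571,
   1280011042268, 1171432692373, 1071823774337, 980462880430, 896684817527, 819876908323,
   749474411781, 684957390936, 625846753120, 571701605655, 522115831195, 476715857290,
   435157697830, 397125074750, 362326859895, 330495499613, 301384802048, 274768617130,
   250438925115, 228204732751, 207890420102, 189334822579, 172389800255, 156919475295,
   142798995930, 129913904637, 118159068427, 107438159466, 97662728555, 88751778802, 80630964769,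
   73232243759, 66493182097, 60356673280, 54770336324, 49686288421, 45060624582, 40853235313,
   37027355200, 33549419497, 30388671978, 27517052599, 24908858009, 22540654445, 20390982757,
   18440293320, 16670689208, 15065878135, 13610949895, 12292341831, 11097645016, 10015581680,
   9035836076, 8149040695, 7346629512, 6620830889, 5964539504, 5371315400, 4835271870, 4351078600,
   3913864295, 3519222692, 3163127352, 2841940500, 2552338241, 2291320912, 2056148051, 1844349560,
   1653668665, 1482074143, 1327710076, 1188908248, 1064144451, 952050665, 851376628, 761002156,
   679903203, 607163746, 541946240, 483502844, 431149389, 384276336, 342325709, 304801365,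
   271248950, 241265379, 214481126, 190569292, 169229875, 150198136, 133230930, 118114304,
   104651419, 92669720, 82010177, 72533807, 64112359, 56634173, 49995925, 44108109, 38887673,
   34262962, 30167357, 26543660, 23338469, 20506255, 18004327, 15796476, 13848650, 12132164,
   10619863, 9289091, 8118264, 7089500, 6185689, 5392783, 4697205, 4087968, 3554345, 3087735,
   2679689, 2323520, 2012558, 1741630, 1505499, 1300156, 1121505, 966467, 831820, 715220, 614154,
   526823, 451276, 386155, 329931, 281589, 239943, 204226, 173525, 147273, 124754, 105558, 89134,
   75175, 63261, 53174, 44583, 37338, 31185, 26015, 21637, 17977, 14883, 12310, 10143, 8349, 6842,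
   5604, 4565, 3718, 3010, 2436, 1958, 1575, 1255, 1002, 792, 627, 490, 385, 297, 231, 176, 135,
   101, 77, 56, 42, 30, 22, 15, 11, 7, 5, 3, 2, 1, 1]

set_option maxRecDepth 10000 in
theorem partitionTable_eq : partitionTable = partitionList 400 :=
  eq_partitionList_of_checkRecurrence partitionTable (by decide +kernel) (by decide +kernel)

end PartitionTable

section SmallCases

/-- The scale of the fixed-point arithmetic: the natural number `a` stands for `a / fixedOne`. -/
def fixedOne : ℕ := 2 ^ 128

/-- Repeated squaring in fixed-point arithmetic, rounding down. -/
def squareDown : ℕ → ℕ → ℕ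
  | 0, l => l
  | k + 1, l => squareDown k (l ^ 2 / fixedOne)

/-- Repeated squaring in fixed-point arithmetic, rounding up. -/
def squareUp : ℕ → ℕ → ℕ
  | 0, h => h
  | k + 1, h => squareUp k (h ^ 2 / fixedOne + 1)

/-- Newton's iteration for the square root of `M`. -/
def newtonSqrt (M : ℕ) : ℕ → ℕ → ℕ
  | 0, x => x
  | k + 1, x => newtonSqrt M k ((x + M / x) / 2)

theorem fixedOne_pos : (0 : ℝ) < fixedOne := by norm_num [fixedOne]

theorem div_le_natDiv_add_one (x y : ℕ) : (x : ℝ) / y ≤ ((x / y + 1 : ℕ) : ℝ) := by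
  rw [← Nat.floor_div_eq_div (K := ℝ), Nat.cast_add_one]
  exact (Nat.lt_floor_add_one _).le

theorem squareDown_le (k : ℕ) {l : ℕ} {y : ℝ} (h : (l : ℝ) / fixedOne ≤ Real.exp y) :
    (squareDown k l : ℝ) / fixedOne ≤ Real.exp (2 ^ k * y) := by
  induction k generalizing l y with
  | zero => simpa [squareDown] using h
  | succ k ih =>
    rw [squareDown, show (2 : ℝ) ^ (k + 1) * y = 2 ^ k * (2 * y) by ring]
    refine ih ?_
    have hF := fixedOne_pos
    calc ((l ^ 2 / fixedOne : ℕ) : ℝ) / fixedOne ≤ ((l ^ 2 : ℕ) / fixedOne : ℝ) / fixedOne := by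
          gcongr
          exact Nat.cast_div_le
      _ = ((l : ℝ) / fixedOne) ^ 2 := by push_cast; field_simp
      _ ≤ Real.exp y ^ 2 := by gcongr
      _ = Real.exp (2 * y) := by rw [← Real.exp_nat_mul]; norm_num

theorem le_squareUp (k : ℕ) {h : ℕ} {y : ℝ} (hy : Real.exp y ≤ (h : ℝ) / fixedOne) :
    Real.exp (2 ^ k * y) ≤ (squareUp k h : ℝ) / fixedOne := by
  induction k generalizing h y with
  | zero => simpa [squareUp] using hy
  | succ k ih =>
    rw [squareUp, show (2 : ℝ) ^ (k + 1) * y = 2 ^ k * (2 * y) by ring]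
    refine ih ?_
    have hF := fixedOne_pos
    calc Real.exp (2 * y) = Real.exp y ^ 2 := by rw [← Real.exp_nat_mul]; norm_num
      _ ≤ ((h : ℝ) / fixedOne) ^ 2 := by gcongr
      _ = ((h ^ 2 : ℕ) / fixedOne : ℝ) / fixedOne := by push_cast; field_simp
      _ ≤ _ := by
          gcongr
          exact div_le_natDiv_add_one _ _

/-- A fixed-point lower bound for `exp` of the number represented by `a`. -/
def expLower (a : ℕ) : ℕ := squareDown 48 (fixedOne + a / 2 ^ 48)

/-- A fixed-point upper bound for `exp` of the number represented by `b`. -/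
def expUpper (b : ℕ) : ℕ :=
  squareUp 48 (fixedOne + (b / 2 ^ 48 + 1) + ((b / 2 ^ 48 + 1) ^ 2 / fixedOne + 1))

theorem expLower_le {a : ℕ} {x : ℝ} (hx : (a : ℝ) / fixedOne ≤ x) :
    (expLower a : ℝ) / fixedOne ≤ Real.exp x := by
  have hF := fixedOne_pos
  have h := squareDown_le 48 (l := fixedOne + a / 2 ^ 48) (y := x / 2 ^ 48) (by
    refine le_trans ?_ (Real.add_one_le_exp _)
    have h1 : ((a / 2 ^ 48 : ℕ) : ℝ) ≤ (a : ℝ) / 2 ^ 48 := by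
      exact_mod_cast Nat.cast_div_le (α := ℝ) (m := a) (n := 2 ^ 48)
    calc ((fixedOne + a / 2 ^ 48 : ℕ) : ℝ) / fixedOne
        ≤ (fixedOne + (a : ℝ) / 2 ^ 48) / fixedOne := by
          rw [Nat.cast_add]
          gcongr
      _ = (a : ℝ) / fixedOne / 2 ^ 48 + 1 := by field_simp; ring
      _ ≤ _ := by gcongr)
  rwa [mul_div_cancel₀ _ (by norm_num)] at h

theorem le_expUpper {b : ℕ} {x : ℝ} (hx0 : 0 ≤ x) (hx : x ≤ (b : ℝ) / fixedOne)
    (hb : b ≤ 2 ^ 48 * fixedOne) : Real.exp x ≤ (expUpper b : ℝ) / fixedOne := by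
  have hF := fixedOne_pos
  have hb' : (b : ℝ) ≤ 2 ^ 48 * fixedOne := by exact_mod_cast hb
  have h := le_squareUp 48 (y := x / 2 ^ 48)
    (h := fixedOne + (b / 2 ^ 48 + 1) + ((b / 2 ^ 48 + 1) ^ 2 / fixedOne + 1)) (by
    have h1 : (b : ℝ) / 2 ^ 48 ≤ ((b / 2 ^ 48 + 1 : ℕ) : ℝ) := by
      exact_mod_cast div_le_natDiv_add_one b (2 ^ 48)
    generalize b / 2 ^ 48 + 1 = t at h1 ⊢
    have h2 := div_le_natDiv_add_one (t ^ 2) fixedOne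
    have hy0 : 0 ≤ x / 2 ^ 48 := by positivity
    have hy1 : x / 2 ^ 48 ≤ 1 := by
      rw [div_le_one (by positivity)]
      exact hx.trans (by rwa [div_le_iff₀ hF])
    have hyt : x / 2 ^ 48 ≤ t / fixedOne := by
      calc x / 2 ^ 48 ≤ (b : ℝ) / fixedOne / 2 ^ 48 := by gcongr
        _ = (b : ℝ) / 2 ^ 48 / fixedOne := by ring
        _ ≤ _ := by gcongr
    have h3 := Real.abs_exp_sub_one_sub_id_le (x := x / 2 ^ 48) (by rwa [abs_of_nonneg hy0])
    have h4 := le_abs_self (Real.exp (x / 2 ^ 48) - 1 - x / 2 ^ 48)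
    calc Real.exp (x / 2 ^ 48) ≤ 1 + x / 2 ^ 48 + (x / 2 ^ 48) ^ 2 := by linarith
      _ ≤ 1 + t / fixedOne + (t / fixedOne : ℝ) ^ 2 := by gcongr
      _ = (fixedOne + t + (t ^ 2 : ℕ) / fixedOne) / fixedOne := by push_cast; field_simp
      _ ≤ _ := by
          rw [Nat.cast_add, Nat.cast_add]
          gcongr)
  rwa [mul_div_cancel₀ _ (by norm_num)] at h

/-- A fixed-point lower bound for `mu`, given a lower bound `c` for the square root. -/
def muLower (c : ℕ) : ℕ := c * 314159265358979323846 / (6 * 10 ^ 20)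

/-- A fixed-point upper bound for `mu`, given an upper bound `c` for the square root. -/
def muUpper (c : ℕ) : ℕ := c * 314159265358979323847 / (6 * 10 ^ 20) + 1

theorem muLower_le {N c : ℕ} (h : c ^ 2 ≤ N * fixedOne ^ 2) :
    (muLower c : ℝ) / fixedOne ≤ π / 6 * Real.sqrt N := by
  have hF := fixedOne_pos
  have h1 : (c : ℝ) / fixedOne ≤ Real.sqrt N := by
    refine Real.le_sqrt_of_sq_le ?_
    rw [div_pow, div_le_iff₀ (by positivity)]
    exact_mod_cast h
  have h2 : (muLower c : ℝ) ≤ c * 314159265358979323846 / (6 * 10 ^ 20) := by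
    have := Nat.cast_div_le (α := ℝ) (m := c * 314159265358979323846) (n := 6 * 10 ^ 20)
    rw [muLower]
    exact_mod_cast this
  calc (muLower c : ℝ) / fixedOne ≤ c * 314159265358979323846 / (6 * 10 ^ 20) / fixedOne := by
        gcongr
    _ = 3.14159265358979323846 / 6 * (c / fixedOne) := by ring
    _ ≤ _ := by gcongr; exact Real.pi_gt_d20.le

theorem le_muUpper {N c : ℕ} (h : N * fixedOne ^ 2 ≤ c ^ 2) :
    π / 6 * Real.sqrt N ≤ (muUpper c : ℝ) / fixedOne := by
  have hF := fixedOne_pos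
  have h1 : Real.sqrt N ≤ (c : ℝ) / fixedOne := by
    refine Real.sqrt_le_iff.2 ⟨by positivity, ?_⟩
    rw [div_pow, le_div_iff₀ (by positivity)]
    exact_mod_cast h
  have h2 : (c * 314159265358979323847 / (6 * 10 ^ 20) : ℝ) ≤ muUpper c := by
    have := div_le_natDiv_add_one (c * 314159265358979323847) (6 * 10 ^ 20)
    rw [muUpper]
    exact_mod_cast this
  calc π / 6 * Real.sqrt N ≤ 3.14159265358979323847 / 6 * (c / fixedOne) := by
        gcongr; exact Real.pi_lt_d20.le
    _ = c * 314159265358979323847 / (6 * 10 ^ 20) / fixedOne := by ring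
    _ ≤ _ := by gcongr

theorem T_eq_of_one_le {n : ℕ} (hn : 1 ≤ n) :
    T (n : ℝ) = 2 * Real.sqrt 3 / ((24 * n - 1 : ℕ) : ℝ) * (1 - 1 / mu n) * Real.exp (mu n) := by
  have hN : ((24 * n - 1 : ℕ) : ℝ) = 24 * n - 1 := by
    rw [Nat.cast_sub (by omega)]; push_cast; ring
  have hn' : (1 : ℝ) ≤ n := by exact_mod_cast hn
  have hpos : (0 : ℝ) < 24 * n - 1 := by linarith
  have h3 := Real.sq_sqrt (show (0 : ℝ) ≤ 3 by norm_num)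
  have h : d / mu n ^ 2 = 2 * Real.sqrt 3 / (24 * n - 1) := by
    rw [d, mu, mul_pow, Real.sq_sqrt hpos.le]
    field_simp
    rw [h3]
    norm_num
  rw [T, h, hN]

theorem abs_div_T_sub_one_lt {n P a b l h k F D S₁ S₂ : ℕ} (hn : 1 ≤ n)
    (hF : (0 : ℝ) < F) (hD : (0 : ℝ) < D) (hs1 : (S₁ : ℝ) / D ≤ Real.sqrt 3)
    (hs2 : Real.sqrt 3 ≤ (S₂ : ℝ) / D)
    (ha : (a : ℝ) / F ≤ mu n) (hb : mu n ≤ (b : ℝ) / F)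
    (hl : (l : ℝ) / F ≤ Real.exp (mu n)) (hh : Real.exp (mu n) ≤ (h : ℝ) / F)
    (hk : h ≤ 2 ^ (3 * k) * F)
    (hlo : P * (24 * n - 1) * F * D * a * 2 ^ k <
      2 * S₁ * (a - F) * l * (2 ^ k + 1))
    (hhi : 2 * S₂ * (b - F) * h * (2 ^ k - 1) <
      P * (24 * n - 1) * F * D * b * 2 ^ k) :
    |(P : ℝ) / T (n : ℝ) - 1| < Real.exp (-(mu (n : ℝ)) / 3) := by
  have hTeq := T_eq_of_one_le hn
  set N : ℕ := 24 * n - 1 with hNdef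
  have hN : (0 : ℝ) < N := by
    have : 0 < N := by omega
    exact_mod_cast this
  set m := mu (n : ℝ)
  have haF : F < a := by
    by_contra! hcon
    rw [Nat.sub_eq_zero_of_le hcon] at hlo
    simp at hlo
  have haF' : (F : ℝ) < a := by exact_mod_cast haF
  have ha0 : (0 : ℝ) < a := hF.trans haF'
  have hm1 : 1 < m := lt_of_lt_of_le (by rwa [one_lt_div hF]) ha
  have hbF' : (F : ℝ) < b := by
    have := hm1.trans_le hb
    rwa [one_lt_div hF] at this
  have hbF : F < b := by exact_mod_cast hbF'
  have hb0 : (0 : ℝ) < b := hF.trans hbF'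
  have h1m : 0 < 1 - 1 / m := by
    have : 1 / m < 1 := by rw [div_lt_one (by linarith)]; exact hm1
    linarith
  have h1a : 1 - F / a ≤ 1 - 1 / m := by
    have : 1 / m ≤ 1 / ((a : ℝ) / F) := by gcongr
    rw [one_div_div] at this
    linarith
  have h1b : 1 - 1 / m ≤ 1 - F / b := by
    have : 1 / ((b : ℝ) / F) ≤ 1 / m := by gcongr
    rw [one_div_div] at this
    linarith
  have h0a : 0 ≤ 1 - (F : ℝ) / a := by
    rw [sub_nonneg, div_le_one ha0]
    exact haF'.le
  have hT0 : 0 < T (n : ℝ) := by rw [hTeq]; positivity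
  have hTlo : 2 * ((S₁ : ℝ) / D) / N * (1 - F / a) * (l / F) ≤
      T (n : ℝ) := by
    rw [hTeq]
    gcongr
  have hThi : T (n : ℝ) ≤
      2 * ((S₂ : ℝ) / D) / N * (1 - F / b) * (h / F) := by
    rw [hTeq]
    gcongr
    exact mul_nonneg (by positivity) (h1m.le.trans h1b)
  set K : ℝ := 2 ^ k with hK
  have hK1 : 1 ≤ K := one_le_pow₀ (by norm_num)
  have hK0 : 0 < K := by linarith
  have heps : 1 / K ≤ Real.exp (-m / 3) := by
    rw [neg_div, Real.exp_neg, one_div]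
    gcongr
    refine le_of_pow_le_pow_left₀ (n := 3) (by norm_num) hK0.le ?_
    rw [← Real.exp_nat_mul, hK, ← pow_mul]
    have e : ((3 : ℕ) : ℝ) * (m / 3) = m := by push_cast; ring
    rw [e]
    refine hh.trans ?_
    rw [div_le_iff₀ hF, mul_comm k 3]
    exact_mod_cast hk
  have hlo' : (P : ℝ) * N * F * D * a * K <
      2 * (S₁ : ℝ) * (a - F) * l * (K + 1) := by
    have : ((P * N * F * D * a * 2 ^ k : ℕ) : ℝ) <
      ((2 * S₁ * (a - F) * l * (2 ^ k + 1) : ℕ) : ℝ) := by exact_mod_cast hlo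
    push_cast [Nat.cast_sub haF.le] at this
    exact this
  have hhi' : 2 * S₂ * ((b : ℝ) - F) * h * (K - 1) <
      P * N * F * D * b * K := by
    have : ((2 * S₂ * (b - F) * h * (2 ^ k - 1) : ℕ) : ℝ) <
      ((P * N * F * D * b * 2 ^ k : ℕ) : ℝ) := by exact_mod_cast hhi
    push_cast [Nat.cast_sub hbF.le, Nat.cast_sub (Nat.one_le_two_pow (n := k))] at this
    exact this
  have hup : (P : ℝ) < T (n : ℝ) * (1 + 1 / K) := by
    calc (P : ℝ) = P * N * F * D * a * K / (N * F * D * a * K) := by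
          field_simp
      _ < 2 * S₁ * (a - F) * l * (K + 1) / (N * F * D * a * K) := by
          gcongr
      _ = 2 * ((S₁ : ℝ) / D) / N * (1 - F / a) * (l / F) *
          (1 + 1 / K) := by field_simp
      _ ≤ _ := by gcongr
  have hdown : T (n : ℝ) * (1 - 1 / K) < P := by
    have hK1' : 0 ≤ 1 - 1 / K := by
      rw [sub_nonneg, div_le_one hK0]
      exact hK1
    calc T (n : ℝ) * (1 - 1 / K) ≤ 2 * ((S₂ : ℝ) / D) / N * (1 - F / b) *
          (h / F) * (1 - 1 / K) := by gcongr
      _ = 2 * S₂ * (b - F) * h * (K - 1) / (N * F * D * b * K) := by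
          field_simp
      _ < P * N * F * D * b * K / (N * F * D * b * K) := by gcongr
      _ = P := by field_simp
  refine lt_of_lt_of_le ?_ heps
  rw [div_sub_one hT0.ne', abs_div, abs_of_pos hT0, div_lt_iff₀ hT0, abs_lt]
  constructor <;> linarith

/-- A numerical check of the bound at `n`, where `P` is the value of `p n`. -/
def checkBound (n P : ℕ) : Bool :=
  let N := 24 * n - 1
  let c := newtonSqrt (N * fixedOne ^ 2) 10 (64 * fixedOne) - 1
  let a := muLower c
  let b := muUpper (c + 2)
  let l := expLower a
  let h := expUpper b
  let k := (Nat.log2 h - 128) / 3 + 1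
  Nat.ble (c ^ 2) (N * fixedOne ^ 2) && Nat.ble (N * fixedOne ^ 2) ((c + 2) ^ 2) &&
    Nat.ble b (2 ^ 48 * fixedOne) && Nat.ble h (2 ^ (3 * k) * fixedOne) &&
    Nat.blt (P * N * fixedOne * 10 ^ 12 * a * 2 ^ k)
      (2 * 1732050807568 * (a - fixedOne) * l * (2 ^ k + 1)) &&
    Nat.blt (2 * 1732050807569 * (b - fixedOne) * h * (2 ^ k - 1))
      (P * N * fixedOne * 10 ^ 12 * b * 2 ^ k)

theorem abs_div_T_sub_one_lt_of_checkBound {n P : ℕ} (hn : 1 ≤ n) (h : checkBound n P = true) :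
    |(P : ℝ) / T (n : ℝ) - 1| < Real.exp (-(mu (n : ℝ)) / 3) := by
  simp only [checkBound, Bool.and_eq_true, Nat.ble_eq, Nat.blt_eq] at h
  obtain ⟨⟨⟨⟨⟨h1, h2⟩, h3⟩, h4⟩, h5⟩, h6⟩ := h
  have hmu : mu (n : ℝ) = π / 6 * Real.sqrt ((24 * n - 1 : ℕ) : ℝ) := by
    rw [mu, Nat.cast_sub (by omega)]
    push_cast
    rfl
  have ha := muLower_le h1
  have hb := le_muUpper h2
  rw [← hmu] at ha hb
  have hs1 : ((1732050807568 : ℕ) : ℝ) / ((10 ^ 12 : ℕ) : ℝ) ≤ Real.sqrt 3 :=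
    Real.le_sqrt_of_sq_le (by norm_num)
  have hs2 : Real.sqrt 3 ≤ ((1732050807569 : ℕ) : ℝ) / ((10 ^ 12 : ℕ) : ℝ) :=
    Real.sqrt_le_iff.2 ⟨by positivity, by norm_num⟩
  exact abs_div_T_sub_one_lt hn fixedOne_pos (by norm_num) hs1 hs2 ha hb (expLower_le ha)
    (le_expUpper (by rw [hmu]; positivity) hb h3) h4 h5 h6

/-- Applies `checkBound` to the entries of index at least `40` of a list of values of `p` in
decreasing order of the index, starting at index `n`. -/
def checkBounds : ℕ → List ℕ → Bool
  | _, [] => true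
  | n, a :: L => (Nat.blt n 40 || checkBound n a) && checkBounds (n - 1) L

theorem checkBound_of_checkBounds {s : ℕ} (h : checkBounds (s - 1) (partitionList s) = true) {n : ℕ}
    (hn : n < s) (hn40 : 40 ≤ n) : checkBound n (Fintype.card (Nat.Partition n)) = true := by
  induction s with
  | zero => omega
  | succ s ih =>
    simp only [partitionList, checkBounds, Nat.add_sub_cancel, Bool.and_eq_true, Bool.or_eq_true,
      Nat.blt_eq] at h
    rcases Nat.lt_succ_iff_lt_or_eq.1 hn with h' | rfl
    · exact ih h.2 h'
    · exact h.1.resolve_left (by omega)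

set_option maxRecDepth 10000 in
theorem checkBounds_partitionTable : checkBounds 399 partitionTable = true := by decide +kernel

theorem abs_p_div_T_sub_one_lt_of_small {n : ℕ} (hn : 40 ≤ n) (hn' : n < 400) :
    |p n / T (n : ℝ) - 1| < Real.exp (-(mu (n : ℝ)) / 3) :=
  abs_div_T_sub_one_lt_of_checkBound (by omega)
    (checkBound_of_checkBounds (partitionTable_eq ▸ checkBounds_partitionTable) hn' hn)

end SmallCases

theorem p_div_T_close_to_one (n : ℕ) (hn : 40 ≤ n) :
    |p n / T (n : ℝ) - 1| < Real.exp (-(mu (n : ℝ)) / 3) := by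
  rcases lt_or_ge n 400 with h | h
  · exact abs_p_div_T_sub_one_lt_of_small hn h
  · exact abs_p_div_T_sub_one_lt_of_large h
end

section
/- For every integer n ≥ 1, |p(n) - T̃(n)| < 5 + (9/μ(n)²)·e^{μ(n)/2}. -/
open Real

namespace PartitionBound

section GeneratingFunction

open PowerSeries Finset

/-- The number of partitions of `n` into parts of size at most `m`. -/
def boundedCount (m n : ℕ) : ℕ := #(Nat.Partition.restricted n (· ≤ m))

lemma boundedCount_le_card (m n : ℕ) : boundedCount m n ≤ Fintype.card (Nat.Partition n) :=
  Finset.card_le_univ _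

lemma boundedCount_eq_card {m n : ℕ} (h : n ≤ m) :
    boundedCount m n = Fintype.card (Nat.Partition n) := by
  rw [boundedCount, Nat.Partition.restricted, Finset.filter_true_of_mem, Finset.card_univ]
  intro x _ i hi
  exact (Multiset.le_sum_of_mem hi).trans (x.parts_sum.le.trans h)

open PowerSeries.WithPiTopology in
lemma mk_boundedCount_mul_prod (m : ℕ) :
    PowerSeries.mk (fun n ↦ (boundedCount m n : ℂ)) * ∏ i ∈ range m, (1 - X ^ (i + 1)) = 1 := by
  have h := Nat.Partition.hasProd_powerSeriesMk_card_restricted ℂ (· ≤ m)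
  have h' : HasProd (fun i ↦ if i + 1 ≤ m then ∑' j : ℕ, (X : ℂ⟦X⟧) ^ ((i + 1) * j) else 1)
      (∏ i ∈ range m, ∑' j : ℕ, (X : ℂ⟦X⟧) ^ ((i + 1) * j)) := by
    convert hasProd_prod_of_ne_finset_one (s := range m) ?_ using 1
    · exact prod_congr rfl fun i hi ↦ by rw [if_pos (by simpa [Nat.succ_le_iff] using hi)]
    · intro i hi
      rw [if_neg (by simpa [Nat.succ_le_iff] using hi)]
    · infer_instance
  rw [show PowerSeries.mk (fun n ↦ (boundedCount m n : ℂ)) = _ from h.unique h', ← prod_mul_distrib]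
  refine prod_eq_one fun i _ ↦ ?_
  simp_rw [pow_mul]
  exact WithPiTopology.tsum_pow_mul_one_sub_of_constantCoeff_eq_zero (by simp)

lemma mk_boundedCount_succ (m : ℕ) :
    PowerSeries.mk (fun n ↦ (boundedCount (m + 1) n : ℂ)) =
      PowerSeries.mk (fun n ↦ (boundedCount m n : ℂ)) *
        PowerSeries.mk (fun n ↦ if m + 1 ∣ n then 1 else 0) := by
  have h1 := mk_boundedCount_mul_prod (m + 1)
  have h0 := mk_boundedCount_mul_prod m
  have hg : PowerSeries.mk (fun n ↦ if m + 1 ∣ n then (1 : ℂ) else 0) * (1 - X ^ (m + 1)) = 1 := by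
    ext n
    rw [mul_sub, mul_one, map_sub, coeff_mul_X_pow', coeff_one]
    simp only [coeff_mk]
    rcases Nat.eq_zero_or_pos n with rfl | hn
    · simp
    · by_cases hmn : m + 1 ≤ n
      · have : m + 1 ∣ n - (m + 1) ↔ m + 1 ∣ n := by
          obtain ⟨k, rfl⟩ := Nat.exists_eq_add_of_le' hmn
          simp
        simp [hmn, this, hn.ne']
      · have : ¬ m + 1 ∣ n := fun h ↦ hmn (Nat.le_of_dvd hn h)
        simp [hmn, this, hn.ne']
  rw [prod_range_succ] at h1
  set A := PowerSeries.mk (fun n ↦ (boundedCount (m + 1) n : ℂ))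
  set B := PowerSeries.mk (fun n ↦ (boundedCount m n : ℂ))
  set Q := PowerSeries.mk (fun n ↦ if m + 1 ∣ n then (1 : ℂ) else 0)
  set E := ∏ i ∈ range m, (1 - (X : ℂ⟦X⟧) ^ (i + 1))
  linear_combination B * Q * h1 - A * Q * (1 - X ^ (m + 1)) * h0 - A * hg

lemma hasSum_coeff_mul {f g : ℂ⟦X⟧} {q a b : ℂ} (hf : HasSum (fun n ↦ coeff n f * q ^ n) a)
    (hg : HasSum (fun n ↦ coeff n g * q ^ n) b) :
    HasSum (fun n ↦ coeff n (f * g) * q ^ n) (a * b) := by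
  have hf' := summable_norm_iff.mpr hf.summable
  have hg' := summable_norm_iff.mpr hg.summable
  have key : (fun n ↦ coeff n (f * g) * q ^ n) =
      fun n ↦ ∑ kl ∈ antidiagonal n, (coeff kl.1 f * q ^ kl.1) * (coeff kl.2 g * q ^ kl.2) := by
    ext n
    rw [coeff_mul, sum_mul]
    refine sum_congr rfl fun kl hkl ↦ ?_
    rw [← mem_antidiagonal.mp hkl]
    ring
  rw [key, ← hf.tsum_eq, ← hg.tsum_eq, tsum_mul_tsum_eq_tsum_sum_antidiagonal_of_summable_norm hf' hg']
  exact (summable_norm_sum_mul_antidiagonal_of_summable_norm hf' hg').of_norm.hasSum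

lemma hasSum_boundedCount (m : ℕ) {q : ℂ} (hq : ‖q‖ < 1) :
    HasSum (fun n ↦ (boundedCount m n : ℂ) * q ^ n) (∏ i ∈ range m, (1 - q ^ (i + 1)))⁻¹ := by
  induction m with
  | zero =>
    have h := mk_boundedCount_mul_prod 0
    rw [prod_range_zero, mul_one] at h
    have h1 (n : ℕ) : (boundedCount 0 n : ℂ) = if n = 0 then 1 else 0 := by
      rw [← coeff_one, ← h, coeff_mk]
    convert hasSum_ite_eq 0 (1 : ℂ) using 2 with n
    · rw [h1]
      by_cases hn : n = 0 <;> simp [hn]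
    · simp
  | succ m ih =>
    have hq' : ‖q ^ (m + 1)‖ < 1 := by
      rw [norm_pow]
      exact pow_lt_one₀ (norm_nonneg _) hq (by omega)
    have hg : HasSum (fun n ↦ coeff n (PowerSeries.mk (fun n ↦ if m + 1 ∣ n then (1 : ℂ) else 0))
        * q ^ n) (1 - q ^ (m + 1))⁻¹ := by
      have hinj : Function.Injective (fun j : ℕ ↦ (m + 1) * j) :=
        fun a b h ↦ Nat.eq_of_mul_eq_mul_left (Nat.succ_pos m) h
      rw [← hinj.hasSum_iff]
      · simpa [Function.comp_def, pow_mul] using hasSum_geometric_of_norm_lt_one hq'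
      · intro n hn
        rw [coeff_mk, if_neg, zero_mul]
        rintro ⟨j, rfl⟩
        exact hn ⟨j, rfl⟩
    have h := hasSum_coeff_mul
      (f := PowerSeries.mk (fun n ↦ (boundedCount m n : ℂ))) (by simpa using ih) hg
    rw [← mk_boundedCount_succ] at h
    simpa [prod_range_succ, mul_comm] using h

/-- The Euler product `∏ (1 - q ^ n)`. -/
noncomputable def euler (q : ℂ) : ℂ := ∏' n : ℕ, (1 - q ^ (n + 1))

lemma tendsto_prod_euler {q : ℂ} (hq : ‖q‖ < 1) :
    Filter.Tendsto (fun m ↦ ∏ i ∈ range m, (1 - q ^ (i + 1))) Filter.atTop (nhds (euler q)) :=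
  (ModularForm.multipliable_one_sub_pow hq).hasProd.tendsto_prod_nat

lemma euler_ne_zero {q : ℂ} (hq : ‖q‖ < 1) : euler q ≠ 0 := by
  unfold euler
  simp_rw [sub_eq_add_neg]
  refine tprod_one_add_ne_zero_of_summable (f := fun n ↦ -q ^ (n + 1)) (fun i h ↦ ?_) ?_
  · have h1 : q ^ (i + 1) = 1 := by linear_combination -h
    have h2 : ‖q ^ (i + 1)‖ < 1 := by
      rw [norm_pow]
      exact pow_lt_one₀ (norm_nonneg _) hq (by omega)
    simp [h1] at h2
  · simpa using (summable_nat_add_iff 1).mpr (summable_geometric_of_lt_one (norm_nonneg _) hq)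

lemma sum_p_mul_pow_le {r : ℝ} (h0 : 0 ≤ r) (m : ℕ) (h1 : r < 1) :
    ∑ n ∈ range m, p n * r ^ n ≤ (∏ i ∈ range m, (1 - r ^ (i + 1)))⁻¹ := by
  have hr : ‖(r : ℂ)‖ < 1 := by simpa [abs_of_nonneg h0] using h1
  have h : HasSum (fun n ↦ (boundedCount m n : ℝ) * r ^ n) (∏ i ∈ range m, (1 - r ^ (i + 1)))⁻¹ := by
    have := hasSum_boundedCount m hr
    rw [← Complex.hasSum_ofReal]
    push_cast
    exact this
  refine le_trans (le_of_eq ?_) (sum_le_hasSum (range m) (fun n _ ↦ by positivity) h)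
  refine sum_congr rfl fun n hn ↦ ?_
  rw [boundedCount_eq_card (mem_range.mp hn).le, p]

lemma summable_p_mul_pow {r : ℝ} (h0 : 0 ≤ r) (h1 : r < 1) : Summable fun n ↦ p n * r ^ n := by
  have hr : ‖(r : ℂ)‖ < 1 := by simpa [abs_of_nonneg h0] using h1
  have ht := ((tendsto_prod_euler hr).inv₀ (euler_ne_zero hr)).norm
  obtain ⟨c, hc⟩ := ht.bddAbove_range
  refine summable_of_sum_range_le (c := c) (fun n ↦ mul_nonneg (Nat.cast_nonneg _) (by positivity))
    fun m ↦ (sum_p_mul_pow_le h0 m h1).trans ?_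
  refine le_trans (le_abs_self _) (le_of_eq_of_le ?_ (hc ⟨m, rfl⟩))
  simp only [norm_inv, abs_inv, norm_prod, Finset.abs_prod]
  congr 1
  refine prod_congr rfl fun i _ ↦ ?_
  rw [← Real.norm_eq_abs, ← Complex.norm_real]
  push_cast
  rfl

/-- Euler's generating function for the partition numbers. -/
lemma hasSum_p_mul_pow {q : ℂ} (hq : ‖q‖ < 1) :
    HasSum (fun n ↦ (p n : ℂ) * q ^ n) (euler q)⁻¹ := by
  have hs := summable_p_mul_pow (norm_nonneg q) hq
  have hs' : Summable fun n ↦ (p n : ℂ) * q ^ n := by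
    refine Summable.of_norm (hs.congr fun n ↦ ?_)
    simp [p]
  have h1 : Filter.Tendsto (fun m ↦ ∑' n, (boundedCount m n : ℂ) * q ^ n) Filter.atTop
      (nhds (∑' n, (p n : ℂ) * q ^ n)) := by
    refine tendsto_tsum_of_dominated_convergence hs (fun n ↦ ?_) (Filter.Eventually.of_forall
      fun m n ↦ ?_)
    · refine tendsto_const_nhds.congr' ?_
      filter_upwards [Filter.eventually_ge_atTop n] with m hm
      rw [boundedCount_eq_card hm, p, Complex.ofReal_natCast]
    · rw [norm_mul, norm_pow, Complex.norm_natCast]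
      gcongr
      exact Nat.cast_le.mpr (boundedCount_le_card m n)
  have h2 := (tendsto_prod_euler hq).inv₀ (euler_ne_zero hq)
  have h3 : ∑' n, (p n : ℂ) * q ^ n = (euler q)⁻¹ := by
    refine tendsto_nhds_unique h1 (h2.congr fun m ↦ ?_)
    rw [(hasSum_boundedCount m hq).tsum_eq]
  rw [← h3]
  exact hs'.hasSum

lemma one_sub_sum_le_prod {f : ℕ → ℝ} (h0 : ∀ i, 0 ≤ f i) (h1 : ∀ i, f i ≤ 1) (m : ℕ) :
    1 - ∑ i ∈ range m, f i ≤ ∏ i ∈ range m, (1 - f i) := by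
  induction m with
  | zero => simp
  | succ m ih =>
    have hle : ∏ i ∈ range m, (1 - f i) ≤ 1 :=
      prod_le_one (fun i _ ↦ sub_nonneg.mpr (h1 i)) fun i _ ↦ by linarith [h0 i]
    rw [sum_range_succ, prod_range_succ]
    nlinarith [h0 m]

/-- A crude bound for the generating function minus its constant term. -/
lemma norm_inv_euler_sub_one_le {q : ℂ} (hq : ‖q‖ < 1 / 2) :
    ‖(euler q)⁻¹ - 1‖ ≤ ‖q‖ / (1 - 2 * ‖q‖) := by
  set r := ‖q‖ with hr
  have h0 : 0 ≤ r := norm_nonneg q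
  have h1 : r < 1 := by linarith
  have hp0 : p 0 = 1 := by simp [p]
  have hS : ∑' n, p n * r ^ n ≤ (1 - r / (1 - r))⁻¹ := by
    refine Real.tsum_le_of_sum_range_le
      (fun n ↦ mul_nonneg (Nat.cast_nonneg _) (by positivity))
      fun m ↦ (sum_p_mul_pow_le h0 m h1).trans ?_
    have hgeo : ∑ i ∈ range m, r ^ (i + 1) ≤ r / (1 - r) := by
      simp_rw [pow_succ, ← sum_mul]
      rw [div_eq_inv_mul]
      gcongr
      rw [← tsum_geometric_of_lt_one h0 h1]
      exact (summable_geometric_of_lt_one h0 h1).sum_le_tsum _ fun i _ ↦ by positivity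
    have hpos : 0 < 1 - r / (1 - r) := by
      rw [sub_pos, div_lt_one (by linarith)]
      linarith
    have := one_sub_sum_le_prod (f := fun i ↦ r ^ (i + 1))
      (fun i ↦ by positivity) (fun i ↦ pow_le_one₀ h0 h1.le) m
    exact inv_anti₀ hpos (by linarith)
  have hs := summable_p_mul_pow h0 h1
  have hsum := hasSum_p_mul_pow (q := q) h1
  rw [← hsum.tsum_eq, hsum.summable.tsum_eq_zero_add]
  rw [hs.tsum_eq_zero_add] at hS
  simp only [hp0, pow_zero, mul_one, Complex.ofReal_one, add_sub_cancel_left] at hS ⊢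
  have hs1 := (summable_nat_add_iff 1).mpr hs
  refine (tsum_of_norm_bounded hs1.hasSum fun n ↦ ?_).trans (?_ : _ ≤ r / (1 - 2 * r))
  · simp [p, hr]
  · have : (1 - r / (1 - r))⁻¹ - 1 = r / (1 - 2 * r) := by
      have h2 : 1 - r ≠ 0 := by linarith
      have h3 : 1 - 2 * r ≠ 0 := by linarith
      rw [show 1 - r / (1 - r) = (1 - 2 * r) / (1 - r) by field_simp; ring, inv_div, div_sub_one h3]
      ring
    linarith

end GeneratingFunction

section EtaBound

open UpperHalfPlane ModularForm Matrix MatrixGroups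

lemma eta_eq (z : ℂ) :
    eta z = Complex.exp (2 * π * Complex.I * z / 24) * euler (Complex.exp (2 * π * Complex.I * z)) := by
  simp [eta, euler, eta_q_eq_pow, Function.Periodic.qParam]

lemma norm_nome (z : ℂ) : ‖Complex.exp (2 * π * Complex.I * z)‖ = Real.exp (-(2 * π * z.im)) := by
  simp [Complex.norm_exp]

lemma norm_eta_pow_four_mul_im_smul (g : SL(2, ℤ)) (τ : ℍ) :
    ‖eta ((g • τ : ℍ) : ℂ)‖ ^ 4 * (g • τ).im = ‖eta (τ : ℂ)‖ ^ 4 * τ.im := by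
  have hΔ : (discriminant ∣[(12 : ℤ)] g) = discriminant :=
    SlashInvariantForm.slash_action_generators_SL2Z discriminant_S_invariant discriminant_T_invariant g
  have h := petersson_slash_SL 12 discriminant discriminant g τ
  rw [hΔ] at h
  have h' := congrArg norm h
  simp only [petersson, discriminant, norm_mul, Complex.norm_conj, norm_pow, norm_zpow,
    Complex.norm_real, Real.norm_eq_abs, abs_of_pos (UpperHalfPlane.im_pos _)] at h'
  refine (pow_left_inj₀ ?_ ?_ (n := 12) (by norm_num)).mp ?_
  · exact mul_nonneg (by positivity) (UpperHalfPlane.im_pos _).le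
  · exact mul_nonneg (by positivity) (UpperHalfPlane.im_pos _).le
  · simp only [mul_pow]
    norm_cast at h'
    linear_combination -h'

lemma exp_neg_two_pi_mul_le {Y : ℝ} (hY : 0 < Y) (h : 3 ≤ 4 * Y ^ 2) :
    Real.exp (-(2 * π * Y)) ≤ 1 / 200 := by
  have h1 : 0.866 ≤ Y := by nlinarith
  have h2 : 5.44 ≤ 2 * π * Y := by nlinarith [Real.pi_gt_d4]
  have h3 : (200 : ℝ) ≤ Real.exp 5.44 := by
    have h4 : (200 : ℝ) ≤ (2.7182818283 : ℝ) ^ 5 * 1.44 := by norm_num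
    have h5 := Real.exp_one_gt_d9
    have h6 := Real.add_one_le_exp (0.44 : ℝ)
    calc (200 : ℝ) ≤ (2.7182818283 : ℝ) ^ 5 * 1.44 := h4
      _ ≤ Real.exp 1 ^ 5 * Real.exp 0.44 := by gcongr; linarith
      _ = Real.exp 5.44 := by rw [← Real.exp_nat_mul, ← Real.exp_add]; norm_num
  rw [Real.exp_neg, one_div]
  exact inv_anti₀ (by norm_num) (h3.trans (Real.exp_le_exp.mpr h2))

lemma norm_inv_eta_pow_four_le {z : ℂ} (hz : 0 < z.im) (h : 3 ≤ 4 * z.im ^ 2) :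
    (‖eta z‖⁻¹) ^ 4 ≤ (199 / 198) ^ 4 * Real.exp (π * z.im / 3) := by
  have hq : ‖Complex.exp (2 * π * Complex.I * z)‖ ≤ 1 / 200 :=
    (norm_nome z).trans_le (exp_neg_two_pi_mul_le hz h)
  have h1 := norm_inv_euler_sub_one_le (hq.trans_lt (by norm_num))
  set q := Complex.exp (2 * π * Complex.I * z)
  have h2 : ‖q‖ / (1 - 2 * ‖q‖) ≤ 1 / 198 := by
    rw [div_le_div_iff₀ (by linarith) (by norm_num)]
    linarith
  have h3 : ‖euler q‖⁻¹ ≤ 199 / 198 := by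
    have := norm_sub_norm_le (euler q)⁻¹ 1
    rw [norm_one, norm_inv] at this
    linarith
  have h4 : ‖Complex.exp (2 * π * Complex.I * z / 24)‖ = Real.exp (-(π * z.im / 12)) := by
    rw [Complex.norm_exp]
    congr 1
    simp
    ring
  rw [eta_eq, norm_mul, mul_inv, h4, Real.exp_neg, inv_inv, mul_pow, ← Real.exp_nat_mul, mul_comm]
  gcongr
  refine le_of_eq ?_
  push_cast
  ring

/-- Every point of the upper half plane is equivalent to one of large imaginary part, which bounds
`η⁻¹`. -/
lemma exists_coprime_norm_inv_eta_le (τ : ℍ) : ∃ a b : ℤ, IsCoprime a b ∧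
    3 ≤ 4 * (τ.im / Complex.normSq (a * τ + b)) ^ 2 ∧ (‖eta (τ : ℂ)‖⁻¹) ^ 4 ≤
      (199 / 198) ^ 4 * (Complex.normSq (a * τ + b) *
        Real.exp (π * (τ.im / Complex.normSq (a * τ + b)) / 3)) := by
  obtain ⟨g, hg⟩ := ModularGroup.exists_smul_mem_fd τ
  refine ⟨g 1 0, g 1 1, ModularGroup.bottom_row_coprime g, ?_⟩
  have him : (g • τ).im = τ.im / Complex.normSq (g 1 0 * τ + g 1 1) := by
    rw [ModularGroup.im_smul_eq_div_normSq, ModularGroup.denom_apply]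
  have hfd := ModularGroup.three_le_four_mul_im_sq_of_mem_fd hg
  have h1 := norm_inv_eta_pow_four_le (UpperHalfPlane.im_pos (g • τ)) hfd
  have h2 := norm_eta_pow_four_mul_im_smul g τ
  rw [UpperHalfPlane.coe_im] at h1
  rw [him] at h1 h2 hfd
  refine ⟨hfd, ?_⟩
  set N := Complex.normSq (g 1 0 * τ + g 1 1)
  have hτ := τ.im_pos
  have hN : 0 < N := by
    have := (g • τ).im_pos
    rw [him] at this
    exact (div_pos_iff_of_pos_left hτ).mp this
  have he : (‖eta (τ : ℂ)‖⁻¹) ^ 4 = N * (‖eta ((g • τ : ℍ) : ℂ)‖⁻¹) ^ 4 := by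
    have hne := norm_ne_zero_iff.mpr (eta_ne_zero τ.im_pos)
    have hne' := norm_ne_zero_iff.mpr (eta_ne_zero (g • τ).im_pos)
    field_simp at h2 ⊢
    linear_combination h2
  rw [he]
  calc N * (‖eta ((g • τ : ℍ) : ℂ)‖⁻¹) ^ 4
      ≤ N * ((199 / 198) ^ 4 * Real.exp (π * (τ.im / N) / 3)) := by gcongr
    _ = _ := by ring

end EtaBound

section CoefficientIntegral

open Complex

lemma integral_exp_two_pi_mul_I (k : ℤ) (y : ℝ) :
    ∫ θ in (-(1 / 2) : ℝ)..(1 / 2), cexp (2 * π * I * k * (θ + y * I)) =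
      if k = 0 then 1 else 0 := by
  split_ifs with hk
  · simp [hk]; norm_num
  · have hc : (2 * π * I * k : ℂ) ≠ 0 := by
      simp [hk, Real.pi_ne_zero]
    have h1 : ∀ θ : ℝ, cexp (2 * π * I * k * (θ + y * I)) =
        cexp (2 * π * I * k * (y * I)) * cexp (2 * π * I * k * θ) := fun θ ↦ by
      rw [← Complex.exp_add]; ring_nf
    simp_rw [h1]
    rw [intervalIntegral.integral_const_mul, integral_exp_mul_complex hc]
    have h2 : cexp (2 * π * I * k * (1 / 2 : ℝ)) = cexp (2 * π * I * k * (-(1 / 2) : ℝ)) := by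
      refine Complex.exp_eq_exp_iff_exists_int.mpr ⟨k, ?_⟩
      push_cast; ring
    rw [h2]; simp

lemma inv_eta_mul_exp_eq (n : ℕ) {τ : ℂ} :
    (ModularForm.eta τ)⁻¹ * cexp (-(2 * π * I * (n - 1 / 24) * τ)) =
      (euler (cexp (2 * π * I * τ)))⁻¹ * cexp (-(2 * π * I * n * τ)) := by
  have h : cexp (-(2 * π * I * (n - 1 / 24) * τ)) =
      cexp (2 * π * I * τ / 24) * cexp (-(2 * π * I * n * τ)) := by
    rw [← Complex.exp_add]; ring_nf
  rw [eta_eq, h, mul_inv]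
  field_simp

/-- Cauchy's formula for the coefficients of the generating function of partitions. -/
lemma p_eq_integral (n : ℕ) {y : ℝ} (hy : 0 < y) :
    (p n : ℂ) = ∫ θ in (-(1 / 2) : ℝ)..(1 / 2), (ModularForm.eta (θ + y * I))⁻¹ *
      cexp (-(2 * π * I * (n - 1 / 24) * (θ + y * I))) := by
  have hr1 : Real.exp (-(2 * π * y)) < 1 := by
    rw [Real.exp_lt_one_iff]; have := Real.pi_pos; nlinarith
  have hnorm (θ : ℝ) : ‖cexp (2 * π * I * (θ + y * I))‖ = Real.exp (-(2 * π * y)) := by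
    rw [norm_nome]; simp
  have hterm (m : ℕ) (θ : ℝ) : (p m : ℂ) * cexp (2 * π * I * ((m - n : ℤ) : ℂ) * (θ + y * I)) =
      (p m : ℂ) * cexp (2 * π * I * (θ + y * I)) ^ m * cexp (-(2 * π * I * n * (θ + y * I))) := by
    rw [← Complex.exp_nat_mul, mul_assoc (p m : ℂ), ← Complex.exp_add]; push_cast; ring_nf
  let f : ℕ → C(ℝ, ℂ) := fun m ↦
    ⟨fun θ ↦ (p m : ℂ) * cexp (2 * π * I * ((m - n : ℤ) : ℂ) * (θ + y * I)), by fun_prop⟩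
  have hsum : Summable fun m ↦ p m * Real.exp (-(2 * π * y)) ^ m *
      Real.exp (2 * π * n * y) := (summable_p_mul_pow (Real.exp_pos _).le hr1).mul_right _
  have hp0 (m : ℕ) : 0 ≤ p m := Nat.cast_nonneg _
  have hf : Summable fun m ↦ ‖(f m).restrict
      (⟨Set.uIcc (-(1 / 2) : ℝ) (1 / 2), isCompact_uIcc⟩ : TopologicalSpace.Compacts ℝ)‖ := by
    refine Summable.of_nonneg_of_le (fun _ ↦ norm_nonneg _) (fun m ↦ ?_) hsum
    refine (ContinuousMap.norm_le _ (by have := hp0 m; positivity)).mpr fun θ ↦ ?_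
    simp only [f, ContinuousMap.restrict_apply, ContinuousMap.coe_mk]
    rw [hterm, norm_mul, norm_mul, norm_pow, hnorm, norm_real, Real.norm_of_nonneg (hp0 m)]
    refine mul_le_mul_of_nonneg_left ?_ (mul_nonneg (hp0 m) (by positivity))
    rw [Complex.norm_exp]
    simp
  have h := intervalIntegral.hasSum_intervalIntegral_of_summable_norm hf
  have hint (m : ℕ) : ∫ θ in (-(1 / 2) : ℝ)..(1 / 2), f m θ = if m = n then (p n : ℂ) else 0 := by
    simp only [f, ContinuousMap.coe_mk]
    rw [intervalIntegral.integral_const_mul, integral_exp_two_pi_mul_I]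
    by_cases hmn : m = n
    · simp [hmn]
    · simp [hmn, sub_eq_zero]
  simp_rw [hint] at h
  rw [← h.unique (hasSum_ite_eq n (p n : ℂ))]
  refine intervalIntegral.integral_congr fun θ _ ↦ ?_
  simp only [f, ContinuousMap.coe_mk, hterm]
  rw [inv_eta_mul_exp_eq]
  refine HasSum.tsum_eq ?_
  exact (hasSum_p_mul_pow (by rw [hnorm]; exact hr1)).mul_right _

end CoefficientIntegral

section GaussianPrimitive

open Complex MeasureTheory Filter Topology

lemma integral_exp_neg_sq_le (S : ℝ) (hS : 0 ≤ S) :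
    ∫ t in (0 : ℝ)..S, Real.exp (-t ^ 2) ≤ √π / 2 := by
  have h := integral_gaussian_Ioi 1
  simp only [neg_mul, one_mul, div_one] at h
  rw [intervalIntegral.integral_of_le hS, ← h]
  refine setIntegral_mono_set ?_ (ae_of_all _ fun t ↦ (Real.exp_pos _).le)
    (Eventually.of_forall Set.Ioc_subset_Ioi_self)
  have := integrable_exp_neg_mul_sq (b := 1) one_pos
  simpa using this.integrableOn

lemma tendsto_integral_exp_neg_sq :
    Tendsto (fun S ↦ ∫ t in (0 : ℝ)..S, Real.exp (-t ^ 2)) atTop (𝓝 (√π / 2)) := by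
  have h := integral_gaussian_Ioi 1
  simp only [neg_mul, one_mul, div_one] at h
  rw [← h]
  refine intervalIntegral_tendsto_integral_Ioi 0 ?_ tendsto_id
  have := integrable_exp_neg_mul_sq (b := 1) one_pos
  simpa using this.integrableOn

/-- The odd primitive of `exp (u ^ 2)` tends to `i √π / 2` in the upper half plane, with an
explicit error. -/
lemma exists_primitive_exp_sq : ∃ R : ℂ → ℂ, (∀ u, HasDerivAt R (cexp (u ^ 2)) u) ∧
    (∀ u, R (-u) = -R u) ∧
    ∀ u : ℂ, 0 ≤ u.im → ‖R u - I * (√π / 2 : ℝ)‖ ≤ √π / 2 * Real.exp (u ^ 2).re := by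
  obtain ⟨R, hR0, hR⟩ := (Differentiable.isExactOn_univ
    (f := fun u : ℂ ↦ cexp (u ^ 2)) (by fun_prop)).with_val_at 0 0
  replace hR : ∀ u, HasDerivAt R (cexp (u ^ 2)) u := fun u ↦ hR u (Set.mem_univ u)
  have hodd : ∀ u, R (-u) = -R u := by
    have hd : ∀ u, HasDerivAt (fun u ↦ R (-u) + R u) 0 u := fun u ↦ by
      have := ((hR (-u)).comp u (hasDerivAt_neg u)).fun_add (hR u)
      simpa [Function.comp_def] using this
    intro u
    have := is_const_of_deriv_eq_zero (fun u ↦ (hd u).differentiableAt) (fun u ↦ (hd u).deriv) u 0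
    simp only [neg_zero, hR0, add_zero] at this
    linear_combination this
  refine ⟨R, hR, hodd, fun u hu ↦ ?_⟩
  have hvert (v : ℂ) (S : ℝ) : ∫ t in (0 : ℝ)..S, I * cexp ((v + t * I) ^ 2) = R (v + S * I) - R v := by
    have := intervalIntegral.integral_eq_sub_of_hasDerivAt (a := 0) (b := S)
      (f := fun t : ℝ ↦ R (v + t * I)) (f' := fun t : ℝ ↦ I * cexp ((v + t * I) ^ 2))
      (fun t _ ↦ by
        have h1 : HasDerivAt (fun t : ℂ ↦ v + t * I) I (t : ℂ) := by
          simpa using ((hasDerivAt_id (t : ℂ)).mul_const I).const_add v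
        have h2 := ((hR (v + t * I)).comp (t : ℂ) h1).comp_ofReal
        simpa [mul_comm] using h2)
      (Continuous.intervalIntegrable (by fun_prop) _ _)
    simpa using this
  have hlim : Tendsto (fun M : ℝ ↦ R (M * I)) atTop (𝓝 (I * (√π / 2 : ℝ))) := by
    have h1 (M : ℝ) : R (M * I) = I * (∫ t in (0 : ℝ)..M, Real.exp (-t ^ 2) : ℝ) := by
      have := hvert 0 M
      simp only [zero_add, hR0, sub_zero, intervalIntegral.integral_const_mul] at this
      rw [← this, ← intervalIntegral.integral_ofReal]
      congr 1
      refine intervalIntegral.integral_congr fun t _ ↦ ?_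
      simp [mul_pow]
    simp_rw [h1]
    exact (continuous_ofReal.tendsto _ |>.comp tendsto_integral_exp_neg_sq).const_mul I
  have hshift : Tendsto (fun S : ℝ ↦ R (u + S * I) - R ((u.im + S : ℝ) * I)) atTop (𝓝 0) := by
    have h1 : ∀ᶠ S : ℝ in atTop, ‖R (u + S * I) - R ((u.im + S : ℝ) * I)‖ ≤
        Real.exp (u.re ^ 2 - S) * |u.re| := by
      filter_upwards [eventually_ge_atTop 1] with S hS
      have hconv : Convex ℝ {w : ℂ | w.re ≤ |u.re|} := convex_halfSpace_re_le _
      have hconv2 : Convex ℝ {w : ℂ | -|u.re| ≤ w.re} := convex_halfSpace_re_ge _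
      have hconv3 : Convex ℝ {w : ℂ | u.im + S ≤ w.im} := convex_halfSpace_im_ge _
      have := ((hconv.inter hconv2).inter hconv3).norm_image_sub_le_of_norm_hasDerivWithin_le
        (f := R) (f' := fun w ↦ cexp (w ^ 2)) (C := Real.exp (u.re ^ 2 - S))
        (fun w _ ↦ (hR w).hasDerivWithinAt) (fun w hw ↦ ?_)
        (x := (u.im + S : ℝ) * I) (y := u + S * I) ?_ ?_
      · refine this.trans_eq ?_
        congr 1
        have : u + S * I - (u.im + S : ℝ) * I = (u.re : ℂ) := by
          apply Complex.ext <;> simp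
        rw [this, norm_real, Real.norm_eq_abs]
      · obtain ⟨⟨h1, h2⟩, h3⟩ := hw
        simp only [Set.mem_ofPred_eq] at h1 h2 h3
        rw [Complex.norm_exp]
        refine Real.exp_le_exp.mpr ?_
        have h4 : w.re ^ 2 ≤ u.re ^ 2 := sq_le_sq.mpr (abs_le.mpr ⟨h2, h1⟩)
        simp only [sq, mul_re] at h4 ⊢
        nlinarith
      · simp
      · simp [le_abs_self, neg_abs_le]
    refine squeeze_zero_norm' h1 ?_
    rw [← zero_mul |u.re|]
    refine Tendsto.mul_const _ (Real.tendsto_exp_atBot.comp ?_)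
    exact tendsto_atBot_add_const_left _ _ tendsto_neg_atTop_atBot
  have hlim2 : Tendsto (fun S : ℝ ↦ R (u + S * I)) atTop (𝓝 (I * (√π / 2 : ℝ))) := by
    have := hshift.add (hlim.comp (tendsto_atTop_add_const_left atTop u.im tendsto_id))
    simpa using this
  have h2 : Tendsto (fun S : ℝ ↦ ‖R u - R (u + S * I)‖) atTop
      (𝓝 ‖R u - I * (√π / 2 : ℝ)‖) := (hlim2.const_sub _).norm
  refine le_of_tendsto h2 ?_
  filter_upwards [eventually_ge_atTop 0] with S hS
  rw [norm_sub_rev, ← hvert u S]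
  calc ‖∫ t in (0 : ℝ)..S, I * cexp ((u + t * I) ^ 2)‖
      ≤ ∫ t in (0 : ℝ)..S, Real.exp (u ^ 2).re * Real.exp (-t ^ 2) := by
        refine intervalIntegral.norm_integral_le_of_norm_le hS (ae_of_all _ fun t ht ↦ ?_)
          (Continuous.intervalIntegrable (by fun_prop) _ _)
        rw [norm_mul, norm_I, one_mul, Complex.norm_exp, ← Real.exp_add]
        refine Real.exp_le_exp.mpr ?_
        simp only [sq, mul_re, add_re, add_im, ofReal_re, ofReal_im, I_re, I_im, mul_im]
        nlinarith [mul_nonneg ht.1.le hu]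
    _ = Real.exp (u ^ 2).re * ∫ t in (0 : ℝ)..S, Real.exp (-t ^ 2) := by
        rw [intervalIntegral.integral_const_mul]
    _ ≤ √π / 2 * Real.exp (u ^ 2).re := by
        rw [mul_comm]
        gcongr
        exact integral_exp_neg_sq_le S hS

end GaussianPrimitive

section MainIntegral

open Complex

lemma sqrt_sq (z : ℂ) : Complex.sqrt z ^ 2 = z := by
  simp [Complex.sqrt]

lemma hasDerivAt_sqrt {z : ℂ} (hz : z ∈ slitPlane) :
    HasDerivAt Complex.sqrt (1 / (2 * Complex.sqrt z)) z := by
  have h0 := slitPlane_ne_zero hz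
  have h := (hasDerivAt_id z).cpow_const (c := 2⁻¹) hz
  refine HasDerivAt.congr_deriv h ?_
  have h1 : Complex.sqrt z ≠ 0 := fun h ↦ h0 (by rw [← sqrt_sq z, h]; simp)
  simp only [id_eq]
  rw [cpow_sub _ _ h0, cpow_one]
  change 2⁻¹ * (Complex.sqrt z / z) * 1 = _
  field_simp
  exact sqrt_sq z

lemma sqrt_im_nonneg {z : ℂ} (hz : 0 ≤ z.im) : 0 ≤ (Complex.sqrt z).im := by
  rw [sqrt_eq_real_add_ite]
  simp only [hz, if_true, one_mul, add_im, ofReal_im, im_ofReal_mul, I_im, mul_one, zero_add]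
  positivity

lemma sqrt_im_nonpos {z : ℂ} (hz : z.im < 0) : (Complex.sqrt z).im ≤ 0 := by
  rw [sqrt_eq_real_add_ite]
  simp only [hz.not_ge, if_false, neg_mul, one_mul, add_im, neg_im, ofReal_im, im_ofReal_mul, I_im,
    mul_one, zero_add, neg_nonpos]
  positivity

variable {α β : ℝ}

lemma hasDerivAt_primitive {R : ℂ → ℂ} (hR : ∀ u, HasDerivAt R (cexp (u ^ 2)) u) (hβ : β ≠ 0)
    {w : ℂ} (hw : w ≠ 0) :
    HasDerivAt (fun w : ℂ ↦ w * cexp (α ^ 2 / w ^ 2 + β ^ 2 * w ^ 2) +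
      (cexp (2 * α * β) * (2 * α * β - 1) * R (β * w - α / w) -
        cexp (-(2 * α * β)) * (2 * α * β + 1) * R (β * w + α / w)) / (2 * β))
      (2 * β ^ 2 * w ^ 2 * cexp (α ^ 2 / w ^ 2 + β ^ 2 * w ^ 2)) w := by
  have hβ' : (β : ℂ) ≠ 0 := ofReal_ne_zero.mpr hβ
  have hinv : HasDerivAt (fun w : ℂ ↦ (α : ℂ) / w) (-α / w ^ 2) w := by
    simpa [div_eq_mul_inv] using (hasDerivAt_inv hw).const_mul (α : ℂ)
  have hlin : HasDerivAt (fun w : ℂ ↦ (β : ℂ) * w) β w := by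
    simpa using (hasDerivAt_id w).const_mul (β : ℂ)
  have hu := (hR (β * w - α / w)).comp w (hlin.sub hinv)
  have hv := (hR (β * w + α / w)).comp w (hlin.add hinv)
  have heu : cexp ((β * w - α / w) ^ 2) = cexp (-(2 * α * β)) *
      cexp (α ^ 2 / w ^ 2 + β ^ 2 * w ^ 2) := by
    rw [← Complex.exp_add]; congr 1; field_simp; ring
  have hev : cexp ((β * w + α / w) ^ 2) = cexp (2 * α * β) *
      cexp (α ^ 2 / w ^ 2 + β ^ 2 * w ^ 2) := by
    rw [← Complex.exp_add]; congr 1; field_simp; ring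
  have hh : HasDerivAt (fun w : ℂ ↦ (α : ℂ) ^ 2 / w ^ 2 + β ^ 2 * w ^ 2)
      (2 * (α / w) * (-α / w ^ 2) + 2 * (β * w) * β) w := by
    have := (hinv.fun_pow 2).fun_add (hlin.fun_pow 2)
    simpa [div_pow, mul_pow] using this
  have hmain := ((hasDerivAt_id w).mul hh.cexp).add
    (((hu.const_mul (cexp (2 * α * β) * (2 * α * β - 1))).sub
      (hv.const_mul (cexp (-(2 * α * β)) * (2 * α * β + 1)))).div_const (2 * (β : ℂ)))
  refine hmain.congr_deriv ?_
  have h1 : cexp (2 * α * β) * cexp (-(2 * α * β)) = 1 := by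
    rw [← Complex.exp_add]; simp
  rw [heu, hev]
  simp only [id]
  set e1 := cexp (2 * α * β)
  set e2 := cexp (-(2 * α * β))
  set h := cexp (α ^ 2 / w ^ 2 + β ^ 2 * w ^ 2)
  have h2 : e1 * (2 * α * β - 1) * (e2 * h * (β - -α / w ^ 2)) -
      e2 * (2 * α * β + 1) * (e1 * h * (β + -α / w ^ 2)) =
      (2 * α * β - 1) * (h * (β - -α / w ^ 2)) - (2 * α * β + 1) * (h * (β + -α / w ^ 2)) := by
    linear_combination ((2 * α * β - 1) * (h * (β - -α / w ^ 2)) -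
      (2 * α * β + 1) * (h * (β + -α / w ^ 2))) * h1
  rw [h2]
  field_simp
  ring

lemma norm_primitive_sub_le {R : ℂ → ℂ}
    (hR : ∀ u : ℂ, 0 ≤ u.im → ‖R u - I * (√π / 2 : ℝ)‖ ≤ √π / 2 * Real.exp (u ^ 2).re)
    (hα : 0 < α) (hβ : 0 < β) (hαβ : 1 ≤ 2 * α * β) {w : ℂ} (hw : 0 ≤ w.im)
    (hw2 : α ≤ β * ‖w‖ ^ 2) :
    ‖w * cexp (α ^ 2 / w ^ 2 + β ^ 2 * w ^ 2) +
      (cexp (2 * α * β) * (2 * α * β - 1) * R (β * w - α / w) -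
        cexp (-(2 * α * β)) * (2 * α * β + 1) * R (β * w + α / w)) / (2 * β) -
      I * (√π / 2 : ℝ) * ((cexp (2 * α * β) * (2 * α * β - 1) -
        cexp (-(2 * α * β)) * (2 * α * β + 1)) / (2 * β))‖ ≤
      (‖w‖ + √π * α) * Real.exp (α ^ 2 / w ^ 2 + β ^ 2 * w ^ 2).re := by
  have hw0 : w ≠ 0 := by rintro rfl; simp at hw2; linarith
  have hnw : 0 < ‖w‖ := norm_pos_iff.mpr hw0
  have him : ((α : ℂ) / w).im = -(α * w.im / ‖w‖ ^ 2) := by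
    rw [div_im, normSq_eq_norm_sq]; simp
  have hu : 0 ≤ (β * w - α / w).im := by
    rw [sub_im, him, im_ofReal_mul]
    have : 0 ≤ α * w.im / ‖w‖ ^ 2 := by positivity
    have : 0 ≤ β * w.im := by positivity
    linarith
  have hv : 0 ≤ (β * w + α / w).im := by
    rw [add_im, him, im_ofReal_mul]
    have h1 : α * w.im / ‖w‖ ^ 2 ≤ β * w.im := by
      rw [div_le_iff₀ (by positivity)]
      nlinarith
    linarith
  set h := (α ^ 2 / w ^ 2 + β ^ 2 * w ^ 2 : ℂ) with hdef
  have heu : ((β * w - α / w) ^ 2).re = h.re - 2 * α * β := by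
    have : (β * w - α / w) ^ 2 = h - (2 * α * β : ℝ) := by
      push_cast [hdef]; field_simp; ring
    rw [this, sub_re, ofReal_re]
  have hev : ((β * w + α / w) ^ 2).re = h.re + 2 * α * β := by
    have : (β * w + α / w) ^ 2 = h + (2 * α * β : ℝ) := by
      push_cast [hdef]; field_simp; ring
    rw [this, add_re, ofReal_re]
  have hRu := hR _ hu
  have hRv := hR _ hv
  rw [heu] at hRu
  rw [hev] at hRv
  have e1 : ‖cexp (2 * α * β) * (2 * α * β - 1)‖ = Real.exp (2 * α * β) * (2 * α * β - 1) := by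
    have : (cexp (2 * α * β) * (2 * α * β - 1)) =
      ((Real.exp (2 * α * β) * (2 * α * β - 1) : ℝ) : ℂ) := by push_cast; rfl
    rw [this, norm_real, Real.norm_of_nonneg (mul_nonneg (Real.exp_pos _).le (by linarith))]
  have e2 : ‖cexp (-(2 * α * β)) * (2 * α * β + 1)‖ =
      Real.exp (-(2 * α * β)) * (2 * α * β + 1) := by
    have : (cexp (-(2 * α * β)) * (2 * α * β + 1)) =
      ((Real.exp (-(2 * α * β)) * (2 * α * β + 1) : ℝ) : ℂ) := by push_cast; rfl
    rw [this, norm_real, Real.norm_of_nonneg (by positivity)]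
  have hβn : ‖(2 * β : ℂ)‖ = 2 * β := by
    have : (2 * β : ℂ) = ((2 * β : ℝ) : ℂ) := by push_cast; rfl
    rw [this, norm_real, Real.norm_of_nonneg (by positivity)]
  set A := cexp (2 * α * β) * (2 * α * β - 1)
  set B := cexp (-(2 * α * β)) * (2 * α * β + 1)
  set L := I * (√π / 2 : ℝ)
  have hsplit : w * cexp h + (A * R (β * w - α / w) - B * R (β * w + α / w)) / (2 * β) -
      L * ((A - B) / (2 * β)) = w * cexp h + (A * (R (β * w - α / w) - L) -
        B * (R (β * w + α / w) - L)) / (2 * β) := by ring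
  rw [hsplit]
  have hA : ‖A * (R (β * w - α / w) - L)‖ ≤ (2 * α * β - 1) * (√π / 2) * Real.exp h.re := by
    rw [norm_mul, e1]
    calc _ ≤ Real.exp (2 * α * β) * (2 * α * β - 1) * (√π / 2 * Real.exp (h.re - 2 * α * β)) := by
          refine mul_le_mul_of_nonneg_left hRu (mul_nonneg (Real.exp_pos _).le (by linarith))
      _ = (2 * α * β - 1) * (√π / 2) * (Real.exp (2 * α * β) * Real.exp (h.re - 2 * α * β)) := by
          ring
      _ = _ := by rw [← Real.exp_add]; ring_nf
  have hB : ‖B * (R (β * w + α / w) - L)‖ ≤ (2 * α * β + 1) * (√π / 2) * Real.exp h.re := by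
    rw [norm_mul, e2]
    calc _ ≤ Real.exp (-(2 * α * β)) * (2 * α * β + 1) *
          (√π / 2 * Real.exp (h.re + 2 * α * β)) := by
          refine mul_le_mul_of_nonneg_left hRv (by positivity)
      _ = (2 * α * β + 1) * (√π / 2) * (Real.exp (-(2 * α * β)) * Real.exp (h.re + 2 * α * β)) := by
          ring
      _ = _ := by rw [← Real.exp_add]; ring_nf
  calc _ ≤ ‖w * cexp h‖ + ‖(A * (R (β * w - α / w) - L) -
        B * (R (β * w + α / w) - L)) / (2 * β)‖ := norm_add_le _ _
    _ ≤ ‖w‖ * Real.exp h.re + ((2 * α * β - 1) * (√π / 2) * Real.exp h.re +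
        (2 * α * β + 1) * (√π / 2) * Real.exp h.re) / (2 * β) := by
        rw [norm_mul, Complex.norm_exp, norm_div, hβn]
        gcongr
        exact (norm_sub_le _ _).trans (add_le_add hA hB)
    _ = _ := by field_simp; ring

/-- Evaluation of the main integral, up to an explicit error. -/
lemma norm_main_integral_sub_le {y : ℝ} (hα : 0 < α) (hαβ : 1 ≤ 2 * α * β) (hβ : 2 * α ≤ β)
    (hy : 0 < y) (hy2 : y ≤ 1 / 2) :
    ‖(∫ θ in (-(1 / 2) : ℝ)..(1 / 2), Complex.sqrt (y - θ * I) *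
        cexp (α ^ 2 / (y - θ * I) + β ^ 2 * (y - θ * I))) -
      (√π * (Real.exp (2 * α * β) * (2 * α * β - 1)) / (2 * β ^ 3) : ℝ)‖ ≤
      (√π * (Real.exp (-(2 * α * β)) * (2 * α * β + 1)) / (2 * β) +
        2 * ((1 + √π * α) * Real.exp (β ^ 2 * y + 4 * α ^ 2 * y))) / β ^ 2 := by
  have hβ0 : 0 < β := by linarith
  have hβ' : (β : ℂ) ≠ 0 := ofReal_ne_zero.mpr hβ0.ne'
  obtain ⟨R, hR, hodd, hbound⟩ := exists_primitive_exp_sq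
  set P : ℂ → ℂ := fun w : ℂ ↦ w * cexp (α ^ 2 / w ^ 2 + β ^ 2 * w ^ 2) +
      (cexp (2 * α * β) * (2 * α * β - 1) * R (β * w - α / w) -
        cexp (-(2 * α * β)) * (2 * α * β + 1) * R (β * w + α / w)) / (2 * β) with hP
  have hPodd (w : ℂ) : P (-w) = -P w := by
    have h1 : β * -w - α / -w = -(β * w - α / w) := by rw [div_neg]; ring
    have h2 : β * -w + α / -w = -(β * w + α / w) := by rw [div_neg]; ring
    simp only [hP, h1, h2, hodd, neg_sq]
    ring
  have hslit (θ : ℝ) : (y - θ * I : ℂ) ∈ slitPlane := Or.inl (by simpa using hy)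
  have hderiv (θ : ℝ) : HasDerivAt (fun θ : ℝ ↦ P (Complex.sqrt (y - θ * I)))
      (-I * β ^ 2 * (Complex.sqrt (y - θ * I) *
        cexp (α ^ 2 / (y - θ * I) + β ^ 2 * (y - θ * I)))) θ := by
    have hw : Complex.sqrt (y - θ * I) ≠ 0 := fun h ↦
      slitPlane_ne_zero (hslit θ) (by rw [← sqrt_sq (y - θ * I), h]; simp)
    have h1 : HasDerivAt (fun θ : ℂ ↦ (y - θ * I : ℂ)) (-I) (θ : ℂ) := by
      simpa using ((hasDerivAt_id (θ : ℂ)).mul_const I).const_sub (y : ℂ)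
    have h2 := (hasDerivAt_sqrt (hslit θ)).comp (θ : ℂ) h1
    have h3 := ((hasDerivAt_primitive (α := α) hR hβ0.ne' hw).comp (θ : ℂ) h2).comp_ofReal
    refine h3.congr_deriv ?_
    rw [sqrt_sq]
    field_simp
    rw [sqrt_sq]
  have hcont : Continuous fun θ : ℝ ↦ -I * β ^ 2 * (Complex.sqrt (y - θ * I) *
        cexp (α ^ 2 / (y - θ * I) + β ^ 2 * (y - θ * I))) := by
    have h1 : Continuous fun θ : ℝ ↦ Complex.sqrt (y - θ * I) :=
      continuous_iff_continuousAt.mpr fun θ ↦ ContinuousAt.comp (f := fun θ : ℝ ↦ (y - θ * I : ℂ))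
        (hasDerivAt_sqrt (hslit θ)).continuousAt (by fun_prop)
    have h2 (θ : ℝ) : (y - θ * I : ℂ) ≠ 0 := slitPlane_ne_zero (hslit θ)
    fun_prop (disch := assumption)
  have hFTC := intervalIntegral.integral_eq_sub_of_hasDerivAt (a := -(1 / 2)) (b := 1 / 2)
    (fun θ _ ↦ hderiv θ) (hcont.intervalIntegrable _ _)
  rw [intervalIntegral.integral_const_mul] at hFTC
  set J := ∫ θ in (-(1 / 2) : ℝ)..(1 / 2), Complex.sqrt (y - θ * I) *
        cexp (α ^ 2 / (y - θ * I) + β ^ 2 * (y - θ * I))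
  set A := cexp (2 * α * β) * (2 * α * β - 1) with hA
  set B := cexp (-(2 * α * β)) * (2 * α * β + 1) with hB
  -- the endpoint estimate
  have hend (z w : ℂ) (hwz : w ^ 2 = z) (hw : 0 ≤ w.im) (hz : z.re = y) (hz2 : z.im ^ 2 = 1 / 4) :
      ‖P w - I * (√π / 2 : ℝ) * ((A - B) / (2 * β))‖ ≤
        (1 + √π * α) * Real.exp (β ^ 2 * y + 4 * α ^ 2 * y) := by
    have hnz : ‖z‖ ^ 2 = y ^ 2 + 1 / 4 := by
      rw [← normSq_eq_norm_sq, normSq_apply, hz, ← hz2]; ring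
    have hnw : ‖w‖ ^ 2 = ‖z‖ := by rw [← norm_pow, hwz]
    have hz3 : 1 / 2 ≤ ‖z‖ := by nlinarith [norm_nonneg z]
    have hz4 : ‖z‖ ≤ 1 := by nlinarith [norm_nonneg z]
    have hw1 : ‖w‖ ≤ 1 := by nlinarith [norm_nonneg w]
    refine (norm_primitive_sub_le hbound hα hβ0 hαβ hw (by rw [hnw]; nlinarith)).trans ?_
    rw [hwz]
    have hre : (α ^ 2 / z + β ^ 2 * z).re ≤ β ^ 2 * y + 4 * α ^ 2 * y := by
      have h1 : ((α : ℂ) ^ 2 / z).re = α ^ 2 * y / ‖z‖ ^ 2 := by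
        rw [← ofReal_pow, div_re, normSq_eq_norm_sq, hz, ofReal_re, ofReal_im]; ring
      have h2 : ((β : ℂ) ^ 2 * z).re = β ^ 2 * y := by
        rw [← ofReal_pow, re_ofReal_mul, hz]
      rw [add_re, h1, h2, add_comm]
      gcongr
      rw [div_le_iff₀ (by positivity)]
      have : 0 < α ^ 2 * y := by positivity
      nlinarith
    gcongr
  set z₁ : ℂ := y - ((-(1 / 2) : ℝ) : ℂ) * I with hz₁
  set z₀ : ℂ := y - ((1 / 2 : ℝ) : ℂ) * I with hz₀
  have b1 := hend z₁ (Complex.sqrt z₁) (sqrt_sq z₁) (sqrt_im_nonneg (by simp [hz₁]))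
    (by simp [hz₁]) (by simp [hz₁]; norm_num)
  have b0 := hend z₀ (-Complex.sqrt z₀) (by rw [neg_sq, sqrt_sq]) (by
    have := sqrt_im_nonpos (z := z₀) (by simp [hz₀])
    simpa using this) (by simp [hz₀]) (by simp [hz₀]; norm_num)
  rw [hPodd] at b0
  set M := I * (√π / 2 : ℝ) * ((A - B) / (2 * β))
  have hkey : J - (√π * (Real.exp (2 * α * β) * (2 * α * β - 1)) / (2 * β ^ 3) : ℝ) =
      (-(√π * (Real.exp (-(2 * α * β)) * (2 * α * β + 1)) / (2 * β) : ℝ) +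
        -I * ((P (Complex.sqrt z₁) - M) + (-P (Complex.sqrt z₀) - M))) / β ^ 2 := by
    have hJ : J = -I * (P (Complex.sqrt z₁) - P (Complex.sqrt z₀)) / β ^ 2 := by
      rw [eq_div_iff (by positivity)]
      linear_combination I * hFTC + (J * β ^ 2) * I_sq
    have hM : -I * (2 * M) = (√π : ℂ) * ((A - B) / (2 * β)) := by
      simp only [M]; push_cast; linear_combination (-(√π : ℂ) * ((A - B) / (2 * β))) * I_sq
    rw [hJ, eq_div_iff (by positivity)]
    have hAB : ((√π * (Real.exp (2 * α * β) * (2 * α * β - 1)) / (2 * β ^ 3) : ℝ) : ℂ) =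
      √π * A / (2 * β ^ 3) := by simp only [hA]; push_cast; ring
    have hAB' : ((√π * (Real.exp (-(2 * α * β)) * (2 * α * β + 1)) / (2 * β) : ℝ) : ℂ) =
      √π * B / (2 * β) := by simp only [hB]; push_cast; ring
    rw [hAB, hAB']
    have : √π * A / (2 * β ^ 3) * β ^ 2 = √π * A / (2 * β) := by field_simp
    rw [sub_mul, this, div_mul_cancel₀ _ (by positivity)]
    linear_combination hM
  rw [hkey, norm_div, norm_pow, norm_real, Real.norm_of_nonneg hβ0.le]
  gcongr
  refine (norm_add_le _ _).trans ?_
  rw [norm_neg, norm_real, Real.norm_of_nonneg (by positivity), norm_mul, norm_neg, norm_I, one_mul]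
  gcongr
  refine (norm_add_le _ _).trans ?_
  linarith

end MainIntegral

section MainTerm

open Complex

lemma norm_main_integral_sub_main_term_le {m : ℝ} (hm : 28 ≤ m) :
    ‖(∫ θ in (-(1 / 2) : ℝ)..(1 / 2), Complex.sqrt ((π / (12 * m) : ℝ) - θ * I) *
        cexp ((π / 12 : ℝ) / ((π / (12 * m) : ℝ) - θ * I) +
          (3 * m ^ 2 / π : ℝ) * ((π / (12 * m) : ℝ) - θ * I))) -
      (d / m ^ 2 * (1 - 1 / m) * Real.exp m : ℝ)‖ ≤ 1 / 10 * Real.exp (m / 4) := by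
  have hπ := Real.pi_gt_d2
  have hπ' := Real.pi_lt_d2
  have hπ0 := Real.pi_pos
  set α := √(π / 12) with hα
  have hα2 : α ^ 2 = π / 12 := Real.sq_sqrt (by positivity)
  have hα0 : 0 < α := Real.sqrt_pos.mpr (by positivity)
  have hα1 : α ≤ 0.52 := by nlinarith
  have hm0 : 0 < m := by linarith
  set β := m / (2 * α) with hβ
  have hαβ : 2 * α * β = m := by rw [hβ]; field_simp
  have hβ0 : 26 ≤ β := by
    rw [hβ, le_div_iff₀ (by positivity)]; linarith
  have hβ2 : β ^ 2 = 3 * m ^ 2 / π := by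
    rw [hβ, div_pow, mul_pow, hα2]; field_simp; ring
  have hy : 0 < π / (12 * m) := by positivity
  have hy1 : π / (12 * m) ≤ 1 / 100 := by
    rw [div_le_div_iff₀ (by positivity) (by norm_num)]; nlinarith
  have h := norm_main_integral_sub_le (α := α) (β := β) hα0 (by linarith) (by linarith) hy
    (by linarith)
  rw [hαβ] at h
  simp only [← ofReal_pow, hα2, hβ2] at h
  have hsqrtπ : √π = 2 * √3 * α := by
    rw [hα, ← sq_eq_sq₀ (by positivity) (by positivity), Real.sq_sqrt hπ0.le, mul_pow, mul_pow,
      Real.sq_sqrt (by norm_num), ← hα, hα2]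
    ring
  have hmain : √π * (Real.exp m * (m - 1)) / (2 * β ^ 3) =
      d / m ^ 2 * (1 - 1 / m) * Real.exp m := by
    have h3 : √3 ^ 2 = 3 := Real.sq_sqrt (by norm_num)
    have hπα : π = 12 * α ^ 2 := by rw [hα2]; ring
    have hd : d = 8 * √3 * α ^ 4 := by
      rw [d, hπα]; field_simp; linear_combination (-48 : ℝ) * h3
    rw [hd, hsqrtπ, hβ]
    field_simp
    ring
  rw [hmain] at h
  refine h.trans ?_
  have hsπ : √π ≤ 2 := Real.sqrt_le_iff.mpr ⟨by norm_num, by linarith⟩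
  have hsm : Real.exp (-m) * (m + 1) ≤ 1 := by
    rw [Real.exp_neg, ← div_eq_inv_mul, div_le_one (Real.exp_pos _)]
    exact Real.add_one_le_exp m
  have hE : Real.exp (3 * m ^ 2 / π * (π / (12 * m)) + 4 * (π / 12) * (π / (12 * m))) ≤
      2 * Real.exp (m / 4) := by
    have h1 : 3 * m ^ 2 / π * (π / (12 * m)) = m / 4 := by field_simp; norm_num
    have h2 : 4 * (π / 12) * (π / (12 * m)) ≤ 1 / 4 := by nlinarith
    have h3 : Real.exp (1 / 4) ≤ 2 := by
      have := Real.exp_bound_div_one_sub_of_interval (x := 1 / 4) (by norm_num) (by norm_num)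
      linarith
    rw [h1, Real.exp_add, mul_comm]
    gcongr
    exact (Real.exp_le_exp.mpr h2).trans h3
  have hE1 : 1 ≤ Real.exp (m / 4) := Real.one_le_exp (by positivity)
  have hnum : √π * (Real.exp (-m) * (m + 1)) / (2 * β) + 2 * ((1 + √π * α) *
      Real.exp (3 * m ^ 2 / π * (π / (12 * m)) + 4 * (π / 12) * (π / (12 * m)))) ≤
      10 * Real.exp (m / 4) := by
    have h1 : √π * (Real.exp (-m) * (m + 1)) / (2 * β) ≤ 1 := by
      rw [div_le_one (by positivity)]
      have : √π * (Real.exp (-m) * (m + 1)) ≤ 2 * 1 := by gcongr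
      linarith
    have h2 : √π * α ≤ 2 * 0.52 := by gcongr
    have h3 : (1 + √π * α) * Real.exp (3 * m ^ 2 / π * (π / (12 * m)) +
        4 * (π / 12) * (π / (12 * m))) ≤ (1 + 2 * 0.52) * (2 * Real.exp (m / 4)) := by gcongr
    linarith
  rw [← hβ2] at hnum ⊢
  rw [div_le_iff₀ (by positivity)]
  refine hnum.trans ?_
  have hβ3 : 100 ≤ β ^ 2 := by nlinarith
  nlinarith

end MainTerm

section Pointwise

open Complex

lemma sqrt_I_mul {z : ℂ} (hz : 0 < z.re) :
    Complex.sqrt (I * z) = Complex.sqrt I * Complex.sqrt z := by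
  have h0 : z ≠ 0 := by rintro rfl; simp at hz
  have harg := abs_lt.mp (abs_arg_lt_pi_div_two_iff.mpr (Or.inl hz))
  rw [sqrt_eq_exp (mul_ne_zero I_ne_zero h0), sqrt_eq_exp I_ne_zero, sqrt_eq_exp h0,
    ← Complex.exp_add, Complex.log_mul I_ne_zero h0]
  · ring_nf
  · rw [arg_I]
    constructor <;> linarith [harg.1, harg.2]

lemma norm_sqrt_sq (z : ℂ) : ‖Complex.sqrt z‖ ^ 2 = ‖z‖ := by
  rw [← norm_pow, sqrt_sq]

lemma inv_eta_I_mul {z : ℂ} (hz : 0 < z.re) :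
    (ModularForm.eta (I * z))⁻¹ = Complex.sqrt z * cexp ((π / 12 : ℝ) / z) *
      (euler (cexp (2 * π * I * (I / z))))⁻¹ := by
  have h0 : z ≠ 0 := by rintro rfl; simp at hz
  have hs : Complex.sqrt z ≠ 0 := fun h ↦ h0 (by rw [← sqrt_sq z, h]; simp)
  have hI : Complex.sqrt I ≠ 0 := fun h ↦ I_ne_zero (by rw [← sqrt_sq I, h]; simp)
  have h := ModularForm.eta_comp_eq_csqrt_I_inv (x := I * z) (by simpa using hz)
  simp only [Function.comp_apply, Pi.smul_apply, Pi.mul_apply, smul_eq_mul, sqrt_I_mul hz] at h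
  have h1 : -1 / (I * z) = I / z := by
    field_simp; rw [I_sq]
  rw [h1, eta_eq] at h
  have h2 : ModularForm.eta (I * z) = cexp (2 * π * I * (I / z) / 24) *
      euler (cexp (2 * π * I * (I / z))) / Complex.sqrt z := by
    rw [h]; field_simp
  rw [h2, inv_div, div_eq_mul_inv, mul_inv, ← Complex.exp_neg, ← mul_assoc]
  congr 4
  push_cast
  linear_combination (- (π : ℂ) / z / 12) * I_sq

lemma norm_sqrt_mul_exp_div {c : ℝ} {z : ℂ} :
    ‖Complex.sqrt z * cexp (c / z)‖ = ‖Complex.sqrt z‖ * Real.exp (c * (z.re / ‖z‖ ^ 2)) := by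
  rw [norm_mul, Complex.norm_exp]
  congr 2
  rw [div_re, normSq_eq_norm_sq]
  simp
  ring

/-- Near the cusp `0` the reciprocal eta function is close to the main term. -/
lemma norm_inv_eta_sub_le_one {z : ℂ} (hz : 0 < z.re) (hn : ‖z‖ ≤ 0.51)
    (h : 3 ≤ 4 * (z.re / ‖z‖ ^ 2) ^ 2) :
    ‖(ModularForm.eta (I * z))⁻¹ - Complex.sqrt z * cexp ((π / 12 : ℝ) / z)‖ ≤ 1 := by
  have h0 : z ≠ 0 := by rintro rfl; simp at hz
  have hnz : 0 < ‖z‖ := norm_pos_iff.mpr h0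
  set Y := z.re / ‖z‖ ^ 2 with hY
  have hY0 : 0 < Y := by positivity
  have him : (I / z).im = Y := by
    rw [div_im, normSq_eq_norm_sq]; simp [hY]
  have hq : ‖cexp (2 * π * I * (I / z))‖ = Real.exp (-(2 * π * Y)) := by rw [norm_nome, him]
  have hq2 := exp_neg_two_pi_mul_le hY0 h
  rw [inv_eta_I_mul hz]
  set q := cexp (2 * π * I * (I / z))
  have h1 := norm_inv_euler_sub_one_le (q := q) (by rw [hq]; linarith)
  have h2 : ‖(euler q)⁻¹ - 1‖ ≤ 1.02 * Real.exp (-(2 * π * Y)) := by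
    refine h1.trans ?_
    rw [hq, div_le_iff₀ (by linarith)]
    nlinarith [Real.exp_pos (-(2 * π * Y))]
  have h3 : ‖Complex.sqrt z‖ ≤ 0.8 := by
    have := norm_sqrt_sq z
    nlinarith [norm_nonneg (Complex.sqrt z)]
  have h4 : Real.exp (π / 12 * Y) * Real.exp (-(2 * π * Y)) ≤ 1 := by
    rw [← Real.exp_add, Real.exp_le_one_iff]
    nlinarith [Real.pi_pos, mul_pos Real.pi_pos hY0]
  calc _ = ‖Complex.sqrt z * cexp ((π / 12 : ℝ) / z) * ((euler q)⁻¹ - 1)‖ := by ring_nf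
    _ ≤ 0.8 * Real.exp (π / 12 * Y) * (1.02 * Real.exp (-(2 * π * Y))) := by
        rw [norm_mul, norm_sqrt_mul_exp_div]
        gcongr
    _ = 0.8 * 1.02 * (Real.exp (π / 12 * Y) * Real.exp (-(2 * π * Y))) := by ring
    _ ≤ 1 := by linarith

lemma norm_main_le_one {z : ℂ} (hn : ‖z‖ ≤ 0.51)
    (h : 4 * (z.re / ‖z‖ ^ 2) ^ 2 < 3) :
    ‖Complex.sqrt z * cexp ((π / 12 : ℝ) / z)‖ ≤ 1 := by
  rw [norm_sqrt_mul_exp_div]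
  set Y := z.re / ‖z‖ ^ 2 with hY
  have hY1 : Y ≤ 0.8661 := by nlinarith
  have h3 : ‖Complex.sqrt z‖ ≤ 0.7142 := by
    have := norm_sqrt_sq z
    nlinarith [norm_nonneg (Complex.sqrt z)]
  have h4 : Real.exp (π / 12 * Y) ≤ 1.4 := by
    have h5 : π / 12 * Y ≤ 1 / 4 := by nlinarith [Real.pi_lt_d4, Real.pi_pos]
    have h6 := Real.exp_bound_div_one_sub_of_interval (x := 1 / 4) (by norm_num) (by norm_num)
    refine (Real.exp_le_exp.mpr h5).trans (h6.trans (by norm_num))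
  calc ‖Complex.sqrt z‖ * Real.exp (π / 12 * Y) ≤ 0.7142 * 1.4 := by gcongr
    _ ≤ 1 := by norm_num

lemma exp_div_mono {Y Y₀ : ℝ} (hY : 0.866 ≤ Y) (hY₀ : 11 ≤ Y₀) (h : Y ≤ Y₀) :
    Real.exp (π * Y / 3) / Y ≤ Real.exp (π * Y₀ / 3) / Y₀ := by
  have hπ := Real.pi_gt_d2
  have hY0 : 0 < Y := by linarith
  rw [div_le_div_iff₀ hY0 (by linarith)]
  have h1 : π * Y₀ / 3 = π * Y / 3 + π / 3 * (Y₀ - Y) := by ring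
  rw [h1, Real.exp_add, mul_assoc]
  gcongr
  suffices Y₀ / Y ≤ Real.exp (π / 3 * (Y₀ - Y)) by rwa [div_le_iff₀ hY0] at this
  have ht : Y₀ - Y ≤ π / 3 * (Y₀ - Y) := by nlinarith
  refine le_trans ?_ (Real.exp_le_exp.mpr ht)
  rw [div_le_iff₀ hY0]
  by_cases hY1 : 1 ≤ Y
  · have := Real.add_one_le_exp (Y₀ - Y)
    nlinarith
  · have := Real.quadratic_le_exp_of_nonneg (x := Y₀ - Y) (by linarith)
    nlinarith

lemma coprime_form_cases {a b : ℤ} {θ y : ℝ} (hab : IsCoprime a b) (hθ : |θ| ≤ 1 / 2)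
    (hD : (a * θ + b) ^ 2 + a ^ 2 * y ^ 2 ≤ 1 / 80) (ha : a ^ 2 < 9) :
    θ ^ 2 + y ^ 2 ≤ (a * θ + b) ^ 2 + a ^ 2 * y ^ 2 ∨
      (a * θ + b) ^ 2 + a ^ 2 * y ^ 2 = 4 * ((θ - 1 / 2) ^ 2 + y ^ 2) ∨
      (a * θ + b) ^ 2 + a ^ 2 * y ^ 2 = 4 * ((θ + 1 / 2) ^ 2 + y ^ 2) := by
  obtain ⟨hθ1, hθ2⟩ := abs_le.mp hθ
  have hsq : (a * θ + b) ^ 2 < (1 / 2 : ℝ) ^ 2 := by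
    have : 0 ≤ (a : ℝ) ^ 2 * y ^ 2 := by positivity
    linarith
  obtain ⟨h1, h2⟩ := abs_lt.mp (abs_lt_of_sq_lt_sq hsq (by norm_num))
  have hone (c : ℤ) : θ ^ 2 ≤ (θ + c) ^ 2 := by
    rcases lt_trichotomy c 0 with hc | rfl | hc
    · have : (c : ℝ) ≤ -1 := by exact_mod_cast Int.le_sub_one_of_lt hc
      nlinarith
    · simp
    · have : (1 : ℝ) ≤ c := by exact_mod_cast hc
      nlinarith
  have htwo (hb0 : b ≠ 0) (h3 : (-2 : ℝ) < b) (h4 : (b : ℝ) < 2) : b = -1 ∨ b = 1 := by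
    have h3 : -2 < b := by exact_mod_cast h3
    have h4 : b < 2 := by exact_mod_cast h4
    omega
  have ha' : a = -2 ∨ a = -1 ∨ a = 0 ∨ a = 1 ∨ a = 2 := by
    have h1 : a < 3 := by nlinarith
    have h2 : -3 < a := by nlinarith
    omega
  rcases ha' with rfl | rfl | rfl | rfl | rfl
  · push_cast at h1 h2 ⊢
    have hb : b ≠ 0 := by
      rintro rfl
      rw [isCoprime_zero_right, Int.isUnit_iff] at hab
      omega
    rcases htwo hb (by linarith) (by linarith) with rfl | rfl
    · right; right; push_cast; ring
    · right; left; push_cast; ring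
  · left
    have := hone (-b)
    push_cast at this ⊢
    linarith
  · exfalso
    rw [isCoprime_zero_left, Int.isUnit_iff] at hab
    rcases hab with rfl | rfl <;> norm_num at hD
  · left
    have := hone b
    push_cast at this ⊢
    linarith
  · push_cast at h1 h2 ⊢
    have hb : b ≠ 0 := by
      rintro rfl
      rw [isCoprime_zero_right, Int.isUnit_iff] at hab
      omega
    rcases htwo hb (by linarith) (by linarith) with rfl | rfl
    · right; left; push_cast; ring
    · right; right; push_cast; ring

/-- Away from the cusp `0`, the reciprocal eta function is controlled by the cusps `± 1 / 2`. -/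
lemma norm_inv_eta_le {m y θ : ℝ} (hm : 28 ≤ m) (hy : 0 < y) (hmy : 12 * m * y = π)
    (hθ : |θ| ≤ 1 / 2) (h : 4 * (y / (θ ^ 2 + y ^ 2)) ^ 2 < 3) :
    ‖ModularForm.eta (θ + y * I)‖⁻¹ ≤ 199 / 198 * √(3 * y) * (Real.exp (m / 9) +
      Real.exp (m / 4 - m * (θ - 1 / 2) ^ 2 / (9 * y ^ 2)) +
      Real.exp (m / 4 - m * (θ + 1 / 2) ^ 2 / (9 * y ^ 2))) := by
  have hy1 : y ≤ 1 / 100 := by nlinarith [Real.pi_lt_d2]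
  let τ : UpperHalfPlane := ⟨θ + y * I, by simpa using hy⟩
  obtain ⟨a, b, hab, hY, hη⟩ := exists_coprime_norm_inv_eta_le τ
  have hτ : (τ : ℂ) = θ + y * I := rfl
  have him : τ.im = y := by change (θ + y * I : ℂ).im = y; simp
  rw [him, hτ] at hY hη
  have hD : normSq (a * (θ + y * I) + b) = (a * θ + b) ^ 2 + a ^ 2 * y ^ 2 := by
    rw [normSq_apply]; simp; ring
  rw [hD] at hY hη
  set D := (a * θ + b) ^ 2 + a ^ 2 * y ^ 2 with hDdef
  set N := ‖ModularForm.eta (θ + y * I)‖⁻¹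
  have hN : 0 ≤ N := by positivity
  have hD0 : 0 ≤ D := by positivity
  have hD1 : 0 < D := by
    rcases hD0.eq_or_lt with h | h
    · rw [← h] at hY; norm_num at hY
    · exact h
  have hYpos : 0 < y / D := by positivity
  have hYge : 0.866 ≤ y / D := by nlinarith
  have hDle : D ≤ 1 / 80 := by
    rw [le_div_iff₀ hD1] at hYge; linarith
  have hθ' := abs_le.mp hθ
  have hs : √(3 * y) ^ 4 = 9 * y ^ 2 := by
    rw [show √(3 * y) ^ 4 = (√(3 * y) ^ 2) ^ 2 by ring, Real.sq_sqrt (by positivity)]; ring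
  -- it suffices to bound the fourth power by one of the three terms
  have key (e : ℝ) (he : D * Real.exp (π * (y / D) / 3) ≤ 9 * y ^ 2 * Real.exp (4 * e)) :
      N ≤ 199 / 198 * √(3 * y) * Real.exp e := by
    rw [← pow_le_pow_iff_left₀ hN (by positivity) (n := 4) (by norm_num)]
    refine hη.trans ?_
    rw [mul_pow, mul_pow, hs, ← Real.exp_nat_mul, mul_assoc]
    push_cast
    gcongr
  have hfar (h9 : 9 * y ^ 2 ≤ D) : D * Real.exp (π * (y / D) / 3) ≤
      9 * y ^ 2 * Real.exp (4 * (m / 9)) := by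
    have h1 : y / D ≤ 1 / (9 * y) := by
      rw [div_le_div_iff₀ hD1 (by positivity)]; nlinarith
    have h2 : 11 ≤ 1 / (9 * y) := by
      rw [le_div_iff₀ (by positivity)]; linarith
    have h3 := exp_div_mono hYge h2 h1
    have h4 : π * (1 / (9 * y)) / 3 = 4 * (m / 9) := by
      rw [← hmy]; field_simp; ring
    rw [h4, div_div_eq_mul_div, div_div_eq_mul_div, div_one,
      div_le_iff₀ hy] at h3
    nlinarith
  have hnear (φ : ℝ) (hφ : D = 4 * (φ ^ 2 + y ^ 2)) (h9 : D < 9 * y ^ 2) :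
      D * Real.exp (π * (y / D) / 3) ≤
        9 * y ^ 2 * Real.exp (4 * (m / 4 - m * φ ^ 2 / (9 * y ^ 2))) := by
    refine mul_le_mul h9.le (Real.exp_le_exp.mpr ?_) (Real.exp_pos _).le (by positivity)
    have h1 : π * (y / D) / 3 = m - m * φ ^ 2 / (φ ^ 2 + y ^ 2) := by
      rw [hφ, ← hmy]; field_simp; ring
    have h2 : 4 * (m * φ ^ 2 / (9 * y ^ 2)) ≤ m * φ ^ 2 / (φ ^ 2 + y ^ 2) := by
      rw [← mul_div_assoc, div_le_div_iff₀ (by positivity) (by positivity)]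
      have : 0 ≤ m * φ ^ 2 := by positivity
      nlinarith
    rw [h1]; linarith
  have hE1 := Real.exp_pos (m / 9)
  have hE2 := Real.exp_pos (m / 4 - m * (θ - 1 / 2) ^ 2 / (9 * y ^ 2))
  have hE3 := Real.exp_pos (m / 4 - m * (θ + 1 / 2) ^ 2 / (9 * y ^ 2))
  have hs0 : 0 ≤ 199 / 198 * √(3 * y) := by positivity
  by_cases h9 : 9 * y ^ 2 ≤ D
  · refine (key _ (hfar h9)).trans (mul_le_mul_of_nonneg_left ?_ hs0)
    linarith
  push Not at h9
  have ha : a ^ 2 < 9 := by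
    have h1 : (a : ℝ) ^ 2 * y ^ 2 < 9 * y ^ 2 := by linarith [sq_nonneg (a * θ + b)]
    exact_mod_cast lt_of_mul_lt_mul_right h1 (by positivity)
  rcases coprime_form_cases hab hθ hDle ha with h1 | h1 | h1
  · exfalso
    have h2 : y / D ≤ y / (θ ^ 2 + y ^ 2) := by gcongr
    have h3 : (y / D) ^ 2 ≤ (y / (θ ^ 2 + y ^ 2)) ^ 2 := by gcongr
    linarith
  · refine (key _ (hnear _ h1 h9)).trans (mul_le_mul_of_nonneg_left ?_ hs0)
    linarith
  · refine (key _ (hnear _ h1 h9)).trans (mul_le_mul_of_nonneg_left ?_ hs0)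
    linarith

end Pointwise

section ErrorIntegral

open Complex MeasureTheory

lemma norm_inv_eta_sub_main_le {m y θ : ℝ} (hm : 28 ≤ m) (hy : 0 < y) (hmy : 12 * m * y = π)
    (hθ : |θ| ≤ 1 / 2) :
    ‖(ModularForm.eta (θ + y * I))⁻¹ -
        Complex.sqrt (y - θ * I) * cexp ((π / 12 : ℝ) / (y - θ * I))‖ ≤
      1 + 199 / 198 * √(3 * y) * (Real.exp (m / 9) +
        Real.exp (m / 4 - m * (θ - 1 / 2) ^ 2 / (9 * y ^ 2)) +
        Real.exp (m / 4 - m * (θ + 1 / 2) ^ 2 / (9 * y ^ 2))) := by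
  have hy1 : y ≤ 1 / 100 := by nlinarith [Real.pi_lt_d2]
  have hθ' := abs_le.mp hθ
  have hτ : (θ + y * I : ℂ) = I * (y - θ * I) := by linear_combination (θ : ℂ) * I_sq
  have hre : (y - θ * I : ℂ).re = y := by simp
  have hn2 : ‖(y - θ * I : ℂ)‖ ^ 2 = θ ^ 2 + y ^ 2 := by
    rw [← normSq_eq_norm_sq, normSq_apply]; simp; ring
  have hn : ‖(y - θ * I : ℂ)‖ ≤ 0.51 := by
    refine abs_le_of_sq_le_sq' ?_ (by norm_num) |>.2
    rw [hn2]; nlinarith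
  by_cases h : 3 ≤ 4 * (y / (θ ^ 2 + y ^ 2)) ^ 2
  · rw [hτ]
    refine (norm_inv_eta_sub_le_one (by rwa [hre]) hn (by rwa [hre, hn2])).trans ?_
    refine le_add_of_nonneg_right ?_
    positivity
  · push Not at h
    have h1 := norm_inv_eta_le hm hy hmy hθ h
    have h2 := norm_main_le_one hn (by rwa [hre, hn2])
    refine (norm_sub_le _ _).trans ?_
    rw [norm_inv, add_comm]
    exact add_le_add h2 h1

lemma integral_exp_neg_mul_sub_sq_le {c : ℝ} (hc : 0 < c) (x : ℝ) :
    ∫ θ in (-(1 / 2) : ℝ)..(1 / 2), Real.exp (-c * (θ - x) ^ 2) ≤ √(π / c) := by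
  have hint : Integrable fun θ : ℝ ↦ Real.exp (-c * (θ - x) ^ 2) :=
    (integrable_exp_neg_mul_sq hc).comp_sub_right x
  rw [intervalIntegral.integral_of_le (by norm_num), ← integral_gaussian c,
    ← integral_sub_right_eq_self (fun θ ↦ Real.exp (-c * θ ^ 2)) x]
  exact setIntegral_le_integral hint (Filter.Eventually.of_forall fun _ ↦ (Real.exp_pos _).le)

lemma norm_integral_sub_le {m y : ℝ} (hm : 28 ≤ m) (hy : 0 < y) (hmy : 12 * m * y = π)
    {f : ℝ → ℂ} (hf : ∀ θ, ‖f θ‖ = Real.exp (m / 4)) :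
    ‖∫ θ in (-(1 / 2) : ℝ)..(1 / 2), ((ModularForm.eta (θ + y * I))⁻¹ -
        Complex.sqrt (y - θ * I) * cexp ((π / 12 : ℝ) / (y - θ * I))) * f θ‖ ≤
      Real.exp (m / 4) * (1 + 0.18 * Real.exp (m / 9)) + 5 / 2 / m ^ 2 * Real.exp (m / 2) := by
  have hπ := Real.pi_pos
  have hm0 : 0 < m := by linarith
  set c := m / (9 * y ^ 2) with hc
  have hc0 : 0 < c := by positivity
  set S := 199 / 198 * √(3 * y) with hS
  have hS0 : 0 ≤ S := by positivity
  have hs3 : √(3 * y) ≤ 0.17 := by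
    refine Real.sqrt_le_iff.mpr ⟨by norm_num, ?_⟩
    nlinarith [Real.pi_lt_d4]
  have hgauss : S * (2 * √(π / c)) ≤ 5 / 2 / m ^ 2 := by
    have h1 : √(3 * y) * (2 * √(π / c)) = π ^ 2 / (4 * m ^ 2) := by
      rw [← sq_eq_sq₀ (by positivity) (by positivity), mul_pow, mul_pow,
        Real.sq_sqrt (by positivity), Real.sq_sqrt (by positivity), hc, ← hmy]
      field_simp
      ring
    rw [hS, mul_assoc, h1, div_div, mul_div, div_le_div_iff₀ (by positivity) (by positivity)]
    have h2 : π ^ 2 ≤ 9.8697 := by nlinarith [Real.pi_lt_d4]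
    have h3 : 0 < m ^ 2 := by positivity
    nlinarith
  have hcont (x : ℝ) : Continuous fun θ : ℝ ↦ Real.exp (-c * (θ - x) ^ 2) := by fun_prop
  calc _ ≤ ∫ θ in (-(1 / 2) : ℝ)..(1 / 2), (Real.exp (m / 4) * (1 + S * Real.exp (m / 9)) +
        Real.exp (m / 4) * S * Real.exp (m / 4) * (Real.exp (-c * (θ - 1 / 2) ^ 2) +
          Real.exp (-c * (θ - -(1 / 2)) ^ 2))) := by
        refine intervalIntegral.norm_integral_le_of_norm_le (by norm_num)
          (ae_of_all _ fun θ hθ ↦ ?_) (Continuous.intervalIntegrable (by fun_prop) _ _)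
        have h1 := norm_inv_eta_sub_main_le hm hy hmy (θ := θ)
          (abs_le.mpr ⟨hθ.1.le, hθ.2⟩)
        have h2 (x : ℝ) : Real.exp (m / 4 - m * x ^ 2 / (9 * y ^ 2)) =
            Real.exp (m / 4) * Real.exp (-c * x ^ 2) := by
          rw [← Real.exp_add, hc]; congr 1; ring
        rw [norm_mul, hf, sub_neg_eq_add]
        rw [h2, h2] at h1
        calc _ ≤ _ := mul_le_mul_of_nonneg_right h1 (Real.exp_pos _).le
          _ = _ := by ring
    _ = Real.exp (m / 4) * (1 + S * Real.exp (m / 9)) +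
        Real.exp (m / 4) * S * Real.exp (m / 4) *
          ((∫ θ in (-(1 / 2) : ℝ)..(1 / 2), Real.exp (-c * (θ - 1 / 2) ^ 2)) +
          ∫ θ in (-(1 / 2) : ℝ)..(1 / 2), Real.exp (-c * (θ - -(1 / 2)) ^ 2)) := by
        rw [intervalIntegral.integral_add (Continuous.intervalIntegrable (by fun_prop) _ _)
          (Continuous.intervalIntegrable (by fun_prop) _ _), intervalIntegral.integral_const,
          intervalIntegral.integral_const_mul, intervalIntegral.integral_add
            ((hcont _).intervalIntegrable _ _) ((hcont _).intervalIntegrable _ _)]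
        norm_num
    _ ≤ Real.exp (m / 4) * (1 + 0.18 * Real.exp (m / 9)) +
        Real.exp (m / 4) * S * Real.exp (m / 4) * (√(π / c) + √(π / c)) := by
        gcongr
        · rw [hS]; linarith
        · exact integral_exp_neg_mul_sub_sq_le hc0 _
        · exact integral_exp_neg_mul_sub_sq_le hc0 _
    _ = Real.exp (m / 4) * (1 + 0.18 * Real.exp (m / 9)) +
        S * (2 * √(π / c)) * (Real.exp (m / 4) * Real.exp (m / 4)) := by ring
    _ ≤ _ := by
        rw [← Real.exp_add, show m / 4 + m / 4 = m / 2 by ring]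
        gcongr

lemma final_inequality {m : ℝ} (hm : 28 ≤ m) :
    Real.exp (m / 4) * (1.1 + 0.18 * Real.exp (m / 9)) + 5 / 2 / m ^ 2 * Real.exp (m / 2) <
      9 / m ^ 2 * Real.exp (m / 2) := by
  have hm0 : 0 < m := by linarith
  set s := (m - 28) / 36 with hs
  have hs0 : 0 ≤ s := by rw [hs]; linarith
  set x := Real.exp s with hx
  have hx1 : 1 ≤ x := Real.one_le_exp hs0
  have hms : m = 28 + 36 * s := by rw [hs]; ring
  have hm2 : m ^ 2 ≤ 784 * x ^ 3 := by
    have h1 : 1 + 9 / 7 * s ≤ Real.exp (9 / 7 * s) := by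
      linarith [Real.add_one_le_exp (9 / 7 * s)]
    have h2 : m ≤ 28 * Real.exp (9 / 7 * s) := by linarith
    calc m ^ 2 ≤ (28 * Real.exp (9 / 7 * s)) ^ 2 := by gcongr
      _ = 784 * Real.exp (18 / 7 * s) := by
        rw [mul_pow, ← Real.exp_nat_mul]; norm_num; ring_nf
      _ ≤ 784 * x ^ 3 := by
        rw [hx, ← Real.exp_nat_mul]; gcongr; push_cast; linarith
  have h9 : Real.exp (m / 9) ≤ 24 * x ^ 4 := by
    have h1 : Real.exp (m / 9) = Real.exp 1 ^ 3 * Real.exp (1 / 9) * x ^ 4 := by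
      rw [hx, ← Real.exp_nat_mul, ← Real.exp_nat_mul, ← Real.exp_add, ← Real.exp_add, hms]
      congr 1; push_cast; ring
    rw [h1]
    have h2 := Real.exp_one_lt_d9
    have h3 := Real.exp_bound_div_one_sub_of_interval (x := 1 / 9) (by norm_num) (by norm_num)
    gcongr
    calc Real.exp 1 ^ 3 * Real.exp (1 / 9) ≤ 2.7182818286 ^ 3 * (1 / (1 - 1 / 9)) := by gcongr
      _ ≤ 24 := by norm_num
  have h4 : 1090 * x ^ 9 ≤ Real.exp (m / 4) := by
    have h1 : Real.exp (m / 4) = Real.exp 1 ^ 7 * x ^ 9 := by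
      rw [hx, ← Real.exp_nat_mul, ← Real.exp_nat_mul, ← Real.exp_add, hms]
      congr 1; push_cast; ring
    rw [h1]
    have h2 := Real.exp_one_gt_d9
    gcongr
    calc (1090 : ℝ) ≤ 2.7182818283 ^ 7 := by norm_num
      _ ≤ _ := by gcongr
  have hkey : m ^ 2 * (1.1 + 0.18 * Real.exp (m / 9)) < 6.5 * Real.exp (m / 4) := by
    have h37 : x ^ 3 ≤ x ^ 9 := pow_le_pow_right₀ hx1 (by norm_num)
    have h79 : x ^ 7 ≤ x ^ 9 := pow_le_pow_right₀ hx1 (by norm_num)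
    have h19 : 1 ≤ x ^ 9 := one_le_pow₀ hx1
    calc m ^ 2 * (1.1 + 0.18 * Real.exp (m / 9))
        ≤ 784 * x ^ 3 * (1.1 + 0.18 * (24 * x ^ 4)) := by gcongr
      _ = 862.4 * x ^ 3 + 3386.88 * x ^ 7 := by ring
      _ < 6.5 * (1090 * x ^ 9) := by linarith
      _ ≤ _ := by gcongr
  have h2 : Real.exp (m / 2) = Real.exp (m / 4) * Real.exp (m / 4) := by
    rw [← Real.exp_add]; ring_nf
  have hE := Real.exp_pos (m / 4)
  rw [h2]
  have h5 : 9 / m ^ 2 * (Real.exp (m / 4) * Real.exp (m / 4)) -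
      5 / 2 / m ^ 2 * (Real.exp (m / 4) * Real.exp (m / 4)) =
      Real.exp (m / 4) * (6.5 * Real.exp (m / 4) / m ^ 2) := by field_simp; ring
  have h6 : 1.1 + 0.18 * Real.exp (m / 9) < 6.5 * Real.exp (m / 4) / m ^ 2 := by
    rw [lt_div_iff₀ (by positivity), mul_comm]; exact hkey
  have h7 := mul_lt_mul_of_pos_left h6 hE
  linarith

lemma continuous_inv_eta_line {y : ℝ} (hy : 0 < y) :
    Continuous fun θ : ℝ ↦ (ModularForm.eta (θ + y * I))⁻¹ := by
  have hmem (θ : ℝ) : (θ + y * I : ℂ) ∈ UpperHalfPlane.upperHalfPlaneSet := by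
    simpa [UpperHalfPlane.upperHalfPlaneSet] using hy
  refine Continuous.inv₀ (continuous_iff_continuousAt.mpr fun θ ↦ ?_)
    fun θ ↦ ModularForm.eta_ne_zero (hmem θ)
  exact ContinuousAt.comp (f := fun θ : ℝ ↦ (θ + y * I : ℂ))
    (ModularForm.differentiableAt_eta_of_mem_upperHalfPlaneSet (hmem θ)).continuousAt (by fun_prop)

lemma abs_p_sub_T_lt_of_large {n : ℕ} (hn : 28 ≤ mu n) :
    |p n - T n| < 9 / mu n ^ 2 * Real.exp (mu n / 2) := by
  set m := mu n with hm
  have hm0 : 0 < m := by linarith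
  have hπ := Real.pi_pos
  have hm2 : m ^ 2 = π ^ 2 / 36 * (24 * n - 1) := by
    have h1 : (0 : ℝ) ≤ 24 * n - 1 := by
      by_contra! h
      rw [hm, mu, Real.sqrt_eq_zero_of_nonpos h.le] at hn
      norm_num at hn
    rw [hm, mu, mul_pow, Real.sq_sqrt h1]; ring
  set y := π / (12 * m) with hy
  have hy0 : 0 < y := by positivity
  have hmy : 12 * m * y = π := by rw [hy]; field_simp
  have hb : 3 * m ^ 2 / π = 2 * π * (n - 1 / 24) := by
    rw [hm2]; field_simp; ring
  set f : ℝ → ℂ := fun θ ↦ cexp ((3 * m ^ 2 / π : ℝ) * (y - θ * I)) with hf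
  have hfc : Continuous f := by fun_prop
  have hfn (θ : ℝ) : ‖f θ‖ = Real.exp (m / 4) := by
    rw [hf, Complex.norm_exp, re_ofReal_mul]
    have hre : (y - θ * I : ℂ).re = y := by simp
    rw [hre, ← hmy]
    field_simp
    ring_nf
  have hp := p_eq_integral n hy0
  have hfeq (θ : ℝ) : cexp (-(2 * π * I * (n - 1 / 24) * (θ + y * I))) = f θ := by
    simp only [hf, hb]; congr 1; push_cast
    linear_combination (-(2 * π * (n - 1 / 24) * y : ℂ)) * I_sq
  simp_rw [hfeq] at hp
  have hslit (θ : ℝ) : (y - θ * I : ℂ) ∈ slitPlane := Or.inl (by simpa using hy0)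
  have hsc : Continuous fun θ : ℝ ↦ Complex.sqrt (y - θ * I) :=
    continuous_iff_continuousAt.mpr fun θ ↦ ContinuousAt.comp (f := fun θ : ℝ ↦ (y - θ * I : ℂ))
      (hasDerivAt_sqrt (hslit θ)).continuousAt (by fun_prop)
  have h0 (θ : ℝ) : (y - θ * I : ℂ) ≠ 0 := slitPlane_ne_zero (hslit θ)
  have hmc : Continuous fun θ : ℝ ↦ Complex.sqrt (y - θ * I) *
      cexp ((π / 12 : ℝ) / (y - θ * I)) * f θ := by fun_prop (disch := assumption)
  have hec : Continuous fun θ : ℝ ↦ (ModularForm.eta (θ + y * I))⁻¹ * f θ :=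
    (continuous_inv_eta_line hy0).mul hfc
  have herr := norm_integral_sub_le hn hy0 hmy hfn
  simp_rw [sub_mul] at herr
  rw [intervalIntegral.integral_sub (hec.intervalIntegrable _ _) (hmc.intervalIntegrable _ _),
    ← hp] at herr
  have hmain := norm_main_integral_sub_main_term_le hn
  have hJ : (∫ θ in (-(1 / 2) : ℝ)..(1 / 2), Complex.sqrt ((π / (12 * m) : ℝ) - θ * I) *
        cexp ((π / 12 : ℝ) / ((π / (12 * m) : ℝ) - θ * I) +
          (3 * m ^ 2 / π : ℝ) * ((π / (12 * m) : ℝ) - θ * I))) =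
      ∫ θ in (-(1 / 2) : ℝ)..(1 / 2), Complex.sqrt (y - θ * I) *
        cexp ((π / 12 : ℝ) / (y - θ * I)) * f θ := by
    refine intervalIntegral.integral_congr fun θ _ ↦ ?_
    simp only [hf, Complex.exp_add, mul_assoc, ← hy]
  rw [hJ] at hmain
  have hT : T n = d / m ^ 2 * (1 - 1 / m) * Real.exp m := rfl
  rw [← hT] at hmain
  have htri := (norm_sub_le_norm_sub_add_norm_sub (p n : ℂ) _ (T n : ℂ)).trans
    (add_le_add herr hmain)
  rw [← ofReal_sub, norm_real, Real.norm_eq_abs] at htri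
  have := final_inequality hn
  linarith

end ErrorIntegral

section SmallValues

open PowerSeries Finset

/-- The numbers of partitions of `0, …, 119`. -/
def partitionTable : List ℤ :=
  [1, 1, 2, 3, 5, 7, 11, 15, 22, 30, 42, 56, 77, 101, 135, 176, 231, 297, 385, 490, 627, 792,
    1002, 1255, 1575, 1958, 2436, 3010, 3718, 4565, 5604, 6842, 8349, 10143, 12310, 14883, 17977,
    21637, 26015, 31185, 37338, 44583, 53174, 63261, 75175, 89134, 105558, 124754, 147273,
    173525, 204226, 239943, 281589, 329931, 386155, 451276, 526823, 614154, 715220, 831820,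
    966467, 1121505, 1300156, 1505499, 1741630, 2012558, 2323520, 2679689, 3087735, 3554345,
    4087968, 4697205, 5392783, 6185689, 7089500, 8118264, 9289091, 10619863, 12132164, 13848650,
    15796476, 18004327, 20506255, 23338469, 26543660, 30167357, 34262962, 38887673, 44108109,
    49995925, 56634173, 64112359, 72533807, 82010177, 92669720, 104651419, 118114304, 133230930,
    150198136, 169229875, 190569292, 214481126, 241265379, 271248950, 304801365, 342325709,
    384276336, 431149389, 483502844, 541946240, 607163746, 679903203, 761002156, 851376628,
    952050665, 1064144451, 1188908248, 1327710076, 1482074143, 1653668665]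

/-- The coefficients of `f * (1 - X ^ j)`, where `l` lists the first coefficients of `f`. -/
def mulOneSubXPow (j : ℕ) (l : List ℤ) : List ℤ :=
  List.zipWith (· - ·) l (List.replicate j 0 ++ l)

/-- The coefficients of `f * ∏ i < m, (1 - X ^ (i + 1))`, where `l` lists the first coefficients
of `f`. -/
def mulEulerProd : ℕ → List ℤ → List ℤ
  | 0, l => l
  | m + 1, l => mulOneSubXPow (m + 1) (mulEulerProd m l)

lemma mulEulerProd_partitionTable :
    mulEulerProd 119 partitionTable = 1 :: List.replicate 119 0 := by
  decide +kernel


/-- The polynomial whose coefficients are listed by `l`, as a power series. -/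
noncomputable def listSeries (l : List ℤ) : ℂ⟦X⟧ := PowerSeries.mk fun n ↦ (l.getD n 0 : ℂ)

lemma length_mulEulerProd (m : ℕ) (l : List ℤ) : (mulEulerProd m l).length = l.length := by
  induction m with
  | zero => rfl
  | succ m ih => simp [mulEulerProd, mulOneSubXPow, ih]

lemma coeff_listSeries_mulOneSubXPow (j : ℕ) (l : List ℤ) {n : ℕ} (hn : n < l.length) :
    coeff n (listSeries (mulOneSubXPow j l)) = coeff n (listSeries l * (1 - X ^ j)) := by
  rw [mul_sub, mul_one, map_sub, coeff_mul_X_pow']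
  have h : n < (List.replicate j (0 : ℤ) ++ l).length := by simp; omega
  simp only [listSeries, coeff_mk, mulOneSubXPow]
  rw [List.getD_eq_getElem _ _ (by simp; omega), List.getElem_zipWith,
    List.getD_eq_getElem _ _ hn, List.getElem_append]
  by_cases hj : j ≤ n
  · have h1 : ¬ n < j := by omega
    have h2 : n - j < l.length := by omega
    simp [hj, h1, h2]
  · have h1 : n < j := by omega
    simp [hj, h1]

lemma coeff_mul_congr_left {f g h : ℂ⟦X⟧} {N : ℕ} (hfg : ∀ n < N, coeff n f = coeff n g) :
    ∀ n < N, coeff n (f * h) = coeff n (g * h) := by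
  intro n hn
  rw [coeff_mul, coeff_mul]
  refine sum_congr rfl fun x hx ↦ ?_
  rw [hfg _ (by rw [HasAntidiagonal.mem_antidiagonal] at hx; omega)]

lemma coeff_listSeries_mulEulerProd (m : ℕ) (l : List ℤ) :
    ∀ n < l.length, coeff n (listSeries (mulEulerProd m l)) =
      coeff n (listSeries l * ∏ i ∈ range m, (1 - X ^ (i + 1))) := by
  induction m with
  | zero => simp [mulEulerProd]
  | succ m ih =>
    intro n hn
    rw [mulEulerProd, coeff_listSeries_mulOneSubXPow _ _ (by rwa [length_mulEulerProd]),
      prod_range_succ, ← mul_assoc]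
    exact coeff_mul_congr_left ih n hn

lemma length_partitionTable : partitionTable.length = 120 := by decide +kernel

lemma card_partition_eq_partitionTable {n : ℕ} (hn : n < 120) :
    (Fintype.card (Nat.Partition n) : ℤ) = partitionTable.getD n 0 := by
  have h1 : ∀ k < 120, coeff k (listSeries partitionTable * ∏ i ∈ range 119, (1 - X ^ (i + 1))) =
      coeff k (1 : ℂ⟦X⟧) := by
    intro k hk
    rw [← coeff_listSeries_mulEulerProd _ _ _ (by rwa [length_partitionTable]),
      mulEulerProd_partitionTable]
    rcases k with _ | k
    · simp [listSeries]
    · simp only [listSeries, coeff_mk, List.getD_cons_succ, coeff_one]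
      rw [List.getD_replicate _ (by omega)]
      simp
  have h2 := coeff_mul_congr_left (h := PowerSeries.mk fun n ↦ (boundedCount 119 n : ℂ)) h1 n hn
  rw [mul_assoc, mul_comm (∏ i ∈ range 119, _), mk_boundedCount_mul_prod, mul_one, one_mul] at h2
  simp only [listSeries, coeff_mk] at h2
  rw [← boundedCount_eq_card (show n ≤ 119 by omega)]
  exact_mod_cast h2.symm

end SmallValues

section Numerics

/-- A rational lower bound for `exp x`, accurate for moderate `x ≥ 0`. -/
def expLower (x : ℚ) : ℚ :=
  let y := x / 64
  (1 + y + y ^ 2 / 2 + y ^ 3 / 6 + y ^ 4 / 24 + y ^ 5 / 120 + y ^ 6 / 720 + y ^ 7 / 5040) ^ 64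

/-- A rational upper bound for `exp x`, accurate for moderate `x ≥ 0`. -/
def expUpper (x : ℚ) : ℚ :=
  let y := x / 64
  (1 + y + y ^ 2 / 2 + y ^ 3 / 6 + y ^ 4 / 24 + y ^ 5 / 120 + y ^ 6 / 720 + y ^ 7 / 5040 +
    y ^ 8 / 35840) ^ 64

lemma exp_eq_exp_div_pow (x : ℝ) : Real.exp x = Real.exp (x / 64) ^ 64 := by
  rw [← Real.exp_nat_mul]
  congr 1
  push_cast
  ring

lemma expLower_le_exp {x : ℚ} (hx : 0 ≤ x) : (expLower x : ℝ) ≤ Real.exp x := by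
  have hx' : (0 : ℝ) ≤ x := by exact_mod_cast hx
  have h := Real.sum_le_exp_of_nonneg (show 0 ≤ (x : ℝ) / 64 by positivity) 8
  rw [exp_eq_exp_div_pow, expLower]
  push_cast
  refine pow_le_pow_left₀ (by positivity) (le_trans (le_of_eq ?_) h) 64
  simp [Finset.sum_range_succ, Nat.factorial]

lemma exp_le_expUpper {x : ℚ} (hx : 0 ≤ x) (hx' : x ≤ 64) : Real.exp x ≤ (expUpper x : ℝ) := by
  have h0 : (0 : ℝ) ≤ x := by exact_mod_cast hx
  have h1 : (x : ℝ) ≤ 64 := by exact_mod_cast hx'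
  have h := Real.exp_bound' (show 0 ≤ (x : ℝ) / 64 by positivity) (by linarith)
    (show 0 < 8 by norm_num)
  rw [exp_eq_exp_div_pow, expUpper]
  push_cast
  refine pow_le_pow_left₀ (by positivity) (h.trans (le_of_eq ?_)) 64
  simp [Finset.sum_range_succ, Nat.factorial]
  ring

/-- An approximation of `10 ^ 10 * √N` by Newton's method. -/
def scaledSqrt (N : ℕ) : ℕ := (fun s ↦ (s + N * 10 ^ 20 / s) / 2)^[40] (10 ^ 13)

/-- A rational lower bound for `mu n`. -/
def muLower (n : ℕ) : ℚ :=
  3.14159265358979323846 / 6 * ((scaledSqrt (24 * n - 1) : ℚ) / 10 ^ 10 - 1 / 10 ^ 10)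

/-- A rational upper bound for `mu n`. -/
def muUpper (n : ℕ) : ℚ :=
  3.14159265358979323847 / 6 * ((scaledSqrt (24 * n - 1) : ℚ) / 10 ^ 10 + 1 / 10 ^ 10)

/-- A sufficient condition, in terms of rational numbers, for the error bound when `n` has `q`
partitions. -/
def errorCheck (n : ℕ) (q : ℤ) : Bool :=
  let s := scaledSqrt (24 * n - 1)
  let a := muLower n
  let b := muUpper n
  let E := expLower (a / 2)
  let F := expUpper (b / 2)
  1 ≤ s ∧ (s - 1) ^ 2 ≤ (24 * n - 1) * 10 ^ 20 ∧ (24 * n - 1) * 10 ^ 20 ≤ (s + 1) ^ 2 ∧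
  1 < a ∧ b ≤ 128 ∧
  9497031263 / 10 ^ 10 / a ^ 2 * (1 - 1 / b) * F ^ 2 < q + 5 + 9 / b ^ 2 * E ∧
  q < 9497031262 / 10 ^ 10 / b ^ 2 * (1 - 1 / a) * E ^ 2 + 5 + 9 / b ^ 2 * E

lemma errorCheck_partitionTable :
    ∀ i < 119, errorCheck (i + 1) (partitionTable.getD (i + 1) 0) = true := by
  decide +kernel

lemma d_mem_Icc : d ∈ Set.Icc (9497031262 / 10 ^ 10 : ℝ) (9497031263 / 10 ^ 10) := by
  have h1 : (1.73205080756 : ℝ) < √3 := Real.lt_sqrt_of_sq_lt (by norm_num)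
  have h2 : √3 < (1.73205080757 : ℝ) := (Real.sqrt_lt' (by norm_num)).2 (by norm_num)
  have hp1 := Real.pi_gt_d20
  have hp2 := Real.pi_lt_d20
  have hq1 : (3.14159265358979323846 : ℝ) ^ 2 < π ^ 2 := by gcongr
  have hq2 : π ^ 2 < (3.14159265358979323847 : ℝ) ^ 2 := by gcongr
  rw [d, Set.mem_Icc, le_div_iff₀ (by positivity), div_le_iff₀ (by positivity)]
  norm_num at *
  constructor <;> linarith

lemma abs_p_sub_T_lt_of_errorCheck {n : ℕ} {q : ℤ} (hn : 1 ≤ n) (hq : p n = q)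
    (h : errorCheck n q = true) :
    |p n - T n| < 5 + 9 / mu n ^ 2 * Real.exp (mu n / 2) := by
  simp only [errorCheck, decide_eq_true_eq] at h
  obtain ⟨hs, hs1, hs2, ha, hb, hup, hlow⟩ := h
  have hN : ((24 * n - 1 : ℕ) : ℝ) = 24 * n - 1 := by
    rw [Nat.cast_sub (by omega)]
    push_cast
    ring
  have hlo : (muLower n : ℝ) ≤ mu n := by
    have h1 : (scaledSqrt (24 * n - 1) : ℝ) / 10 ^ 10 - 1 / 10 ^ 10 ≤ √(24 * n - 1) := by
      refine Real.le_sqrt_of_sq_le ?_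
      have h2 : (((scaledSqrt (24 * n - 1) - 1) ^ 2 : ℕ) : ℝ) ≤
          ((24 * n - 1 : ℕ) * 10 ^ 20 : ℕ) := by exact_mod_cast hs1
      push_cast [Nat.cast_sub hs, hN] at h2
      linarith
    have h0 : (0 : ℝ) ≤ (scaledSqrt (24 * n - 1) : ℝ) / 10 ^ 10 - 1 / 10 ^ 10 := by
      have : (1 : ℝ) ≤ scaledSqrt (24 * n - 1) := by exact_mod_cast hs
      linarith
    rw [muLower, mu]
    push_cast
    have := Real.pi_gt_d20
    gcongr
  have hhi : mu n ≤ (muUpper n : ℝ) := by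
    have h1 : √(24 * n - 1) ≤ (scaledSqrt (24 * n - 1) : ℝ) / 10 ^ 10 + 1 / 10 ^ 10 := by
      refine Real.sqrt_le_iff.2 ⟨by positivity, ?_⟩
      have h2 : (((24 * n - 1 : ℕ) * 10 ^ 20 : ℕ) : ℝ) ≤
          ((scaledSqrt (24 * n - 1) + 1) ^ 2 : ℕ) := by exact_mod_cast hs2
      push_cast [hN] at h2
      linarith
    rw [muUpper, mu]
    push_cast
    have := Real.pi_lt_d20
    gcongr
  set a := muLower n
  set b := muUpper n
  have ha' : (1 : ℝ) < a := by exact_mod_cast ha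
  have hE : (expLower (a / 2) : ℝ) ≤ Real.exp (mu n / 2) := by
    refine (expLower_le_exp (by linarith)).trans (Real.exp_le_exp.2 ?_)
    push_cast
    linarith
  have hb0 : 0 ≤ b := by
    have : (0 : ℝ) ≤ b := by linarith
    exact_mod_cast this
  have hF : Real.exp (mu n / 2) ≤ (expUpper (b / 2) : ℝ) := by
    refine le_trans (Real.exp_le_exp.2 ?_) (exp_le_expUpper (by linarith) (by linarith))
    push_cast
    linarith
  have hE0 : (0 : ℝ) ≤ expLower (a / 2) := by
    have : 0 ≤ a / 2 := by linarith
    have : 0 ≤ expLower (a / 2) := by unfold expLower; positivity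
    exact_mod_cast this
  have hup' : (9497031263 / 10 ^ 10 : ℝ) / a ^ 2 * (1 - 1 / b) * expUpper (b / 2) ^ 2 <
      q + 5 + 9 / b ^ 2 * expLower (a / 2) := by
    have := (Rat.cast_lt (K := ℝ)).2 hup
    push_cast at this
    exact this
  have hlow' : (q : ℝ) < 9497031262 / 10 ^ 10 / b ^ 2 * (1 - 1 / a) * expLower (a / 2) ^ 2 + 5 +
      9 / b ^ 2 * expLower (a / 2) := by
    have := (Rat.cast_lt (K := ℝ)).2 hlow
    push_cast at this
    exact this
  obtain ⟨hd1, hd2⟩ := d_mem_Icc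
  have hmu : 1 < mu n := ha'.trans_le hlo
  have hexp : Real.exp (mu n) = Real.exp (mu n / 2) ^ 2 := by
    rw [← Real.exp_nat_mul]
    congr 1
    push_cast
    ring
  have hmu1 : 0 ≤ 1 - 1 / mu n := by
    rw [sub_nonneg, div_le_one (by linarith)]
    exact hmu.le
  have ha1 : 0 ≤ 1 - 1 / (a : ℝ) := by
    rw [sub_nonneg, div_le_one (by linarith)]
    exact ha'.le
  have hb1 : 0 ≤ 1 - 1 / (b : ℝ) := by
    rw [sub_nonneg, div_le_one (by linarith)]
    linarith
  have hT1 : T n ≤ 9497031263 / 10 ^ 10 / a ^ 2 * (1 - 1 / b) * expUpper (b / 2) ^ 2 := by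
    rw [T, hexp]
    gcongr
  have hT2 : 9497031262 / 10 ^ 10 / b ^ 2 * (1 - 1 / a) * expLower (a / 2) ^ 2 ≤ T n := by
    rw [T, hexp]
    have : (0 : ℝ) ≤ d := by linarith
    gcongr
  have hR : 9 / (b : ℝ) ^ 2 * expLower (a / 2) ≤ 9 / mu n ^ 2 * Real.exp (mu n / 2) := by
    gcongr
  rw [hq, abs_sub_lt_iff]
  constructor <;> linarith

lemma twenty_eight_le_mu {n : ℕ} (hn : 120 ≤ n) : 28 ≤ mu n := by
  have h1 : (53.6 : ℝ) ≤ √(24 * n - 1) := by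
    refine Real.le_sqrt_of_sq_le ?_
    have : (120 : ℝ) ≤ n := by exact_mod_cast hn
    norm_num
    linarith
  have h2 := Real.pi_gt_d4
  calc (28 : ℝ) ≤ 3.1415 / 6 * 53.6 := by norm_num
    _ ≤ mu n := by
      rw [mu]
      gcongr

end Numerics

end PartitionBound

theorem p_sub_T_bound (n : ℕ) (hn : 1 ≤ n) :
    |p n - T (n : ℝ)| < 5 + 9 / mu (n : ℝ) ^ 2 * Real.exp (mu (n : ℝ) / 2) := by
  rcases Nat.lt_or_ge n 120 with h | h
  · obtain ⟨i, rfl⟩ := Nat.exists_eq_add_of_le' hn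
    refine PartitionBound.abs_p_sub_T_lt_of_errorCheck hn ?_
      (PartitionBound.errorCheck_partitionTable i (by omega))
    rw [← PartitionBound.card_partition_eq_partitionTable h, p, Int.cast_natCast]
  · have := PartitionBound.abs_p_sub_T_lt_of_large (PartitionBound.twenty_eight_le_mu h)
    linarith
end
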